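/- arXiv:1707.09550 — 2 statements merged into one kernel-verified Lean document; each statement's English description precedes it below -/
import Mathlib

section
/- (Key modified-energy estimate.) Let s ∈ ℕ with s ≥ 7, let j be an index with data (λ_j, a_j, b_j, c_j, d_j), p_j := a_j+b_j+c_j+d_j ≥ 3, and let M_{NR,j} be the multiplier defined with this s. Then there exists C > 0 (depending on s, p_j, λ_j and the constant C₀ in M_H) such that for all real-valued f, g ∈ C^∞(𝕋): | (−1)^s (N_j(f) − N_j(g), ∂_x^{2s}(f−g))_{L²} + P_{N_j}(f) ‖∂_x^{s+1}(f−g)‖_{L²}² + Γ^{(p_j)}((ik_{p_j})^{s+1}(ik_{p_j+1})^{s+1} M_{NR,j}; f,…,f,f−g,f−g) | ≤ C [ ‖f−g‖_{H^s}² (‖f‖_{H⁸}+‖g‖_{H⁸})^{p_j−1} + ‖f−g‖_{H⁷}² (‖f‖_{H^s}+‖g‖_{H^s})² (‖f‖_{H⁷}+‖g‖_{H⁷})^{p_j−3} + ‖f−g‖_{H⁷}² ‖g‖_{H^{s+3}}² (‖f‖_{H⁷}+‖g‖_{H⁷})^{p_j−3} ], where in the Γ-expression the first p_j−1 arguments are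 f and the last two are f−g. -/
/- Proposition multi_est: the key modified-energy multilinear estimate. -/

namespace FifthOrderStmt18

open scoped NNReal Classical

/-- Maximum of a nonnegative real-valued family over a finset (`0` if the finset is empty). -/
noncomputable def fmax {α : Type*} (s : Finset α) (f : α → ℝ) : ℝ :=
  ((s.sup fun i => Real.toNNReal (f i) : ℝ≥0) : ℝ)

/-- Fourier coefficient of a `2π`-periodic function `f : ℝ → ℂ`:
`f̂(k) = (1/2π) ∫_0^{2π} f(x) e^{-ikx} dx`. -/
noncomputable def fhat (f : ℝ → ℂ) (k : ℤ) : ℂ :=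
  (Complex.ofReal (2 * Real.pi))⁻¹ *
    ∫ x in (0:ℝ)..(2 * Real.pi), f x * Complex.exp (-Complex.I * (k : ℂ) * (x : ℂ))

/-- The multilinear form
`Γ^(p)(M; f₁,…,f_{p+1}) = Σ_{k ∈ Z₀^(p)} M(k) ∏_{l=1}^{p+1} f̂_l(k_l)`,
where `Z₀^(p) = {k ∈ ℤ^{p+1} : k₁ + ⋯ + k_{p+1} = 0}` (indices shifted to start at `0`). -/
noncomputable def Gam (p : ℕ) (M : (Fin (p + 1) → ℤ) → ℂ) (F : Fin (p + 1) → ℝ → ℂ) : ℂ :=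
  ∑' k : {k : Fin (p + 1) → ℤ // (∑ i, k i) = 0}, M k.1 * ∏ i, fhat (F i) (k.1 i)

/-- The argument tuple `(f, …, f, g, g)`: `p − 1` copies of `f` followed by two copies of `g`. -/
def tup (p : ℕ) (f g : ℝ → ℂ) : Fin (p + 1) → ℝ → ℂ :=
  fun i => if (i : ℕ) < p - 1 then f else g

/-- Sobolev norm `‖f‖_{H^s} = (Σ_k (1+k²)^s |f̂(k)|²)^{1/2}`. -/
noncomputable def hsNormC (s : ℕ) (f : ℝ → ℂ) : ℝ :=
  Real.sqrt (∑' k : ℤ, (1 + (k : ℝ) ^ 2) ^ s * ‖fhat f k‖ ^ 2)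

/-- `‖∂_x^m f‖_{L²}² = Σ_k k^{2m} |f̂(k)|²`. -/
noncomputable def dxNormSq (m : ℕ) (f : ℝ → ℂ) : ℝ :=
  ∑' k : ℤ, (k : ℝ) ^ (2 * m) * ‖fhat f k‖ ^ 2

/-- Complexification of a real-valued function. -/
def cF (f : ℝ → ℝ) : ℝ → ℂ := fun x => (f x : ℂ)

/-- `k_{(1,p-1)} = k₁ + ⋯ + k_{p-1}` (with indices shifted to start at `0`). -/
def ksum1 (p : ℕ) (k : Fin (p + 1) → ℤ) : ℤ :=
  ∑ i ∈ Finset.univ.filter (fun i : Fin (p + 1) => (i : ℕ) < p - 1), k i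

/-- The high-frequency cut-off `M_H^(p)` with constant `C₀`:
`1` when `min{|k_p|^{4/5}, |k_{p+1}|^{4/5}} ≥ C₀ max{|k₁|,…,|k_{p-1}|}`, else `0`. -/
noncomputable def MH (C₀ : ℝ) (p : ℕ) (k : Fin (p + 1) → ℤ) : ℂ :=
  if C₀ * fmax (Finset.univ.filter (fun i : Fin (p + 1) => (i : ℕ) < p - 1))
        (fun i => |(k i : ℝ)|)
      ≤ min (|(k (⟨p - 1, by omega⟩ : Fin (p + 1)) : ℝ)| ^ ((4:ℝ)/5))
            (|(k (Fin.last p) : ℝ)| ^ ((4:ℝ)/5))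
  then 1 else 0

/-- The non-zero-sum cut-off `M_NZ^(p)`: `1` when `k_{(1,p-1)} ≠ 0`, else `0`. -/
def MNZ (p : ℕ) (k : Fin (p + 1) → ℤ) : ℂ :=
  if ksum1 p k ≠ 0 then 1 else 0

/-- `D_{a,b,c}(k) = ∏_{l=1}^{a}(ik_l)³ ∏_{l=a+1}^{a+b}(ik_l)² ∏_{l=a+b+1}^{a+b+c}(ik_l)`. -/
noncomputable def Dabc (p a b c : ℕ) (k : Fin (p + 1) → ℤ) : ℂ :=
  (∏ i ∈ Finset.univ.filter (fun i : Fin (p + 1) => (i : ℕ) < a),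
      (Complex.I * (k i : ℂ)) ^ 3)
    * (∏ i ∈ Finset.univ.filter (fun i : Fin (p + 1) => a ≤ (i : ℕ) ∧ (i : ℕ) < a + b),
        (Complex.I * (k i : ℂ)) ^ 2)
    * (∏ i ∈ Finset.univ.filter
          (fun i : Fin (p + 1) => a + b ≤ (i : ℕ) ∧ (i : ℕ) < a + b + c),
        (Complex.I * (k i : ℂ)))

/-- The multiplier
`M_{NR} = M_H M_NZ λ ((s−3/2) a (ik_{(1,p-1)}) D_{a-1,b,c} + b D_{a,b-1,c})`
(the conventions for `a = 0` resp. `b = 0` are automatic since the corresponding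
terms carry the factors `a` resp. `b`). -/
noncomputable def MNR (C₀ : ℝ) (s p : ℕ) (lam : ℝ) (a b c : ℕ)
    (k : Fin (p + 1) → ℤ) : ℂ :=
  MH C₀ p k * MNZ p k * (lam : ℂ) *
    (((s : ℂ) - 3/2) * (a : ℂ) * (Complex.I * (ksum1 p k : ℂ)) * Dabc p (a - 1) b c k
      + (b : ℂ) * Dabc p a (b - 1) c k)

/-- `P_{N_j}(f) = (λ_j b_j/2π) ∫_𝕋 (∂_x³f)^{a_j}(∂_x²f)^{b_j-1}(∂_xf)^{c_j}f^{d_j} dx`. -/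
noncomputable def PNj (lam : ℝ) (a b c d : ℕ) (f : ℝ → ℝ) : ℝ :=
  (lam * (b : ℝ) / (2 * Real.pi)) *
    ∫ x in (0:ℝ)..(2 * Real.pi),
      (iteratedDeriv 3 f x) ^ a * (iteratedDeriv 2 f x) ^ (b - 1) *
        (deriv f x) ^ c * (f x) ^ d

/-- The monomial nonlinearity `N_j(f) = λ_j (∂_x³f)^{a_j}(∂_x²f)^{b_j}(∂_xf)^{c_j}f^{d_j}`. -/
noncomputable def NjF (lam : ℝ) (a b c d : ℕ) (f : ℝ → ℝ) (x : ℝ) : ℝ :=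
  lam * (iteratedDeriv 3 f x) ^ a * (iteratedDeriv 2 f x) ^ b *
    (deriv f x) ^ c * (f x) ^ d

/-!
Expand the pairing in Fourier series and write `w = f - g`. In `N(f) - N(g)`, single out the
factor carrying the highest frequency, in slot `j`, and split the difference of products into

* `w` in slot `j` and `f` in all the others, and
* `g` in slot `j` and a difference of products in the other slots.

In the second kind of term, the `2 s` derivatives falling on the other `w` are shared out so that
`g` receives at most `s + 3` and `w` receives `s`; the remaining factors have low frequency.

In the first kind both high frequencies `x`, `y` fall on copies of `w`, so the symbol may be
symmetrized in `x ↔ y`. As `x + y` is minus the sum of the low frequencies, the symmetrized symbol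
is `-(i x)^(s+1) (i y)^(s+1)` times a linear factor in `x + y`, up to an error bounded by a constant
times `(1 + |x + y|)^3 |x y|^s`. The leading part is present only when the factor in slot `j`
carries three or two derivatives. Its resonant part, `x + y = 0`, is the `P_N(f)` term, and its
non-resonant part is the `Γ` term. The cutoff `M_H` differs from the cutoff to the highest
frequency only where `|x y|` is controlled by the low frequencies, at no cost in derivatives of `w`.
-/

/-! ### Multilinear sums over integer frequencies -/

section PiProducts

variable {R ι : Type*} [NormedCommRing R]

theorem summable_norm_pi_prod {n : ℕ} {F : Fin n → ι → R} (hF : ∀ i, Summable fun k => ‖F i k‖) :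
    Summable fun k : Fin n → ι => ‖∏ i, F i (k i)‖ := by
  induction n with
  | zero => exact (hasSum_unique _).summable
  | succ n ih =>
    refine (Fin.insertNthEquiv (fun _ => ι) 0).summable_iff.mp ?_
    refine ((hF 0).mul_norm (ih fun i => hF i.succ)).congr fun z => ?_
    simp [Fin.prod_univ_succ]

theorem hasSum_pi_prod [CompleteSpace R] {n : ℕ} {F : Fin n → ι → R}
    (hF : ∀ i, Summable fun k => ‖F i k‖) :
    HasSum (fun k : Fin n → ι => ∏ i, F i (k i)) (∏ i, ∑' k, F i k) := by
  induction n with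
  | zero =>
    simp only [Finset.univ_eq_empty, Finset.prod_empty]
    exact hasSum_unique _
  | succ n ih =>
    have hnorm : Summable fun k : Fin n → ι => ‖∏ i : Fin n, F i.succ (k i)‖ :=
      summable_norm_pi_prod fun i => hF i.succ
    have hmul := summable_mul_of_summable_norm (hF 0) hnorm
    have hprod := (hF 0).of_norm.hasSum.mul (ih fun i => hF i.succ) hmul
    rw [Fin.prod_univ_succ]
    refine (Fin.insertNthEquiv (fun _ => ι) 0).hasSum_iff.mp ?_
    convert! hprod using 2 with z
    simp [Fin.prod_univ_succ]

end PiProducts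

theorem summable_mul_and_tsum_mul_le_sqrt {ι : Type*} {A B : ι → ℝ} (hA : ∀ i, 0 ≤ A i)
    (hB : ∀ i, 0 ≤ B i) (sA : Summable fun i => A i ^ 2) (sB : Summable fun i => B i ^ 2) :
    Summable (fun i => A i * B i) ∧
      ∑' i, A i * B i ≤ √(∑' i, A i ^ 2) * √(∑' i, B i ^ 2) := by
  simpa [Real.sqrt_eq_rpow] using Real.summable_and_inner_le_Lp_mul_Lq_tsum_of_nonneg
    Real.HolderConjugate.two_two hA hB (by simpa using sA) (by simpa using sB)

/-- The Japanese bracket, in the form `1 + |k|`. -/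
noncomputable def jap (k : ℤ) : ℝ := 1 + |(k : ℝ)|

theorem one_le_jap (k : ℤ) : 1 ≤ jap k := le_add_of_nonneg_right (abs_nonneg _)

theorem jap_pos (k : ℤ) : 0 < jap k := zero_lt_one.trans_le (one_le_jap k)

theorem abs_le_jap (k : ℤ) : |(k : ℝ)| ≤ jap k := le_add_of_nonneg_left zero_le_one

theorem jap_pow_mul_norm_nonneg (n : ℕ) (u : ℤ → ℂ) (k : ℤ) : 0 ≤ jap k ^ n * ‖u k‖ :=
  mul_nonneg (pow_nonneg (jap_pos k).le _) (norm_nonneg _)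

/-- Sequences of Fourier coefficients decaying faster than any power. -/
def RapidDecay (u : ℤ → ℂ) : Prop := ∀ n : ℕ, Summable fun k => jap k ^ n * ‖u k‖

/-- The `ℓ¹` norm with weight `jap ^ n`. -/
noncomputable def ellOne (n : ℕ) (u : ℤ → ℂ) : ℝ := ∑' k, jap k ^ n * ‖u k‖

/-- The `ℓ²` norm with weight `jap ^ n`; it is comparable to the `H^n` norm. -/
noncomputable def ellTwo (n : ℕ) (u : ℤ → ℂ) : ℝ := √(∑' k, (jap k ^ n * ‖u k‖) ^ 2)

theorem ellOne_nonneg (n : ℕ) (u : ℤ → ℂ) : 0 ≤ ellOne n u :=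
  tsum_nonneg (jap_pow_mul_norm_nonneg n u)

theorem ellTwo_nonneg (n : ℕ) (u : ℤ → ℂ) : 0 ≤ ellTwo n u := Real.sqrt_nonneg _

namespace RapidDecay

variable {u v : ℤ → ℂ}

theorem summable_sq (hu : RapidDecay u) (n : ℕ) : Summable fun k => (jap k ^ n * ‖u k‖) ^ 2 := by
  refine Summable.of_nonneg_of_le (fun k => sq_nonneg _) (fun k => ?_)
    ((hu n).mul_left (ellOne n u))
  rw [sq]
  exact mul_le_mul_of_nonneg_right
    ((hu n).le_tsum k fun j _ => jap_pow_mul_norm_nonneg n u j) (jap_pow_mul_norm_nonneg n u k)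

theorem sub (hu : RapidDecay u) (hv : RapidDecay v) : RapidDecay (u - v) := by
  refine fun n => ((hu n).add (hv n)).of_nonneg_of_le
    (jap_pow_mul_norm_nonneg n (u - v)) fun k => ?_
  rw [← mul_add]
  exact mul_le_mul_of_nonneg_left (norm_sub_le _ _) (pow_nonneg (jap_pos k).le _)

end RapidDecay

/-- The frequency `y` determined by `x` and the low frequencies `k` through `x + y + ∑ k = 0`. -/
def lastFreq {q : ℕ} (z : ℤ × (Fin q → ℤ)) : ℤ := -(z.1 + ∑ i, z.2 i)

/-- The involution `(x, k) ↦ (y, k)` of the tuples summing to zero. -/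
def swapFreq (q : ℕ) : ℤ × (Fin q → ℤ) ≃ ℤ × (Fin q → ℤ) where
  toFun z := (lastFreq z, z.2)
  invFun z := (lastFreq z, z.2)
  left_inv z := by ext <;> simp [lastFreq]
  right_inv z := by ext <;> simp [lastFreq]

theorem lastFreq_swapFreq {q : ℕ} (z : ℤ × (Fin q → ℤ)) : lastFreq (swapFreq q z) = z.1 := by
  simp [lastFreq, swapFreq]

section MultilinearBound

variable {q : ℕ}

theorem hasSum_mul_pi_prod {D : ℤ → ℝ} {F : Fin q → ℤ → ℝ} (hD : ∀ k, 0 ≤ D k)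
    (hF : ∀ i k, 0 ≤ F i k) (sD : Summable D) (sF : ∀ i, Summable (F i)) :
    HasSum (fun z : ℤ × (Fin q → ℤ) => D z.1 * ∏ i, F i (z.2 i))
      ((∑' k, D k) * ∏ i, ∑' k, F i k) := by
  have hprod : HasSum (fun k : Fin q → ℤ => ∏ i, F i (k i)) (∏ i, ∑' k, F i k) :=
    hasSum_pi_prod fun i => (sF i).norm
  have hmul := Summable.mul_of_nonneg (g := fun k : Fin q → ℤ => ∏ i, F i (k i)) sD
    hprod.summable hD fun k => Finset.prod_nonneg fun i _ => hF i (k i)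
  convert! sD.hasSum.mul hprod hmul using 2

theorem summable_and_tsum_multilinear_le {A B : ℤ → ℝ} {F : Fin q → ℤ → ℝ} (hA : ∀ k, 0 ≤ A k)
    (hB : ∀ k, 0 ≤ B k) (hF : ∀ i k, 0 ≤ F i k) (sA : Summable fun k => A k ^ 2)
    (sB : Summable fun k => B k ^ 2) (sF : ∀ i, Summable (F i)) :
    Summable (fun z : ℤ × (Fin q → ℤ) => A z.1 * B (lastFreq z) * ∏ i, F i (z.2 i)) ∧
      ∑' z : ℤ × (Fin q → ℤ), A z.1 * B (lastFreq z) * ∏ i, F i (z.2 i) ≤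
        √(∑' k, A k ^ 2) * √(∑' k, B k ^ 2) * ∏ i, ∑' k, F i k := by
  have hprod : ∀ k : Fin q → ℤ, 0 ≤ ∏ i, F i (k i) :=
    fun k => Finset.prod_nonneg fun i _ => hF i (k i)
  have hsq : ∀ D : ℤ → ℝ, (Summable fun k => D k ^ 2) →
      HasSum (fun z : ℤ × (Fin q → ℤ) => (D z.1 * √(∏ i, F i (z.2 i))) ^ 2)
        ((∑' k, D k ^ 2) * ∏ i, ∑' k, F i k) := fun D sD => by
    simpa only [mul_pow, Real.sq_sqrt (hprod _)] using
      hasSum_mul_pi_prod (fun k => sq_nonneg (D k)) hF sD sF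
  have hsqA := hsq A sA
  have hsqB : HasSum (fun z : ℤ × (Fin q → ℤ) => (B (lastFreq z) * √(∏ i, F i (z.2 i))) ^ 2)
      ((∑' k, B k ^ 2) * ∏ i, ∑' k, F i k) := (swapFreq q).hasSum_iff.mpr (hsq B sB)
  -- Cauchy–Schwarz, with a square root of the low factors attached to each high factor
  have hcs := summable_mul_and_tsum_mul_le_sqrt
    (fun z : ℤ × (Fin q → ℤ) => mul_nonneg (hA z.1) (Real.sqrt_nonneg (∏ i, F i (z.2 i))))
    (fun z => mul_nonneg (hB (lastFreq z)) (Real.sqrt_nonneg (∏ i, F i (z.2 i))))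
    hsqA.summable hsqB.summable
  simp only [mul_mul_mul_comm, Real.mul_self_sqrt (hprod _)] at hcs
  refine ⟨hcs.1, hcs.2.trans_eq ?_⟩
  rw [hsqA.tsum_eq, hsqB.tsum_eq, Real.sqrt_mul (tsum_nonneg fun k => sq_nonneg _),
    Real.sqrt_mul (tsum_nonneg fun k => sq_nonneg _), mul_mul_mul_comm,
    Real.mul_self_sqrt (Finset.prod_nonneg fun i _ => tsum_nonneg (hF i))]

/-- The product of Fourier coefficients at `(x, k)`: `w₁` at `x`, `w₂` at `y` and the `i`-th low
factor `u i` at `k i`. -/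
noncomputable def coeffProd (u : Fin q → ℤ → ℂ) (w₁ w₂ : ℤ → ℂ) (z : ℤ × (Fin q → ℤ)) : ℂ :=
  w₁ z.1 * w₂ (lastFreq z) * ∏ i, u i (z.2 i)

/-- The weight of a symbol of order `n₁` in `x`, `n₂` in `y` and `n₃` in each low frequency. -/
noncomputable def symbolWeight (n₁ n₂ n₃ : ℕ) (z : ℤ × (Fin q → ℤ)) : ℝ :=
  jap z.1 ^ n₁ * jap (lastFreq z) ^ n₂ * ∏ i, jap (z.2 i) ^ n₃

theorem symbolWeight_pos (n₁ n₂ n₃ : ℕ) (z : ℤ × (Fin q → ℤ)) : 0 < symbolWeight n₁ n₂ n₃ z :=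
  mul_pos (mul_pos (pow_pos (jap_pos _) _) (pow_pos (jap_pos _) _))
    (Finset.prod_pos fun _ _ => pow_pos (jap_pos _) _)

variable {u : Fin q → ℤ → ℂ} {w₁ w₂ : ℤ → ℂ} {M : ℤ × (Fin q → ℤ) → ℂ} {C : ℝ} {n₁ n₂ n₃ : ℕ}

theorem summable_and_norm_tsum_symbol_le (hu : ∀ i, RapidDecay (u i)) (h₁ : RapidDecay w₁)
    (h₂ : RapidDecay w₂) (hM : ∀ z, ‖M z‖ ≤ C * symbolWeight n₁ n₂ n₃ z) :
    Summable (fun z => M z * coeffProd u w₁ w₂ z) ∧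
      ‖∑' z, M z * coeffProd u w₁ w₂ z‖ ≤
        C * (ellTwo n₁ w₁ * ellTwo n₂ w₂ * ∏ i, ellOne n₃ (u i)) := by
  obtain ⟨hsum, hbound⟩ := summable_and_tsum_multilinear_le (jap_pow_mul_norm_nonneg n₁ w₁)
    (jap_pow_mul_norm_nonneg n₂ w₂) (fun i => jap_pow_mul_norm_nonneg n₃ (u i))
    (h₁.summable_sq n₁) (h₂.summable_sq n₂) fun i => hu i n₃
  have hC : 0 ≤ C :=
    nonneg_of_mul_nonneg_left ((norm_nonneg _).trans (hM 0)) (symbolWeight_pos _ _ _ _)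
  have hle : ∀ z, ‖M z * coeffProd u w₁ w₂ z‖ ≤ C * (jap z.1 ^ n₁ * ‖w₁ z.1‖ *
      (jap (lastFreq z) ^ n₂ * ‖w₂ (lastFreq z)‖) * ∏ i, jap (z.2 i) ^ n₃ * ‖u i (z.2 i)‖) := by
    intro z
    calc ‖M z * coeffProd u w₁ w₂ z‖
        = ‖M z‖ * (‖w₁ z.1‖ * ‖w₂ (lastFreq z)‖ * ∏ i, ‖u i (z.2 i)‖) := by
          rw [norm_mul, coeffProd, norm_mul, norm_mul, norm_prod]
      _ ≤ C * symbolWeight n₁ n₂ n₃ z * (‖w₁ z.1‖ * ‖w₂ (lastFreq z)‖ * ∏ i, ‖u i (z.2 i)‖) := by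
          gcongr
          exact hM z
      _ = _ := by rw [symbolWeight, Finset.prod_mul_distrib]; ring
  refine ⟨(hsum.mul_left C).of_norm_bounded hle,
    (tsum_of_norm_bounded (hsum.mul_left C).hasSum hle).trans ?_⟩
  rw [tsum_mul_left]
  exact mul_le_mul_of_nonneg_left hbound hC

end MultilinearBound

/-! ### The symmetrized symbol -/

theorem norm_le_of_two_step_recurrence {V : Type*} [SeminormedAddCommGroup V] [NormedSpace ℝ V]
    {A : ℕ → V} {e P E : ℝ} (he : e ^ 2 ≤ |P|) (h0 : ‖A 0‖ ≤ E) (h1 : ‖A 1‖ ≤ 2 * E * |P|)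
    (hrec : ∀ r : ℕ, ‖A (r + 2) - ((e ^ 2 + 2 * P) • A (r + 1) - P ^ 2 • A r)‖ ≤
      (r + 2) * E * |P| ^ (r + 2)) (r : ℕ) :
    ‖A r‖ ≤ 2 * 5 ^ r * E * |P| ^ r := by
  have hE : 0 ≤ E := (norm_nonneg _).trans h0
  induction r using Nat.twoStepInduction with
  | zero => simpa using h0.trans (le_mul_of_one_le_left hE one_le_two)
  | one =>
    rw [pow_one, pow_one]
    exact h1.trans (by gcongr; norm_num)
  | more r ih0 ih1 =>
    have hcoeff : ‖e ^ 2 + 2 * P‖ ≤ 3 * |P| :=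
      (norm_add_le _ _).trans (by
        rw [Real.norm_of_nonneg (sq_nonneg e), norm_mul, Real.norm_ofNat, Real.norm_eq_abs]
        linarith)
    have hr : (r : ℝ) + 2 ≤ 2 * 5 ^ r := by
      have := one_add_mul_le_pow (show (-2 : ℝ) ≤ 4 by norm_num) r
      norm_num at this
      linarith [(Nat.cast_nonneg r : (0 : ℝ) ≤ r)]
    calc ‖A (r + 2)‖
        ≤ ‖A (r + 2) - ((e ^ 2 + 2 * P) • A (r + 1) - P ^ 2 • A r)‖ +
            ‖(e ^ 2 + 2 * P) • A (r + 1) - P ^ 2 • A r‖ := norm_le_norm_sub_add _ _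
      _ ≤ (r + 2) * E * |P| ^ (r + 2) + (3 * |P| * ‖A (r + 1)‖ + |P| ^ 2 * ‖A r‖) := by
          gcongr
          · exact hrec r
          · refine (norm_sub_le _ _).trans ?_
            rw [norm_smul, norm_smul, norm_pow, Real.norm_eq_abs P]
            gcongr
      _ ≤ 2 * 5 ^ r * E * |P| ^ (r + 2) + (3 * |P| * (2 * 5 ^ (r + 1) * E * |P| ^ (r + 1)) +
            |P| ^ 2 * (2 * 5 ^ r * E * |P| ^ r)) := by gcongr
      _ = 34 * (5 ^ r * E * |P| ^ (r + 2)) := by ring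
      _ ≤ 50 * (5 ^ r * E * |P| ^ (r + 2)) := by gcongr; norm_num
      _ = 2 * 5 ^ (r + 2) * E * |P| ^ (r + 2) := by ring

/-- The leading part of the symmetrized symbol `½((ix)^m y^{2s} + (iy)^m x^{2s})`, as a factor of
`-(ix)^{s+1} (iy)^{s+1}`, in terms of the sum `σ = -(x + y)` of the low frequencies. -/
noncomputable def leadFactor (s m : ℕ) (σ : ℂ) : ℂ :=
  if m = 3 then ((s : ℂ) - 3 / 2) * (Complex.I * σ) else if m = 2 then 1 else 0

theorem norm_leadFactor_le (s m : ℕ) (σ : ℂ) : ‖leadFactor s m σ‖ ≤ (s + 2) * (1 + ‖σ‖) := by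
  have hs : ‖(s : ℂ) - 3 / 2‖ ≤ s + 2 :=
    (norm_sub_le _ _).trans (by rw [Complex.norm_natCast]; norm_num)
  have hpos := norm_nonneg σ
  unfold leadFactor
  split_ifs
  · rw [norm_mul, norm_mul, Complex.norm_I, one_mul]
    gcongr
    linarith
  · rw [norm_one]
    nlinarith [(Nat.cast_nonneg s : (0 : ℝ) ≤ s)]
  · rw [norm_zero]
    positivity

theorem I_mul_pow_mul_I_mul_pow (x y : ℂ) (n : ℕ) :
    (Complex.I * x) ^ n * (Complex.I * y) ^ n = (-(x * y)) ^ n := by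
  rw [← mul_pow]
  congr 1
  linear_combination x * y * Complex.I_sq

/-- The symmetrized symbol minus its leading part. -/
noncomputable def symRemainder (m : ℕ) (x y : ℝ) (s : ℕ) : ℂ :=
  1 / 2 * ((Complex.I * x) ^ m * (y : ℂ) ^ (2 * s) + (Complex.I * y) ^ m * (x : ℂ) ^ (2 * s)) +
    (-((x : ℂ) * y)) ^ (s + 1) * leadFactor s m (-((x : ℂ) + y))

/-- The defect of `symRemainder` in the recurrence satisfied by the power sums `y ^ (2 * s)`. -/
noncomputable def leadDefect (r m : ℕ) (e : ℝ) : ℂ :=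
  if m = 3 then Complex.I * ((r - 1 / 2) * e ^ 3 : ℝ) else if m = 2 then (-e ^ 2 : ℝ) else 0

theorem symRemainder_recurrence {m : ℕ} (hm : m ≤ 3) (x y : ℝ) (r : ℕ) :
    symRemainder m x y (r + 2) - (((x + y) ^ 2 + 2 * -(x * y)) • symRemainder m x y (r + 1) -
      (-(x * y)) ^ 2 • symRemainder m x y r) =
        ((-(x * y)) ^ (r + 2) : ℝ) * leadDefect r m (x + y) := by
  simp only [Complex.real_smul, symRemainder]
  interval_cases m <;> simp [leadFactor, leadDefect, mul_pow] <;> ring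

theorem norm_leadDefect_le (r m : ℕ) (e : ℝ) : ‖leadDefect r m e‖ ≤ (r + 2) * (1 + |e|) ^ 3 := by
  have habs := abs_nonneg e
  have hr : (0 : ℝ) ≤ r := Nat.cast_nonneg r
  unfold leadDefect
  split_ifs
  · rw [norm_mul, Complex.norm_I, one_mul, Complex.norm_real, norm_mul, norm_pow, Real.norm_eq_abs,
      Real.norm_eq_abs]
    gcongr
    · rw [abs_le]; constructor <;> linarith
    · linarith
  · rw [Complex.norm_real, norm_neg, norm_pow, Real.norm_eq_abs]
    calc |e| ^ 2 ≤ (1 + |e|) ^ 2 := by gcongr; linarith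
      _ ≤ (1 + |e|) ^ 3 := pow_le_pow_right₀ (by linarith) (by norm_num)
      _ ≤ _ := le_mul_of_one_le_left (by positivity) (by linarith only [hr])
  · rw [norm_zero]
    positivity

theorem symRemainder_zero {m : ℕ} (hm : m ≤ 3) (x y : ℝ) :
    symRemainder m x y 0 = (if m = 0 then 1 else 1 / 2) * (Complex.I * (x + y : ℝ)) ^ m := by
  unfold symRemainder
  interval_cases m <;> simp [leadFactor, mul_pow] <;> ring_nf

theorem symRemainder_one {m : ℕ} (hm : m ≤ 3) (x y : ℝ) :
    symRemainder m x y 1 =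
      if m = 0 then (((x + y) ^ 2 / 2 - x * y : ℝ) : ℂ)
      else if m = 1 then Complex.I * (x * y * (x + y) / 2 : ℝ) else 0 := by
  unfold symRemainder
  interval_cases m <;> simp [leadFactor, mul_pow] <;> ring

theorem norm_symRemainder_zero_le {m : ℕ} (hm : m ≤ 3) (x y : ℝ) :
    ‖symRemainder m x y 0‖ ≤ (1 + |x + y|) ^ 3 := by
  have habs := abs_nonneg (x + y)
  have hcoeff : ‖(if m = 0 then 1 else 1 / 2 : ℂ)‖ ≤ 1 := by split_ifs <;> norm_num
  rw [symRemainder_zero hm, norm_mul, norm_pow, norm_mul, Complex.norm_I, one_mul,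
    Complex.norm_real, Real.norm_eq_abs]
  calc _ ≤ |x + y| ^ m := mul_le_of_le_one_left (by positivity) hcoeff
    _ ≤ (1 + |x + y|) ^ m := by gcongr; linarith
    _ ≤ (1 + |x + y|) ^ 3 := pow_le_pow_right₀ (by linarith) hm

theorem norm_symRemainder_one_le {m : ℕ} (hm : m ≤ 3) {x y : ℝ} (hxy : (x + y) ^ 2 ≤ |x * y|) :
    ‖symRemainder m x y 1‖ ≤ 2 * (1 + |x + y|) ^ 3 * |x * y| := by
  have habs := abs_nonneg (x + y)
  have hE : 1 + |x + y| ≤ (1 + |x + y|) ^ 3 := le_self_pow₀ (by linarith) (by norm_num)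
  have hP := abs_nonneg (x * y)
  rw [symRemainder_one hm]
  split_ifs
  · rw [Complex.norm_real, Real.norm_eq_abs]
    calc |(x + y) ^ 2 / 2 - x * y| ≤ (x + y) ^ 2 / 2 + |x * y| := by
          refine (abs_sub _ _).trans_eq ?_
          rw [abs_of_nonneg (by positivity)]
      _ ≤ 2 * 1 * |x * y| := by linarith
      _ ≤ 2 * (1 + |x + y|) ^ 3 * |x * y| := by gcongr; linarith
  · rw [norm_mul, Complex.norm_I, one_mul, Complex.norm_real, Real.norm_eq_abs, abs_div, abs_mul,
      abs_two]
    calc |x * y| * |x + y| / 2 ≤ 2 * (1 + |x + y|) * |x * y| := by nlinarith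
      _ ≤ 2 * (1 + |x + y|) ^ 3 * |x * y| := by gcongr
  · rw [norm_zero]
    positivity

theorem norm_symRemainder_le {m : ℕ} (hm : m ≤ 3) {x y : ℝ} (hxy : (x + y) ^ 2 ≤ |x * y|) (s : ℕ) :
    ‖symRemainder m x y s‖ ≤ 2 * 5 ^ s * (1 + |x + y|) ^ 3 * |x * y| ^ s := by
  rw [← abs_neg (x * y)] at hxy ⊢
  refine norm_le_of_two_step_recurrence hxy (norm_symRemainder_zero_le hm x y)
    (by simpa only [abs_neg] using norm_symRemainder_one_le hm (by rwa [abs_neg] at hxy))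
    (fun r => ?_) s
  rw [symRemainder_recurrence hm, norm_mul, Complex.norm_real, norm_pow, Real.norm_eq_abs, mul_comm]
  gcongr
  exact norm_leadDefect_le r m (x + y)

/-! ### Cut-offs and the symmetrization error -/

theorem one_add_sum_le_prod_one_add {ι : Type*} (t : Finset ι) {f : ι → ℝ}
    (hf : ∀ i ∈ t, 0 ≤ f i) : 1 + ∑ i ∈ t, f i ≤ ∏ i ∈ t, (1 + f i) := by
  induction t using Finset.cons_induction with
  | empty => simp
  | cons a t ha ih =>
    rw [Finset.forall_mem_cons] at hf
    rw [Finset.sum_cons, Finset.prod_cons]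
    calc 1 + (f a + ∑ i ∈ t, f i) ≤ (1 + f a) * (1 + ∑ i ∈ t, f i) := by
          nlinarith [mul_nonneg hf.1 (Finset.sum_nonneg hf.2)]
      _ ≤ (1 + f a) * ∏ i ∈ t, (1 + f i) := by
          gcongr
          · linarith [hf.1]
          · exact ih hf.2

section LowFrequencies

variable {q : ℕ}

/-- The sum of the absolute values of the low frequencies. -/
noncomputable def lowSize (k : Fin q → ℤ) : ℝ := ∑ i, |(k i : ℝ)|

theorem lowSize_nonneg (k : Fin q → ℤ) : 0 ≤ lowSize k :=
  Finset.sum_nonneg fun _ _ => abs_nonneg _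

theorem abs_le_lowSize (k : Fin q → ℤ) (i : Fin q) : |(k i : ℝ)| ≤ lowSize k :=
  Finset.single_le_sum (f := fun i => |(k i : ℝ)|) (fun _ _ => abs_nonneg _) (Finset.mem_univ i)

theorem abs_sum_le_lowSize (k : Fin q → ℤ) : |((∑ i, k i : ℤ) : ℝ)| ≤ lowSize k := by
  rw [Int.cast_sum]
  exact Finset.abs_sum_le_sum_abs _ _

theorem one_add_lowSize_le_prod_jap (k : Fin q → ℤ) : 1 + lowSize k ≤ ∏ i, jap (k i) :=
  one_add_sum_le_prod_one_add _ fun _ _ => abs_nonneg _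

theorem fmax_le_lowSize (k : Fin q → ℤ) :
    fmax Finset.univ (fun i => |(k i : ℝ)|) ≤ lowSize k := by
  have hsup : (Finset.univ.sup fun i => Real.toNNReal |(k i : ℝ)|) ≤ Real.toNNReal (lowSize k) :=
    Finset.sup_le fun i _ => Real.toNNReal_le_toNNReal (abs_le_lowSize k i)
  rw [fmax, ← Real.coe_toNNReal _ (lowSize_nonneg k)]
  exact_mod_cast hsup

theorem fst_add_lastFreq (z : ℤ × (Fin q → ℤ)) :
    (z.1 : ℝ) + lastFreq z = -((∑ i, z.2 i : ℤ) : ℝ) := by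
  simp [lastFreq]

theorem abs_lastFreq_le (z : ℤ × (Fin q → ℤ)) :
    |(lastFreq z : ℝ)| ≤ |(z.1 : ℝ)| + lowSize z.2 := by
  rw [lastFreq, Int.cast_neg, abs_neg, Int.cast_add]
  exact (abs_add_le _ _).trans (add_le_add_right (abs_sum_le_lowSize _) _)

theorem abs_fst_le (z : ℤ × (Fin q → ℤ)) :
    |(z.1 : ℝ)| ≤ |(lastFreq z : ℝ)| + lowSize z.2 := by
  have h := abs_lastFreq_le (swapFreq q z)
  rwa [lastFreq_swapFreq] at h

theorem norm_I_mul_intCast (k : ℤ) : ‖Complex.I * (k : ℂ)‖ = |(k : ℝ)| := by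
  rw [norm_mul, Complex.norm_I, one_mul, Complex.norm_intCast]

/-- The region where both high frequencies dominate the low ones. -/
def HighRegion (z : ℤ × (Fin q → ℤ)) : Prop :=
  lowSize z.2 ≤ |(z.1 : ℝ)| ∧ lowSize z.2 ≤ |(lastFreq z : ℝ)|

theorem highRegion_swapFreq (z : ℤ × (Fin q → ℤ)) : HighRegion (swapFreq q z) ↔ HighRegion z := by
  simp only [HighRegion, lastFreq_swapFreq]
  exact and_comm

/-- The indicator of `HighRegion`. -/
noncomputable def highCutoff (z : ℤ × (Fin q → ℤ)) : ℂ := if HighRegion z then 1 else 0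

theorem highCutoff_swapFreq (z : ℤ × (Fin q → ℤ)) : highCutoff (swapFreq q z) = highCutoff z := by
  simp only [highCutoff, highRegion_swapFreq]

/-- The index of a largest frequency; ties are broken arbitrarily but once and for all. -/
noncomputable def topIndex (k : Fin (q + 1) → ℤ) : Fin (q + 1) :=
  (Finite.exists_max fun i => |(k i : ℝ)|).choose

theorem abs_le_abs_topIndex (k : Fin (q + 1) → ℤ) (i : Fin (q + 1)) :
    |(k i : ℝ)| ≤ |(k (topIndex k) : ℝ)| :=
  (Finite.exists_max fun i => |(k i : ℝ)|).choose_spec i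

/-- The indicator of the tuples whose largest frequency is `x`, inserted at the slot `j`. -/
noncomputable def topCutoff (j : Fin (q + 1)) (z : ℤ × (Fin q → ℤ)) : ℂ :=
  if topIndex (j.insertNth z.1 z.2 : Fin (q + 1) → ℤ) = j then 1 else 0

theorem abs_le_abs_fst_of_topIndex_eq {j : Fin (q + 1)} {z : ℤ × (Fin q → ℤ)}
    (h : topIndex (j.insertNth z.1 z.2 : Fin (q + 1) → ℤ) = j) (i : Fin q) :
    |(z.2 i : ℝ)| ≤ |(z.1 : ℝ)| := by
  have hmax := abs_le_abs_topIndex (j.insertNth z.1 z.2 : Fin (q + 1) → ℤ) (j.succAbove i)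
  rwa [h, Fin.insertNth_apply_succAbove, Fin.insertNth_apply_same] at hmax

theorem abs_fst_le_lowSize_of_topIndex_ne {j : Fin (q + 1)} {z : ℤ × (Fin q → ℤ)}
    (h : topIndex (j.insertNth z.1 z.2 : Fin (q + 1) → ℤ) ≠ j) :
    |(z.1 : ℝ)| ≤ lowSize z.2 := by
  obtain ⟨i, hi⟩ := Fin.exists_succAbove_eq h
  have hmax := abs_le_abs_topIndex (j.insertNth z.1 z.2 : Fin (q + 1) → ℤ) j
  rw [← hi, Fin.insertNth_apply_succAbove, Fin.insertNth_apply_same] at hmax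
  exact hmax.trans (abs_le_lowSize _ i)

/-- The cut-off carried by the leading part of the energy: the resonant frequencies, where the low
frequencies sum to zero, together with the support of `MH`. -/
noncomputable def energyCutoff (C₀ : ℝ) (z : ℤ × (Fin q → ℤ)) : ℂ :=
  if ∑ i, z.2 i = 0 then 1 else
    if C₀ * fmax Finset.univ (fun i => |(z.2 i : ℝ)|) ≤
      min (|(z.1 : ℝ)| ^ ((4 : ℝ) / 5)) (|(lastFreq z : ℝ)| ^ ((4 : ℝ) / 5)) then 1 else 0

theorem sq_le_cube_of_rpow_lt {t B : ℝ} (ht : 0 ≤ t) (hB : 1 ≤ B) (h : t ^ ((4 : ℝ) / 5) < B) :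
    t ^ 2 ≤ B ^ 3 := by
  have hfifth : (t ^ ((4 : ℝ) / 5)) ^ 5 = t ^ 4 := by
    rw [← Real.rpow_mul_natCast ht, ← Real.rpow_natCast t 4]
    norm_num
  refine le_of_sq_le_sq ?_ (by positivity)
  calc (t ^ 2) ^ 2 = (t ^ ((4 : ℝ) / 5)) ^ 5 := by rw [hfifth]; ring
    _ ≤ B ^ 5 := pow_le_pow_left₀ (Real.rpow_nonneg ht _) h.le 5
    _ ≤ B ^ 6 := pow_le_pow_right₀ hB (by norm_num)
    _ = (B ^ 3) ^ 2 := by ring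

theorem abs_mul_abs_le_of_energyCutoff_eq_zero {C₀ : ℝ} {z : ℤ × (Fin q → ℤ)}
    (hR : HighRegion z) (h : energyCutoff C₀ z = 0) :
    |(z.1 : ℝ)| * |(lastFreq z : ℝ)| ≤ 2 * ((1 + |C₀|) * (1 + lowSize z.2)) ^ 3 := by
  set B := (1 + |C₀|) * (1 + lowSize z.2)
  have hlow := lowSize_nonneg z.2
  have hC := abs_nonneg C₀
  have hfmax : C₀ * fmax Finset.univ (fun i => |(z.2 i : ℝ)|) ≤ B :=
    calc _ ≤ |C₀| * lowSize z.2 :=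
          mul_le_mul (le_abs_self _) (fmax_le_lowSize _) (NNReal.coe_nonneg _) hC
      _ ≤ B := mul_le_mul (by linarith) (by linarith) hlow (by linarith)
  have hB : 1 ≤ B := one_le_mul_of_one_le_of_one_le (by linarith) (by linarith)
  have hcut : min (|(z.1 : ℝ)| ^ ((4 : ℝ) / 5)) (|(lastFreq z : ℝ)| ^ ((4 : ℝ) / 5)) < B := by
    refine lt_of_lt_of_le ?_ hfmax
    unfold energyCutoff at h
    split_ifs at h with h₁ h₂
    · exact absurd h one_ne_zero
    · exact absurd h one_ne_zero
    · exact not_le.mp h₂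
  rcases min_lt_iff.mp hcut with hx | hy
  · have := sq_le_cube_of_rpow_lt (abs_nonneg _) hB hx
    have := abs_lastFreq_le z
    nlinarith [hR.1, abs_nonneg (z.1 : ℝ)]
  · have := sq_le_cube_of_rpow_lt (abs_nonneg _) hB hy
    have := abs_fst_le z
    nlinarith [hR.2, abs_nonneg (lastFreq z : ℝ)]

theorem abs_mul_abs_le_of_not_highRegion {z : ℤ × (Fin q → ℤ)} (hR : ¬ HighRegion z) :
    |(z.1 : ℝ)| * |(lastFreq z : ℝ)| ≤ 2 * (1 + lowSize z.2) ^ 3 := by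
  have hlow := lowSize_nonneg z.2
  have hx := abs_fst_le z
  have hy := abs_lastFreq_le z
  have hx0 := abs_nonneg (z.1 : ℝ)
  have hy0 := abs_nonneg (lastFreq z : ℝ)
  have hprod : |(z.1 : ℝ)| * |(lastFreq z : ℝ)| ≤ 2 * lowSize z.2 ^ 2 := by
    rcases not_and_or.mp hR with h | h <;> nlinarith only [h, hx, hy, hx0, hy0, hlow]
  nlinarith [pow_nonneg hlow 3]

theorem norm_energyCutoff_le_one (C₀ : ℝ) (z : ℤ × (Fin q → ℤ)) : ‖energyCutoff C₀ z‖ ≤ 1 := by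
  unfold energyCutoff
  split_ifs <;> simp

theorem norm_highCutoff_sub_energyCutoff_mul_le (C₀ : ℝ) (z : ℤ × (Fin q → ℤ)) :
    ‖highCutoff z - energyCutoff C₀ z‖ * (|(z.1 : ℝ)| * |(lastFreq z : ℝ)|) ≤
      2 * (1 + |C₀|) ^ 3 * (1 + lowSize z.2) ^ 3 := by
  have hlow := lowSize_nonneg z.2
  have hC : 1 ≤ (1 + |C₀|) ^ 3 := one_le_pow₀ (le_add_of_nonneg_right (abs_nonneg _))
  unfold highCutoff
  split_ifs with hR
  · by_cases hE : energyCutoff C₀ z = 0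
    · rw [hE, sub_zero, norm_one, one_mul, mul_assoc, ← mul_pow]
      exact abs_mul_abs_le_of_energyCutoff_eq_zero hR hE
    · have hone : energyCutoff C₀ z = 1 := by
        unfold energyCutoff at hE ⊢
        split_ifs at hE ⊢ <;> simp_all
      rw [hone, sub_self, norm_zero, zero_mul]
      positivity
  · rw [zero_sub, norm_neg]
    calc _ ≤ 1 * (|(z.1 : ℝ)| * |(lastFreq z : ℝ)|) := by
          gcongr
          exact norm_energyCutoff_le_one C₀ z
      _ ≤ 2 * (1 + lowSize z.2) ^ 3 := by
          rw [one_mul]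
          exact abs_mul_abs_le_of_not_highRegion hR
      _ ≤ 2 * (1 + |C₀|) ^ 3 * (1 + lowSize z.2) ^ 3 := by
          gcongr
          linarith

end LowFrequencies

section Symbols

variable {q : ℕ}

/-- The symbol `∏ (i k_l)^{μ_l}` of the derivatives falling on the low factors. -/
noncomputable def lowSym (μ : Fin q → ℕ) (k : Fin q → ℤ) : ℂ :=
  ∏ i, (Complex.I * (k i : ℂ)) ^ μ i

/-- The symbol `(ix)^m y^{2s}`: `m` derivatives on the distinguished factor, and `2s` on the test
function, whose sign `(-1)^s` is left out. -/
noncomputable def highSym (s m : ℕ) (z : ℤ × (Fin q → ℤ)) : ℂ :=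
  (Complex.I * (z.1 : ℂ)) ^ m * (lastFreq z : ℂ) ^ (2 * s)

/-- The symbol `(ix)^{s+1} (iy)^{s+1}` of the modified energy, times the leading factor. -/
noncomputable def energySym (s m : ℕ) (z : ℤ × (Fin q → ℤ)) : ℂ :=
  (Complex.I * (z.1 : ℂ)) ^ (s + 1) * (Complex.I * (lastFreq z : ℂ)) ^ (s + 1) *
    leadFactor s m ((∑ i, z.2 i : ℤ) : ℂ)

/-- The size of the symbols that are admissible errors: `s` derivatives on each high factor. -/
noncomputable def errorWeight (s : ℕ) (z : ℤ × (Fin q → ℤ)) : ℝ :=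
  (1 + lowSize z.2) ^ 4 * (|(z.1 : ℝ)| ^ s * |(lastFreq z : ℝ)| ^ s)

theorem errorWeight_nonneg (s : ℕ) (z : ℤ × (Fin q → ℤ)) : 0 ≤ errorWeight s z := by
  have := lowSize_nonneg z.2
  unfold errorWeight
  positivity

theorem prod_jap_pow_nonneg (n : ℕ) (k : Fin q → ℤ) : 0 ≤ ∏ i, jap (k i) ^ n :=
  Finset.prod_nonneg fun _ _ => (pow_pos (jap_pos _) _).le

theorem norm_lowSym_le {μ : Fin q → ℕ} {n : ℕ} (hμ : ∀ i, μ i ≤ n) (k : Fin q → ℤ) :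
    ‖lowSym μ k‖ ≤ ∏ i, jap (k i) ^ n := by
  rw [lowSym, norm_prod]
  refine Finset.prod_le_prod (fun _ _ => norm_nonneg _) fun i _ => ?_
  rw [norm_pow, norm_I_mul_intCast]
  exact (pow_le_pow_left₀ (abs_nonneg _) (abs_le_jap _) _).trans
    (pow_le_pow_right₀ (one_le_jap _) (hμ i))

theorem norm_highSym (s m : ℕ) (z : ℤ × (Fin q → ℤ)) :
    ‖highSym s m z‖ = |(z.1 : ℝ)| ^ m * (|(lastFreq z : ℝ)| ^ s * |(lastFreq z : ℝ)| ^ s) := by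
  rw [highSym, norm_mul, norm_pow, norm_pow, norm_I_mul_intCast, Complex.norm_intCast, two_mul,
    pow_add]

theorem norm_energySym_le (s m : ℕ) (z : ℤ × (Fin q → ℤ)) :
    ‖energySym s m z‖ ≤
      |(z.1 : ℝ)| ^ (s + 1) * |(lastFreq z : ℝ)| ^ (s + 1) * ((s + 2) * (1 + lowSize z.2)) := by
  rw [energySym, norm_mul, norm_mul, norm_pow, norm_pow, norm_I_mul_intCast, norm_I_mul_intCast]
  gcongr
  refine (norm_leadFactor_le _ _ _).trans ?_
  rw [Complex.norm_intCast]
  gcongr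
  exact abs_sum_le_lowSize _

theorem errorWeight_mul_prod_jap_le (s : ℕ) (z : ℤ × (Fin q → ℤ)) :
    errorWeight s z * ∏ i, jap (z.2 i) ^ 3 ≤ symbolWeight s s 7 z := by
  have hlow : (1 + lowSize z.2) ^ 4 ≤ ∏ i, jap (z.2 i) ^ 4 := by
    rw [Finset.prod_pow]
    exact pow_le_pow_left₀ (by linarith [lowSize_nonneg z.2]) (one_add_lowSize_le_prod_jap _) 4
  have hx := pow_nonneg (jap_pos z.1).le s
  calc errorWeight s z * ∏ i, jap (z.2 i) ^ 3
      ≤ (∏ i, jap (z.2 i) ^ 4) * (jap z.1 ^ s * jap (lastFreq z) ^ s) *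
          ∏ i, jap (z.2 i) ^ 3 := by
        unfold errorWeight
        gcongr
        · exact prod_jap_pow_nonneg 3 _
        · exact abs_le_jap _
        · exact abs_le_jap _
    _ = symbolWeight s s 7 z := by
        simp only [symbolWeight, pow_add _ 4 3, Finset.prod_mul_distrib]
        ring

theorem symmetrization_eq_symRemainder (s m : ℕ) (z : ℤ × (Fin q → ℤ)) :
    1 / 2 * (highSym s m z + highSym s m (swapFreq q z)) + energySym s m z =
      symRemainder m z.1 (lastFreq z) s := by
  have hsum : -(((z.1 : ℝ) : ℂ) + ((lastFreq z : ℝ) : ℂ)) = ((∑ i, z.2 i : ℤ) : ℂ) := by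
    rw [← Complex.ofReal_add, fst_add_lastFreq]
    push_cast
    ring
  rw [symRemainder, hsum, highSym, highSym, energySym, I_mul_pow_mul_I_mul_pow, lastFreq_swapFreq]
  rfl

theorem norm_highCutoff_mul_symmetrization_le {s m : ℕ} (hm : m ≤ 3) (z : ℤ × (Fin q → ℤ)) :
    ‖highCutoff z * (1 / 2 * (highSym s m z + highSym s m (swapFreq q z)) + energySym s m z)‖ ≤
      2 * 5 ^ s * errorWeight s z := by
  unfold highCutoff
  split_ifs with hR
  · have hsum := fst_add_lastFreq z
    have hlow := lowSize_nonneg z.2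
    have hsq : ((z.1 : ℝ) + lastFreq z) ^ 2 ≤ |(z.1 : ℝ) * lastFreq z| := by
      rw [hsum, abs_mul, neg_sq, ← sq_abs, sq]
      exact mul_le_mul ((abs_sum_le_lowSize _).trans hR.1) ((abs_sum_le_lowSize _).trans hR.2)
        (abs_nonneg _) (abs_nonneg _)
    rw [one_mul, symmetrization_eq_symRemainder]
    refine (norm_symRemainder_le hm hsq s).trans ?_
    rw [hsum, abs_neg, abs_mul, mul_pow |(z.1 : ℝ)|, mul_assoc, errorWeight]
    gcongr ?_ * (?_ * _)
    calc (1 + |((∑ i, z.2 i : ℤ) : ℝ)|) ^ 3 ≤ (1 + lowSize z.2) ^ 3 := by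
          gcongr
          exact abs_sum_le_lowSize _
      _ ≤ (1 + lowSize z.2) ^ 4 := pow_le_pow_right₀ (by linarith) (by norm_num)
  · rw [zero_mul, norm_zero]
    exact mul_nonneg (by positivity) (errorWeight_nonneg s z)

theorem norm_highCutoff_sub_energyCutoff_mul_energySym_le (C₀ : ℝ) (s m : ℕ)
    (z : ℤ × (Fin q → ℤ)) :
    ‖(highCutoff z - energyCutoff C₀ z) * energySym s m z‖ ≤
      2 * (1 + |C₀|) ^ 3 * (s + 2) * errorWeight s z := by
  have hlow := lowSize_nonneg z.2
  rw [norm_mul]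
  calc _ ≤ ‖highCutoff z - energyCutoff C₀ z‖ * (|(z.1 : ℝ)| ^ (s + 1) *
          |(lastFreq z : ℝ)| ^ (s + 1) * ((s + 2) * (1 + lowSize z.2))) := by
        gcongr
        exact norm_energySym_le s m z
    _ = ‖highCutoff z - energyCutoff C₀ z‖ * (|(z.1 : ℝ)| * |(lastFreq z : ℝ)|) *
          (|(z.1 : ℝ)| ^ s * |(lastFreq z : ℝ)| ^ s * ((s + 2) * (1 + lowSize z.2))) := by ring
    _ ≤ 2 * (1 + |C₀|) ^ 3 * (1 + lowSize z.2) ^ 3 *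
          (|(z.1 : ℝ)| ^ s * |(lastFreq z : ℝ)| ^ s * ((s + 2) * (1 + lowSize z.2))) := by
        exact mul_le_mul_of_nonneg_right (norm_highCutoff_sub_energyCutoff_mul_le C₀ z)
          (by positivity)
    _ = _ := by rw [errorWeight]; ring

theorem norm_symmetrized_error_le (C₀ : ℝ) {s m : ℕ} (hm : m ≤ 3) (z : ℤ × (Fin q → ℤ)) :
    ‖highCutoff z * (1 / 2 * (highSym s m z + highSym s m (swapFreq q z))) +
        energyCutoff C₀ z * energySym s m z‖ ≤
      (2 * 5 ^ s + 2 * (1 + |C₀|) ^ 3 * (s + 2)) * errorWeight s z := by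
  rw [add_mul]
  calc _ = ‖highCutoff z * (1 / 2 * (highSym s m z + highSym s m (swapFreq q z)) +
          energySym s m z) - (highCutoff z - energyCutoff C₀ z) * energySym s m z‖ := by
        congr 1
        ring
    _ ≤ _ := norm_sub_le_of_le (norm_highCutoff_mul_symmetrization_le hm z)
        (norm_highCutoff_sub_energyCutoff_mul_energySym_le C₀ s m z)

theorem norm_highSym_le_errorWeight {s m : ℕ} (hm : m ≤ 3) {z : ℤ × (Fin q → ℤ)}
    (hx : |(z.1 : ℝ)| ≤ 2 * lowSize z.2) (hy : |(lastFreq z : ℝ)| ≤ (q + 2) * |(z.1 : ℝ)|) :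
    ‖highSym s m z‖ ≤ 8 * (q + 2) ^ s * errorWeight s z := by
  have hlow := lowSize_nonneg z.2
  have hxm : |(z.1 : ℝ)| ^ m ≤ 8 * (1 + lowSize z.2) ^ 4 :=
    calc |(z.1 : ℝ)| ^ m ≤ (2 * (1 + lowSize z.2)) ^ m := by gcongr; linarith
      _ ≤ (2 * (1 + lowSize z.2)) ^ 3 := pow_le_pow_right₀ (by linarith) hm
      _ = 8 * (1 + lowSize z.2) ^ 3 := by ring
      _ ≤ 8 * (1 + lowSize z.2) ^ 4 :=
        mul_le_mul_of_nonneg_left (pow_le_pow_right₀ (by linarith) (by norm_num)) (by norm_num)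
  rw [norm_highSym]
  calc _ ≤ 8 * (1 + lowSize z.2) ^ 4 *
          (((q + 2) * |(z.1 : ℝ)|) ^ s * |(lastFreq z : ℝ)| ^ s) := by gcongr
    _ = _ := by rw [errorWeight, mul_pow]; ring

theorem lowSize_le_of_abs_le {k : Fin q → ℤ} {B : ℝ} (h : ∀ i, |(k i : ℝ)| ≤ B) :
    lowSize k ≤ q * B := by
  simpa [lowSize] using Finset.sum_le_sum fun i (_ : i ∈ Finset.univ) => h i

theorem norm_topCutoff_sub_highCutoff_mul_highSym_le {s m : ℕ} (hm : m ≤ 3) (j : Fin (q + 1))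
    (z : ℤ × (Fin q → ℤ)) :
    ‖(topCutoff j z - highCutoff z) * highSym s m z‖ ≤ 8 * (q + 2) ^ s * errorWeight s z := by
  have hx := abs_fst_le z
  have hy := abs_lastFreq_le z
  have hrhs : 0 ≤ 8 * (q + 2 : ℝ) ^ s * errorWeight s z :=
    mul_nonneg (by positivity) (errorWeight_nonneg s z)
  by_cases htop : topIndex (j.insertNth z.1 z.2 : Fin (q + 1) → ℤ) = j <;>
    by_cases hR : HighRegion z <;> simp only [topCutoff, highCutoff, htop, hR, if_true, if_false]
  · simpa using hrhs
  · have hlow := lowSize_le_of_abs_le (abs_le_abs_fst_of_topIndex_eq htop)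
    rw [sub_zero, one_mul]
    refine norm_highSym_le_errorWeight hm ?_ (by linarith [abs_nonneg (z.1 : ℝ)])
    rcases not_and_or.mp hR with h | h <;> linarith
  · have hlow := abs_fst_le_lowSize_of_topIndex_ne htop
    rw [zero_sub, neg_one_mul, norm_neg]
    refine norm_highSym_le_errorWeight hm (by linarith [lowSize_nonneg z.2]) ?_
    nlinarith [hR.1, abs_nonneg (z.1 : ℝ), (Nat.cast_nonneg q : (0 : ℝ) ≤ q)]
  · simpa using hrhs

theorem norm_topCutoff_mul_highSym_le {s m : ℕ} (hm : m ≤ 3) (j : Fin (q + 1))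
    (z : ℤ × (Fin q → ℤ)) :
    ‖topCutoff j z * highSym s m z‖ ≤
      (q + 1) ^ s * (jap z.1 ^ (s + 3) * jap (lastFreq z) ^ s) := by
  have hj := (jap_pos z.1).le
  have hj' := (jap_pos (lastFreq z)).le
  unfold topCutoff
  split_ifs with htop
  · have hy : |(lastFreq z : ℝ)| ≤ (q + 1) * jap z.1 :=
      calc |(lastFreq z : ℝ)| ≤ (q + 1) * |(z.1 : ℝ)| := by
            linarith [abs_lastFreq_le z, lowSize_le_of_abs_le (abs_le_abs_fst_of_topIndex_eq htop)]
        _ ≤ (q + 1) * jap z.1 := by gcongr; exact abs_le_jap _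
    rw [one_mul, norm_highSym]
    calc _ ≤ jap z.1 ^ 3 * (((q + 1) * jap z.1) ^ s * jap (lastFreq z) ^ s) := by
          gcongr
          · exact (pow_le_pow_left₀ (abs_nonneg _) (abs_le_jap _) _).trans
              (pow_le_pow_right₀ (one_le_jap _) hm)
          · exact abs_le_jap _
      _ = _ := by rw [mul_pow]; ring
  · rw [zero_mul, norm_zero]
    positivity

end Symbols

section HighPart

variable {q : ℕ} {u : Fin q → ℤ → ℂ} {w : ℤ → ℂ} {M : ℤ × (Fin q → ℤ) → ℂ}

theorem coeffProd_swapFreq (u : Fin q → ℤ → ℂ) (w : ℤ → ℂ) (z : ℤ × (Fin q → ℤ)) :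
    coeffProd u w w (swapFreq q z) = coeffProd u w w z := by
  simp only [coeffProd, lastFreq_swapFreq]
  exact congrArg (· * _) (mul_comm _ _)

theorem hasSum_symmetrize {T : ℂ} (hM : HasSum (fun z => M z * coeffProd u w w z) T) :
    HasSum (fun z => 1 / 2 * (M z + M (swapFreq q z)) * coeffProd u w w z) T := by
  have hswap : HasSum (fun z => M (swapFreq q z) * coeffProd u w w z) T := by
    simpa only [Function.comp_def, coeffProd_swapFreq] using (swapFreq q).hasSum_iff.mpr hM
  convert! (hM.add hswap).mul_left (1 / 2) using 1
  · funext z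
    ring
  · ring

theorem summable_and_norm_tsum_errorWeight_le {μ : Fin q → ℕ} {C : ℝ} {s : ℕ}
    (hu : ∀ i, RapidDecay (u i)) (hw : RapidDecay w) (hμ : ∀ i, μ i ≤ 3) (hC : 0 ≤ C)
    (hM : ∀ z, ‖M z‖ ≤ C * errorWeight s z) :
    Summable (fun z => M z * lowSym μ z.2 * coeffProd u w w z) ∧
      ‖∑' z, M z * lowSym μ z.2 * coeffProd u w w z‖ ≤
        C * (ellTwo s w ^ 2 * ∏ i, ellOne 7 (u i)) := by
  rw [sq]
  refine summable_and_norm_tsum_symbol_le hu hw hw fun z => ?_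
  calc ‖M z * lowSym μ z.2‖ ≤ C * errorWeight s z * ∏ i, jap (z.2 i) ^ 3 :=
        norm_mul_le_of_le (hM z) (norm_lowSym_le hμ z.2)
    _ = C * (errorWeight s z * ∏ i, jap (z.2 i) ^ 3) := mul_assoc _ _ _
    _ ≤ C * symbolWeight s s 7 z :=
        mul_le_mul_of_nonneg_left (errorWeight_mul_prod_jap_le s z) hC

theorem norm_topCutoff_mul_highSym_mul_lowSym_le {s m : ℕ} {μ : Fin q → ℕ} (hm : m ≤ 3)
    (hμ : ∀ i, μ i ≤ 3) (j : Fin (q + 1)) (z : ℤ × (Fin q → ℤ)) :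
    ‖topCutoff j z * highSym s m z * lowSym μ z.2‖ ≤ (q + 1) ^ s * symbolWeight (s + 3) s 3 z := by
  rw [symbolWeight, ← mul_assoc]
  exact norm_mul_le_of_le (norm_topCutoff_mul_highSym_le hm j z) (norm_lowSym_le hμ z.2)

/-- The constant in the estimate of the high part. -/
noncomputable def highConst (C₀ : ℝ) (s q : ℕ) : ℝ :=
  8 * (q + 2) ^ s + (2 * 5 ^ s + 2 * (1 + |C₀|) ^ 3 * (s + 2))

theorem highConst_nonneg (C₀ : ℝ) (s q : ℕ) : 0 ≤ highConst C₀ s q := by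
  unfold highConst
  positivity

theorem summable_and_norm_tsum_topCutoff_add_tsum_energyCutoff_le (C₀ : ℝ) {s m : ℕ} {μ : Fin q → ℕ}
    (hu : ∀ i, RapidDecay (u i)) (hw : RapidDecay w) (hm : m ≤ 3) (hμ : ∀ i, μ i ≤ 3)
    (j : Fin (q + 1)) :
    Summable (fun z => energyCutoff C₀ z * energySym s m z * lowSym μ z.2 * coeffProd u w w z) ∧
      ‖∑' z, topCutoff j z * highSym s m z * lowSym μ z.2 * coeffProd u w w z +
          ∑' z, energyCutoff C₀ z * energySym s m z * lowSym μ z.2 * coeffProd u w w z‖ ≤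
        highConst C₀ s q * (ellTwo s w ^ 2 * ∏ i, ellOne 7 (u i)) := by
  have htop := (summable_and_norm_tsum_symbol_le hu hw hw
    (norm_topCutoff_mul_highSym_mul_lowSym_le (s := s) hm hμ j)).1
  obtain ⟨hdiff, hdiff_le⟩ := summable_and_norm_tsum_errorWeight_le hu hw hμ (by positivity)
    (norm_topCutoff_sub_highCutoff_mul_highSym_le (s := s) hm j)
  obtain ⟨herr, herr_le⟩ := summable_and_norm_tsum_errorWeight_le hu hw hμ (by positivity)
    (norm_symmetrized_error_le C₀ (s := s) hm)
  have hsymm : HasSum (fun z : ℤ × (Fin q → ℤ) => highCutoff z *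
      (1 / 2 * (highSym s m z + highSym s m (swapFreq q z))) * lowSym μ z.2 * coeffProd u w w z)
      (∑' z, topCutoff j z * highSym s m z * lowSym μ z.2 * coeffProd u w w z -
        ∑' z, (topCutoff j z - highCutoff z) * highSym s m z * lowSym μ z.2 *
          coeffProd u w w z) := by
    have hhigh := hasSum_symmetrize
      (M := fun z => highCutoff z * highSym s m z * lowSym μ z.2) <| by
        convert! htop.hasSum.sub hdiff.hasSum using 2 with z
        ring
    convert! hhigh using 2 with z
    have hlow : (swapFreq q z).2 = z.2 := rfl
    rw [highCutoff_swapFreq, hlow]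
    ring
  have henergy := herr.hasSum.sub hsymm
  simp only [← sub_mul, add_sub_cancel_left] at henergy
  refine ⟨henergy.summable, ?_⟩
  rw [henergy.tsum_eq, add_sub_left_comm, sub_sub_cancel, add_comm, highConst, add_mul]
  exact norm_add_le_of_le hdiff_le herr_le

end HighPart

section LowPart

variable {q : ℕ}

theorem prod_sub_prod_eq_sum {R : Type*} [CommRing R] {n : ℕ} (a b : Fin n → R) :
    ∏ i, a i - ∏ i, b i =
      ∑ l, ∏ i, if i < l then b i else if i = l then a i - b i else a i := by
  induction n with
  | zero => simp
  | succ n ih =>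
    have hhead : ∏ i, (if i < (0 : Fin (n + 1)) then b i else if i = 0 then a i - b i else a i) =
        (a 0 - b 0) * ∏ i : Fin n, a i.succ := by
      simp [Fin.prod_univ_succ, Fin.succ_ne_zero]
    have htail : ∀ l : Fin n,
        (∏ i, if i < l.succ then b i else if i = l.succ then a i - b i else a i) =
        b 0 * ∏ i : Fin n, if i < l then b i.succ else
          if i = l then a i.succ - b i.succ else a i.succ := fun l => by
      simp [Fin.prod_univ_succ, Fin.succ_pos]
    rw [Fin.sum_univ_succ, hhead, Finset.sum_congr rfl fun l _ => htail l, ← Finset.mul_sum,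
      ← ih (fun i => a i.succ) (fun i => b i.succ), Fin.prod_univ_succ a, Fin.prod_univ_succ b]
    ring

/-- The `i`-th factor in the `l`-th term of the telescoping expansion of `∏ u - ∏ v`. -/
def mixedFactor (u v : ℤ → ℂ) (l i : Fin q) : ℤ → ℂ :=
  if i < l then v else if i = l then u - v else u

theorem prod_sub_prod_eq_sum_mixedFactor (u v : ℤ → ℂ) (k : Fin q → ℤ) :
    ∏ i, u (k i) - ∏ i, v (k i) = ∑ l, ∏ i, mixedFactor u v l i (k i) := by
  rw [prod_sub_prod_eq_sum]
  refine Finset.sum_congr rfl fun l _ => Finset.prod_congr rfl fun i _ => ?_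
  unfold mixedFactor
  split_ifs <;> rfl

variable {u v w₁ w₂ : ℤ → ℂ}

theorem RapidDecay.mixedFactor (hu : RapidDecay u) (hv : RapidDecay v) (l i : Fin q) :
    RapidDecay (mixedFactor u v l i) := by
  unfold FifthOrderStmt18.mixedFactor
  split_ifs
  exacts [hv, hu.sub hv, hu]

theorem prod_ellOne_mixedFactor_le (n : ℕ) (u v : ℤ → ℂ) (l : Fin q) :
    ∏ i, ellOne n (mixedFactor u v l i) ≤
      ellOne n (u - v) * (ellOne n u + ellOne n v) ^ (q - 1) := by
  rw [← Finset.mul_prod_erase _ _ (Finset.mem_univ l)]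
  have hdiag : mixedFactor u v l l = u - v := by simp [mixedFactor]
  have hcard : (Finset.univ.erase l).card = q - 1 := by simp
  rw [hdiag, ← hcard, ← Finset.prod_const]
  refine mul_le_mul_of_nonneg_left ?_ (ellOne_nonneg _ _)
  refine Finset.prod_le_prod (fun _ _ => ellOne_nonneg _ _) fun i hi => ?_
  have hi' : i ≠ l := Finset.ne_of_mem_erase hi
  unfold mixedFactor
  split_ifs
  · exact le_add_of_nonneg_left (ellOne_nonneg _ _)
  · exact le_add_of_nonneg_right (ellOne_nonneg _ _)

theorem summable_and_norm_tsum_coeffProd_sub_le {M : ℤ × (Fin q → ℤ) → ℂ} {C : ℝ} {n₁ n₂ n₃ : ℕ}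
    (hu : RapidDecay u) (hv : RapidDecay v) (h₁ : RapidDecay w₁) (h₂ : RapidDecay w₂)
    (hC : 0 ≤ C) (hM : ∀ z, ‖M z‖ ≤ C * symbolWeight n₁ n₂ n₃ z) :
    Summable (fun z =>
        M z * (coeffProd (fun _ => u) w₁ w₂ z - coeffProd (fun _ => v) w₁ w₂ z)) ∧
      ‖∑' z, M z * (coeffProd (fun _ => u) w₁ w₂ z - coeffProd (fun _ => v) w₁ w₂ z)‖ ≤
        q * C * (ellTwo n₁ w₁ * ellTwo n₂ w₂ *
          (ellOne n₃ (u - v) * (ellOne n₃ u + ellOne n₃ v) ^ (q - 1))) := by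
  have hterm := fun l : Fin q =>
    summable_and_norm_tsum_symbol_le (hu.mixedFactor hv l) h₁ h₂ hM
  have hsum : HasSum (fun z =>
      M z * (coeffProd (fun _ => u) w₁ w₂ z - coeffProd (fun _ => v) w₁ w₂ z))
      (∑ l : Fin q, ∑' z, M z * coeffProd (mixedFactor u v l) w₁ w₂ z) := by
    convert! hasSum_sum fun l (_ : l ∈ Finset.univ) => (hterm l).1.hasSum using 2 with z
    simp only [coeffProd]
    rw [← mul_sub, prod_sub_prod_eq_sum_mixedFactor, Finset.mul_sum, Finset.mul_sum]
  refine ⟨hsum.summable, ?_⟩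
  rw [hsum.tsum_eq]
  calc _ ≤ ∑ _l : Fin q, C * (ellTwo n₁ w₁ * ellTwo n₂ w₂ *
          (ellOne n₃ (u - v) * (ellOne n₃ u + ellOne n₃ v) ^ (q - 1))) :=
        norm_sum_le_of_le _ fun l _ => (hterm l).2.trans <|
          mul_le_mul_of_nonneg_left (mul_le_mul_of_nonneg_left (prod_ellOne_mixedFactor_le _ _ _ l)
            (mul_nonneg (ellTwo_nonneg _ _) (ellTwo_nonneg _ _))) hC
    _ = _ := by
        rw [Finset.sum_const, Finset.card_univ, Fintype.card_fin, nsmul_eq_mul]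
        ring

end LowPart

section Difference

variable {q : ℕ}

/-- The multilinear form in the Fourier coefficients of `f` and `f - g` that corrects the energy:
a factor with `m` derivatives carries the high frequency, the others carry `μ`. -/
noncomputable def energySum (C₀ : ℝ) (s m : ℕ) (μ : Fin q → ℕ) (u w : ℤ → ℂ) : ℂ :=
  ∑' z, energyCutoff C₀ z * energySym s m z * lowSym μ z.2 * coeffProd (fun _ => u) w w z

/-- The summand of the Fourier expansion of `(-1)^s (N(f) - N(g), ∂^{2s}(f - g))`, where `u` and `v`
are the Fourier coefficients of `f` and `g`. -/
noncomputable def diffSummand (s : ℕ) (μ : Fin (q + 1) → ℕ) (u v : ℤ → ℂ)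
    (k : Fin (q + 1) → ℤ) : ℂ :=
  lowSym μ k * ((∑ i, k i : ℤ) : ℂ) ^ (2 * s) * (∏ i, u (k i) - ∏ i, v (k i)) *
    (u - v) (-∑ i, k i)

theorem diffSummand_insertNth (s : ℕ) (μ : Fin (q + 1) → ℕ) (u v : ℤ → ℂ) (j : Fin (q + 1))
    (z : ℤ × (Fin q → ℤ)) :
    diffSummand s μ u v (j.insertNth z.1 z.2) =
      highSym s (μ j) z * lowSym (μ ∘ j.succAbove) z.2 *
        (coeffProd (fun _ => u) (u - v) (u - v) z +
          (coeffProd (fun _ => u) v (u - v) z - coeffProd (fun _ => v) v (u - v) z)) := by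
  have hsum : ∑ i, (j.insertNth z.1 z.2 : Fin (q + 1) → ℤ) i = -lastFreq z := by
    simp [Fin.sum_univ_succAbove _ j, lastFreq]
  have hpow : ((-lastFreq z : ℤ) : ℂ) ^ (2 * s) = (lastFreq z : ℂ) ^ (2 * s) := by
    rw [Int.cast_neg, (even_two_mul s).neg_pow]
  rw [diffSummand, hsum, hpow, lowSym, lowSym, Fin.prod_univ_succAbove _ j,
    Fin.prod_univ_succAbove _ j, Fin.prod_univ_succAbove _ j]
  simp only [Fin.insertNth_apply_same, Fin.insertNth_apply_succAbove, neg_neg, highSym, coeffProd,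
    Pi.sub_apply, Function.comp_apply]
  ring

/-- The error, with either `s` derivatives on each of two factors `u - v`, or `s + 3` derivatives on
`v`, `s` on `u - v`, and one more low factor `u - v`. -/
noncomputable def errorBound (s q : ℕ) (u v : ℤ → ℂ) : ℝ :=
  ellTwo s (u - v) ^ 2 * ellOne 7 u ^ q +
    ellTwo (s + 3) v * ellTwo s (u - v) *
      (ellOne 3 (u - v) * (ellOne 3 u + ellOne 3 v) ^ (q - 1))

variable {s : ℕ} {μ : Fin (q + 1) → ℕ} {u v : ℤ → ℂ}

theorem hasSum_diffSummand (hu : RapidDecay u) (hv : RapidDecay v) (hμ : ∀ i, μ i ≤ 3) :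
    HasSum (diffSummand s μ u v) (∑ j, (
      ∑' z, topCutoff j z * highSym s (μ j) z * lowSym (μ ∘ j.succAbove) z.2 *
        coeffProd (fun _ => u) (u - v) (u - v) z +
      ∑' z, topCutoff j z * highSym s (μ j) z * lowSym (μ ∘ j.succAbove) z.2 *
        (coeffProd (fun _ => u) v (u - v) z - coeffProd (fun _ => v) v (u - v) z))) := by
  have hw := hu.sub hv
  have hM := fun j => norm_topCutoff_mul_highSym_mul_lowSym_le (s := s)
    (μ := μ ∘ j.succAbove) (hμ j) (fun i => hμ _) j
  have hslot : ∀ j, HasSum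
      (fun k => (if topIndex k = j then (1 : ℂ) else 0) * diffSummand s μ u v k) _ := fun j => by
    rw [← (Fin.insertNthEquiv (fun _ => ℤ) j).hasSum_iff]
    convert! (summable_and_norm_tsum_symbol_le (fun _ => hu) hw hw (hM j)).1.hasSum.add
      (summable_and_norm_tsum_coeffProd_sub_le hu hv hv hw (by positivity) (hM j)).1.hasSum
      using 2 with z
    have hz : Fin.insertNthEquiv (fun _ => ℤ) j z = j.insertNth z.1 z.2 := rfl
    rw [Function.comp_apply, hz, diffSummand_insertNth, topCutoff]
    ring
  convert! hasSum_sum fun j (_ : j ∈ Finset.univ) => hslot j using 2 with k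
  rw [← Finset.sum_mul, Finset.sum_ite_eq, if_pos (Finset.mem_univ _), one_mul]

/-- The constant in the estimate of the difference. -/
noncomputable def diffConst (C₀ : ℝ) (s q : ℕ) : ℝ :=
  (q + 1) * (highConst C₀ s q + q * (q + 1) ^ s)

theorem diffConst_nonneg (C₀ : ℝ) (s q : ℕ) : 0 ≤ diffConst C₀ s q :=
  mul_nonneg (by positivity) (add_nonneg (highConst_nonneg C₀ s q) (by positivity))

theorem norm_tsum_diffSummand_add_sum_energySum_le (C₀ : ℝ) (hu : RapidDecay u)
    (hv : RapidDecay v) (hμ : ∀ i, μ i ≤ 3) :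
    ‖∑' k, diffSummand s μ u v k +
        ∑ j, energySum C₀ s (μ j) (μ ∘ j.succAbove) u (u - v)‖ ≤
      diffConst C₀ s q * errorBound s q u v := by
  have hw := hu.sub hv
  rw [(hasSum_diffSummand hu hv hμ).tsum_eq, ← Finset.sum_add_distrib]
  have hhigh := fun j => (summable_and_norm_tsum_topCutoff_add_tsum_energyCutoff_le C₀ (s := s)
    (μ := μ ∘ j.succAbove) (fun _ => hu) hw (hμ j) (fun i => hμ _) j).2
  have hlow := fun j => (summable_and_norm_tsum_coeffProd_sub_le hu hv hv hw (by positivity)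
    (norm_topCutoff_mul_highSym_mul_lowSym_le (s := s) (μ := μ ∘ j.succAbove) (hμ j)
      (fun i => hμ _) j)).2
  calc _ ≤ ∑ _j : Fin (q + 1), (highConst C₀ s q + q * (q + 1) ^ s) * errorBound s q u v := by
        refine norm_sum_le_of_le _ fun j _ => ?_
        rw [add_right_comm]
        refine (norm_add_le_of_le (hhigh j) (hlow j)).trans ?_
        rw [Finset.prod_const, Finset.card_univ, Fintype.card_fin]
        have hX : 0 ≤ ellTwo s (u - v) ^ 2 * ellOne 7 u ^ q :=
          mul_nonneg (sq_nonneg _) (pow_nonneg (ellOne_nonneg _ _) _)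
        have hY : 0 ≤ ellTwo (s + 3) v * ellTwo s (u - v) *
            (ellOne 3 (u - v) * (ellOne 3 u + ellOne 3 v) ^ (q - 1)) :=
          mul_nonneg (mul_nonneg (ellTwo_nonneg _ _) (ellTwo_nonneg _ _))
            (mul_nonneg (ellOne_nonneg _ _)
              (pow_nonneg (add_nonneg (ellOne_nonneg _ _) (ellOne_nonneg _ _)) _))
        have hlow_nonneg : (0 : ℝ) ≤ q * (q + 1) ^ s := by positivity
        rw [errorBound]
        nlinarith [mul_nonneg (highConst_nonneg C₀ s q) hY, mul_nonneg hlow_nonneg hX]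
    _ = _ := by
        rw [Finset.sum_const, Finset.card_univ, Fintype.card_fin, nsmul_eq_mul, diffConst]
        push_cast
        ring

end Difference

section DerivOrder

variable {a b c q : ℕ}

/-- The number of derivatives falling on the `i`-th factor of
`(∂³f)^a (∂²f)^b (∂f)^c f^d`. -/
def derivOrder (a b c : ℕ) (i : Fin q) : ℕ :=
  if (i : ℕ) < a then 3 else if (i : ℕ) < a + b then 2 else if (i : ℕ) < a + b + c then 1 else 0

theorem derivOrder_le_three (a b c : ℕ) (i : Fin q) : derivOrder a b c i ≤ 3 := by
  unfold derivOrder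
  split_ifs <;> omega

theorem val_succAbove (j : Fin (q + 1)) (i : Fin q) :
    (j.succAbove i : ℕ) = if (i : ℕ) < j then (i : ℕ) else i + 1 := by
  simp only [Fin.succAbove, Fin.lt_def, Fin.val_castSucc]
  split_ifs <;> simp

theorem derivOrder_comp_succAbove_of_lt {j : Fin (q + 1)} (hj : (j : ℕ) < a) :
    derivOrder a b c ∘ j.succAbove = derivOrder (a - 1) b c := by
  funext i
  rw [Function.comp_apply]
  unfold derivOrder
  rw [val_succAbove]
  split_ifs <;> omega

theorem derivOrder_comp_succAbove_of_le_of_lt {j : Fin (q + 1)} (hj : a ≤ (j : ℕ))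
    (hj' : (j : ℕ) < a + b) : derivOrder a b c ∘ j.succAbove = derivOrder a (b - 1) c := by
  funext i
  rw [Function.comp_apply]
  unfold derivOrder
  rw [val_succAbove]
  split_ifs <;> omega

theorem sum_ite_lt_ite_lt {R : Type*} [Semiring R] (a b d : ℕ) (A B : R) :
    ∑ n ∈ Finset.range (a + b + d), (if n < a then A else if n < a + b then B else 0) =
      a * A + b * B := by
  have hA : ∀ n ∈ Finset.range a, (if n < a then A else if n < a + b then B else 0) = A :=
    fun n hn => if_pos (Finset.mem_range.mp hn)
  have hB : ∀ n ∈ Finset.range b,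
      (if a + n < a then A else if a + n < a + b then B else 0) = B := fun n hn => by
    simp [Finset.mem_range.mp hn]
  rw [Finset.sum_range_add, Finset.sum_range_add, Finset.sum_congr rfl hA,
    Finset.sum_congr rfl hB]
  simp [add_assoc]

theorem sum_derivOrder {R : Type*} [Semiring R] {d : ℕ} (hq : q + 1 = a + b + c + d)
    {G : ℕ → (Fin q → ℕ) → R} (hG : ∀ m < 2, ∀ μ, G m μ = 0) :
    ∑ j : Fin (q + 1), G (derivOrder a b c j) (derivOrder a b c ∘ j.succAbove) =
      a * G 3 (derivOrder (a - 1) b c) + b * G 2 (derivOrder a (b - 1) c) := by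
  rw [← sum_ite_lt_ite_lt a b (c + d), ← add_assoc, ← hq, ← Fin.sum_univ_eq_sum_range]
  refine Finset.sum_congr rfl fun j _ => ?_
  split_ifs with ha hb
  · rw [derivOrder_comp_succAbove_of_lt ha, derivOrder, if_pos ha]
  · rw [derivOrder_comp_succAbove_of_le_of_lt (not_lt.mp ha) hb, derivOrder, if_neg ha, if_pos hb]
  · refine hG _ ?_ _
    rw [derivOrder, if_neg ha, if_neg hb]
    split_ifs <;> norm_num

theorem energySum_eq_zero (C₀ : ℝ) (s : ℕ) {m : ℕ} (hm : m < 2) (μ : Fin q → ℕ) (u w : ℤ → ℂ) :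
    energySum C₀ s m μ u w = 0 := by
  have h3 : m ≠ 3 := by omega
  have h2 : m ≠ 2 := by omega
  simp [energySum, energySym, leadFactor, h3, h2]

theorem norm_tsum_diffSummand_derivOrder_add_le {d : ℕ} (hq : q + 1 = a + b + c + d) (C₀ : ℝ)
    (s : ℕ) {u v : ℤ → ℂ} (hu : RapidDecay u) (hv : RapidDecay v) :
    ‖∑' k : Fin (q + 1) → ℤ, diffSummand s (derivOrder a b c) u v k +
        (a * energySum C₀ s 3 (derivOrder (a - 1) b c : Fin q → ℕ) u (u - v) +
          b * energySum C₀ s 2 (derivOrder a (b - 1) c : Fin q → ℕ) u (u - v))‖ ≤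
      diffConst C₀ s q * errorBound s q u v := by
  rw [← sum_derivOrder hq fun m hm μ => energySum_eq_zero C₀ s hm μ u (u - v)]
  exact norm_tsum_diffSummand_add_sum_energySum_le C₀ hu hv (derivOrder_le_three a b c)

end DerivOrder

section ZeroSum

variable {q : ℕ}

/-- The frequency tuples summing to zero, parametrized by all but the last frequency. The
distinguished frequency comes last but one. -/
def zeroSumEquiv (q : ℕ) :
    ℤ × (Fin q → ℤ) ≃ {k : Fin (q + 1 + 1) → ℤ // (∑ i, k i) = 0} where
  toFun z := ⟨Fin.snoc (Fin.snoc z.2 z.1 : Fin (q + 1) → ℤ) (lastFreq z), by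
    simp only [Fin.sum_univ_castSucc, Fin.snoc_castSucc, Fin.snoc_last, lastFreq]
    ring⟩
  invFun k := (k.1 (Fin.last q).castSucc, fun i => k.1 i.castSucc.castSucc)
  left_inv z := by simp
  right_inv k := by
    have hk := k.2
    rw [Fin.sum_univ_castSucc, Fin.sum_univ_castSucc] at hk
    ext i
    refine Fin.lastCases ?_ (Fin.lastCases ?_ fun i => ?_) i
    · simp only [lastFreq, Fin.snoc_last]
      linarith
    · simp
    · simp

theorem zeroSumEquiv_last (z : ℤ × (Fin q → ℤ)) :
    (zeroSumEquiv q z).1 (Fin.last (q + 1)) = lastFreq z := by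
  simp [zeroSumEquiv]

theorem zeroSumEquiv_castSucc_last (z : ℤ × (Fin q → ℤ)) :
    (zeroSumEquiv q z).1 (Fin.last q).castSucc = z.1 := by
  simp [zeroSumEquiv]

theorem zeroSumEquiv_castSucc_castSucc (z : ℤ × (Fin q → ℤ)) (i : Fin q) :
    (zeroSumEquiv q z).1 i.castSucc.castSucc = z.2 i := by
  simp [zeroSumEquiv]

theorem ksum1_zeroSumEquiv (z : ℤ × (Fin q → ℤ)) :
    ksum1 (q + 1) (zeroSumEquiv q z).1 = ∑ i, z.2 i := by
  rw [ksum1, Finset.sum_filter, Fin.sum_univ_castSucc, Fin.sum_univ_castSucc]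
  simp [zeroSumEquiv_castSucc_castSucc]

theorem filter_val_lt_eq_map (q : ℕ) :
    Finset.univ.filter (fun i : Fin (q + 1 + 1) => (i : ℕ) < q + 1 - 1) =
      Finset.univ.map (Fin.castSuccEmb.trans Fin.castSuccEmb) := by
  ext i
  simp only [Finset.mem_filter_univ, Finset.mem_map, Finset.mem_univ, true_and]
  exact ⟨fun hi => ⟨⟨i, hi⟩, rfl⟩, fun ⟨j, hj⟩ => hj ▸ j.isLt⟩

theorem fmax_zeroSumEquiv (z : ℤ × (Fin q → ℤ)) :
    fmax (Finset.univ.filter (fun i : Fin (q + 1 + 1) => (i : ℕ) < q + 1 - 1))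
      (fun i => |((zeroSumEquiv q z).1 i : ℝ)|) = fmax Finset.univ fun i => |(z.2 i : ℝ)| := by
  rw [fmax, filter_val_lt_eq_map, Finset.sup_map, fmax]
  refine congrArg _ (Finset.sup_congr rfl fun i _ => ?_)
  simp only [Function.comp_apply, Function.Embedding.trans_apply, Fin.coe_castSuccEmb,
    zeroSumEquiv_castSucc_castSucc]

theorem Dabc_eq_lowSym (p a b c : ℕ) : Dabc p a b c = lowSym (derivOrder a b c) := by
  funext k
  rw [Dabc, lowSym, Finset.prod_filter, Finset.prod_filter, Finset.prod_filter,
    ← Finset.prod_mul_distrib, ← Finset.prod_mul_distrib]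
  refine Finset.prod_congr rfl fun i _ => ?_
  unfold derivOrder
  split_ifs <;> first | omega | simp

theorem Dabc_zeroSumEquiv {a b c : ℕ} (h : a + b + c ≤ q) (z : ℤ × (Fin q → ℤ)) :
    Dabc (q + 1) a b c (zeroSumEquiv q z).1 = lowSym (derivOrder a b c) z.2 := by
  have hord : ∀ i : Fin (q + 1 + 1), q ≤ i → derivOrder a b c i = 0 := fun i hi => by
    unfold derivOrder
    split_ifs <;> omega
  rw [Dabc_eq_lowSym, lowSym, Fin.prod_univ_castSucc, Fin.prod_univ_castSucc,
    hord (Fin.last q).castSucc le_rfl, hord (Fin.last (q + 1)) (Nat.le_succ q), pow_zero, pow_zero,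
    mul_one, mul_one]
  simp only [zeroSumEquiv_castSucc_castSucc]
  rfl

theorem MNZ_zeroSumEquiv (z : ℤ × (Fin q → ℤ)) :
    MNZ (q + 1) (zeroSumEquiv q z).1 = if ∑ i, z.2 i = 0 then 0 else 1 := by
  rw [MNZ, ksum1_zeroSumEquiv, ite_not]

theorem MH_zeroSumEquiv (C₀ : ℝ) (z : ℤ × (Fin q → ℤ)) :
    MH C₀ (q + 1) (zeroSumEquiv q z).1 =
      if C₀ * fmax Finset.univ (fun i => |(z.2 i : ℝ)|) ≤
        min (|(z.1 : ℝ)| ^ ((4 : ℝ) / 5)) (|(lastFreq z : ℝ)| ^ ((4 : ℝ) / 5)) then 1 else 0 := by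
  have hpen : (⟨q + 1 - 1, by omega⟩ : Fin (q + 1 + 1)) = (Fin.last q).castSucc := rfl
  rw [MH, fmax_zeroSumEquiv, hpen, zeroSumEquiv_castSucc_last, zeroSumEquiv_last]

/-- The indicator of the tuples whose low frequencies sum to zero, so that `y = -x`. -/
def resonantCutoff (k : Fin q → ℤ) : ℂ := if ∑ i, k i = 0 then 1 else 0

theorem energyCutoff_eq (C₀ : ℝ) (z : ℤ × (Fin q → ℤ)) :
    energyCutoff C₀ z = resonantCutoff z.2 +
      MH C₀ (q + 1) (zeroSumEquiv q z).1 * MNZ (q + 1) (zeroSumEquiv q z).1 := by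
  rw [MNZ_zeroSumEquiv, MH_zeroSumEquiv, energyCutoff, resonantCutoff]
  by_cases h : ∑ i, z.2 i = 0
  · simp only [h, if_true, mul_zero, add_zero]
  · simp only [h, if_false, mul_one, zero_add]

theorem resonantCutoff_mul_energySym_three (s : ℕ) (z : ℤ × (Fin q → ℤ)) :
    resonantCutoff z.2 * energySym s 3 z = 0 := by
  unfold resonantCutoff
  split_ifs with h
  · simp [energySym, leadFactor, h]
  · exact zero_mul _

theorem resonantCutoff_mul_energySym_two (s : ℕ) (z : ℤ × (Fin q → ℤ)) :
    resonantCutoff z.2 * energySym s 2 z = resonantCutoff z.2 * (z.1 : ℂ) ^ (2 * (s + 1)) := by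
  unfold resonantCutoff
  split_ifs with h
  · have hy : (lastFreq z : ℂ) = -z.1 := by simp [lastFreq, h]
    have hlead : leadFactor s 2 ((∑ i, z.2 i : ℤ) : ℂ) = 1 := by simp [leadFactor]
    rw [energySym, hlead, I_mul_pow_mul_I_mul_pow, hy, mul_neg, neg_neg, ← sq, ← pow_mul, mul_one]
  · rw [zero_mul, zero_mul]

theorem MNR_zeroSumEquiv (C₀ lam : ℝ) (s : ℕ) {a b c d : ℕ} (hq : q + 1 = a + b + c + d)
    (z : ℤ × (Fin q → ℤ)) :
    MNR C₀ s (q + 1) lam a b c (zeroSumEquiv q z).1 =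
      MH C₀ (q + 1) (zeroSumEquiv q z).1 * MNZ (q + 1) (zeroSumEquiv q z).1 * lam *
        (a * (leadFactor s 3 ((∑ i, z.2 i : ℤ) : ℂ) * lowSym (derivOrder (a - 1) b c) z.2) +
          b * (leadFactor s 2 ((∑ i, z.2 i : ℤ) : ℂ) * lowSym (derivOrder a (b - 1) c) z.2)) := by
  have ha : (a : ℂ) * Dabc (q + 1) (a - 1) b c (zeroSumEquiv q z).1 =
      a * lowSym (derivOrder (a - 1) b c) z.2 := by
    obtain rfl | ha := Nat.eq_zero_or_pos a
    · rw [Nat.cast_zero, zero_mul, zero_mul]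
    · rw [Dabc_zeroSumEquiv (by omega)]
  have hb : (b : ℂ) * Dabc (q + 1) a (b - 1) c (zeroSumEquiv q z).1 =
      b * lowSym (derivOrder a (b - 1) c) z.2 := by
    obtain rfl | hb := Nat.eq_zero_or_pos b
    · rw [Nat.cast_zero, zero_mul, zero_mul]
    · rw [Dabc_zeroSumEquiv (by omega)]
  have h3 : ∀ σ, leadFactor s 3 σ = ((s : ℂ) - 3 / 2) * (Complex.I * σ) := fun σ => if_pos rfl
  have h2 : ∀ σ, leadFactor s 2 σ = 1 := fun σ => by simp [leadFactor]
  rw [MNR, ksum1_zeroSumEquiv, hb, h3, h2]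
  linear_combination (MH C₀ (q + 1) (zeroSumEquiv q z).1 * MNZ (q + 1) (zeroSumEquiv q z).1 * lam *
    (((s : ℂ) - 3 / 2) * (Complex.I * ((∑ i, z.2 i : ℤ) : ℂ)))) * ha

theorem energySym_combination_eq (C₀ lam : ℝ) (s : ℕ) {a b c d : ℕ} (hq : q + 1 = a + b + c + d)
    (z : ℤ × (Fin q → ℤ)) :
    lam * (a * (energyCutoff C₀ z * energySym s 3 z * lowSym (derivOrder (a - 1) b c) z.2) +
        b * (energyCutoff C₀ z * energySym s 2 z * lowSym (derivOrder a (b - 1) c) z.2)) =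
      lam * b * (resonantCutoff z.2 *
          ((z.1 : ℂ) ^ (2 * (s + 1)) * lowSym (derivOrder a (b - 1) c) z.2)) +
        (Complex.I * (z.1 : ℂ)) ^ (s + 1) * (Complex.I * (lastFreq z : ℂ)) ^ (s + 1) *
          MNR C₀ s (q + 1) lam a b c (zeroSumEquiv q z).1 := by
  have h3 := resonantCutoff_mul_energySym_three s z
  have h2 := resonantCutoff_mul_energySym_two s z
  rw [energyCutoff_eq, MNR_zeroSumEquiv C₀ lam s hq]
  rw [energySym] at h3 h2 ⊢
  rw [energySym]
  linear_combination lam * a * lowSym (derivOrder (a - 1) b c) z.2 * h3 +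
    lam * b * lowSym (derivOrder a (b - 1) c) z.2 * h2

/-- The sum over the resonant low frequencies: the Fourier expansion of the mean of a product. -/
noncomputable def resonantSum (μ : Fin q → ℕ) (u : ℤ → ℂ) : ℂ :=
  ∑' k : Fin q → ℤ, resonantCutoff k * (lowSym μ k * ∏ i, u (k i))

theorem norm_resonantCutoff_le_one (k : Fin q → ℤ) : ‖resonantCutoff k‖ ≤ 1 := by
  unfold resonantCutoff
  split_ifs <;> simp

theorem summable_norm_resonantCutoff_mul {μ : Fin q → ℕ} {n : ℕ} (hμ : ∀ i, μ i ≤ n) {u : ℤ → ℂ}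
    (hu : RapidDecay u) :
    Summable fun k : Fin q → ℤ => ‖resonantCutoff k * (lowSym μ k * ∏ i, u (k i))‖ := by
  have hprod := (hasSum_pi_prod (n := q) fun _ => (hu n).norm).summable
  refine hprod.of_nonneg_of_le (fun _ => norm_nonneg _) fun k => ?_
  calc _ ≤ 1 * ((∏ i, jap (k i) ^ n) * ∏ i, ‖u (k i)‖) :=
        norm_mul_le_of_le (norm_resonantCutoff_le_one k)
          (norm_mul_le_of_le (norm_lowSym_le hμ k) (norm_prod _ _).le)
    _ = _ := by rw [one_mul, Finset.prod_mul_distrib]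

theorem RapidDecay.summable_pow_mul_normSq {w : ℤ → ℂ} (hw : RapidDecay w) (s : ℕ) :
    Summable fun k : ℤ => (k : ℝ) ^ (2 * s) * ‖w k‖ ^ 2 := by
  refine (hw.summable_sq s).of_nonneg_of_le
    (fun k => mul_nonneg ((even_two_mul s).pow_nonneg _) (sq_nonneg _)) fun k => ?_
  rw [mul_pow, ← pow_mul, mul_comm s 2, ← (even_two_mul s).pow_abs]
  gcongr
  exact abs_le_jap k

theorem hasSum_resonantSum_mul {s n : ℕ} {μ : Fin q → ℕ} (hμ : ∀ i, μ i ≤ n) {u w : ℤ → ℂ}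
    (hu : RapidDecay u) (hw : RapidDecay w) (hconj : ∀ k, w (-k) = (starRingEnd ℂ) (w k)) :
    HasSum (fun z : ℤ × (Fin q → ℤ) => resonantCutoff z.2 * ((z.1 : ℂ) ^ (2 * s) * lowSym μ z.2) *
        coeffProd (fun _ => u) w w z)
      (resonantSum μ u * ((∑' k : ℤ, (k : ℝ) ^ (2 * s) * ‖w k‖ ^ 2 : ℝ) : ℂ)) := by
  have hnorm : Summable fun k : ℤ => ‖(((k : ℝ) ^ (2 * s) * ‖w k‖ ^ 2 : ℝ) : ℂ)‖ := by
    simpa only [Complex.norm_real] using (hw.summable_pow_mul_normSq s).norm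
  have hres := summable_norm_resonantCutoff_mul hμ hu
  rw [mul_comm (resonantSum μ u), Complex.ofReal_tsum, resonantSum,
    tsum_mul_tsum_of_summable_norm hnorm hres]
  convert! (summable_mul_of_summable_norm hnorm hres).hasSum using 2 with z
  unfold resonantCutoff
  split_ifs with h
  · have hy : lastFreq z = -z.1 := by simp [lastFreq, h]
    rw [coeffProd, hy, hconj, Complex.mul_conj, Complex.normSq_eq_norm_sq]
    push_cast
    ring
  · simp only [zero_mul, mul_zero]

theorem prod_fhat_tup_zeroSumEquiv (F H : ℝ → ℂ) (z : ℤ × (Fin q → ℤ)) :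
    ∏ i, fhat (tup (q + 1) F H i) ((zeroSumEquiv q z).1 i) =
      coeffProd (fun _ => fhat F) (fhat H) (fhat H) z := by
  have hlow : ∀ i : Fin q, tup (q + 1) F H i.castSucc.castSucc = F := fun i => if_pos i.isLt
  have hpen : tup (q + 1) F H (Fin.last q).castSucc = H := if_neg (lt_irrefl q)
  have hlast : tup (q + 1) F H (Fin.last (q + 1)) = H := if_neg (Nat.not_succ_lt_self)
  rw [Fin.prod_univ_castSucc, Fin.prod_univ_castSucc, zeroSumEquiv_last,
    zeroSumEquiv_castSucc_last, coeffProd, hpen, hlast]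
  simp only [hlow, zeroSumEquiv_castSucc_castSucc]
  ring

theorem Gam_add_resonantSum (C₀ lam : ℝ) (s : ℕ) {a b c d : ℕ} (hq : q + 1 = a + b + c + d)
    {F H : ℝ → ℂ} (hF : RapidDecay (fhat F)) (hH : RapidDecay (fhat H))
    (hconj : ∀ k, fhat H (-k) = (starRingEnd ℂ) (fhat H k)) :
    lam * b * (resonantSum (derivOrder a (b - 1) c : Fin q → ℕ) (fhat F) *
        (dxNormSq (s + 1) H : ℂ)) +
      Gam (q + 1) (fun k =>
          (Complex.I * (k (⟨q + 1 - 1, by omega⟩ : Fin (q + 1 + 1)) : ℂ)) ^ (s + 1)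
          * (Complex.I * (k (Fin.last (q + 1)) : ℂ)) ^ (s + 1)
          * MNR C₀ s (q + 1) lam a b c k) (tup (q + 1) F H) =
      lam * (a * energySum C₀ s 3 (derivOrder (a - 1) b c : Fin q → ℕ) (fhat F) (fhat H) +
        b * energySum C₀ s 2 (derivOrder a (b - 1) c : Fin q → ℕ) (fhat F) (fhat H)) := by
  have henergy : ∀ m ≤ 3, ∀ a b c : ℕ, Summable fun z : ℤ × (Fin q → ℤ) =>
      energyCutoff C₀ z * energySym s m z * lowSym (derivOrder a b c) z.2 *
        coeffProd (fun _ => fhat F) (fhat H) (fhat H) z := fun m hm a b c =>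
    (summable_and_norm_tsum_topCutoff_add_tsum_energyCutoff_le C₀ (fun _ => hF) hH hm
      (derivOrder_le_three a b c) 0).1
  have hcomb := (((henergy 3 le_rfl (a - 1) b c).hasSum.mul_left (a : ℂ)).add
    ((henergy 2 (by norm_num) a (b - 1) c).hasSum.mul_left (b : ℂ))).mul_left (lam : ℂ)
  have hres := (hasSum_resonantSum_mul (q := q) (s := s + 1) (derivOrder_le_three a (b - 1) c) hF hH
    hconj).mul_left ((lam : ℂ) * b)
  rw [← eq_sub_iff_add_eq', Gam, ← (zeroSumEquiv q).tsum_eq]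
  refine HasSum.tsum_eq ?_
  convert! hcomb.sub hres using 2 with z
  have hpen : (⟨q + 1 - 1, by omega⟩ : Fin (q + 1 + 1)) = (Fin.last q).castSucc := rfl
  rw [prod_fhat_tup_zeroSumEquiv, hpen, zeroSumEquiv_last, zeroSumEquiv_castSucc_last]
  linear_combination -(coeffProd (fun _ => fhat F) (fhat H) (fhat H) z) *
    energySym_combination_eq C₀ lam s hq z

end ZeroSum

/-! ### Fourier expansions -/

section FourierSeries

variable {F : ℝ → ℂ}

theorem norm_exp_I_mul_intCast_mul (k : ℤ) (x : ℝ) : ‖Complex.exp (Complex.I * k * x)‖ = 1 := by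
  have harg : Complex.I * k * x = ((k * x : ℝ) : ℂ) * Complex.I := by
    push_cast
    ring
  rw [harg, Complex.norm_exp_ofReal_mul_I]

theorem norm_fhat_le (k : ℤ) :
    ‖fhat F k‖ ≤ (2 * Real.pi)⁻¹ * ∫ x in (0 : ℝ)..(2 * Real.pi), ‖F x‖ := by
  have hexp : ∀ x : ℝ, ‖Complex.exp (-Complex.I * k * x)‖ = 1 := fun x => by
    simpa using norm_exp_I_mul_intCast_mul (-k) x
  rw [fhat, norm_mul, norm_inv, Complex.norm_real, Real.norm_of_nonneg Real.two_pi_pos.le]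
  gcongr
  refine (intervalIntegral.norm_integral_le_integral_norm Real.two_pi_pos.le).trans_eq ?_
  simp only [norm_mul, hexp, mul_one]

theorem fhat_neg_eq (F : ℝ → ℂ) (k : ℤ) :
    fhat F (-k) = (Complex.ofReal (2 * Real.pi))⁻¹ *
      ∫ x in (0 : ℝ)..(2 * Real.pi), Complex.exp (Complex.I * k * x) * F x := by
  simp only [fhat, Int.cast_neg, neg_mul_neg, mul_comm (F _)]

theorem fhat_of_hasDerivAt {F' : ℝ → ℂ} (hF : ∀ x, HasDerivAt F (F' x) x)
    (hF' : Continuous F') (hper : Function.Periodic F (2 * Real.pi)) (k : ℤ) :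
    fhat F' k = Complex.I * k * fhat F k := by
  have hexp : ∀ x : ℝ, HasDerivAt (fun x : ℝ => Complex.exp (-Complex.I * k * x))
      (-Complex.I * k * Complex.exp (-Complex.I * k * x)) x := fun x => by
    simpa [mul_comm] using ((hasDerivAt_id x).ofReal_comp.const_mul (-Complex.I * k : ℂ)).cexp
  have hparts := intervalIntegral.integral_mul_deriv_eq_deriv_mul (a := 0) (b := 2 * Real.pi)
    (fun x _ => hF x) (fun x _ => hexp x) (hF'.intervalIntegrable _ _)
    (Continuous.intervalIntegrable (by fun_prop) _ _)
  have hFper : F (2 * Real.pi) = F 0 := by simpa using hper 0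
  have hexp_per : Complex.exp (-Complex.I * k * ((2 * Real.pi : ℝ) : ℂ)) = 1 := by
    rw [← Complex.exp_int_mul_two_pi_mul_I (-k)]
    push_cast
    ring_nf
  simp only [hFper, hexp_per, Complex.ofReal_zero, mul_zero, Complex.exp_zero, sub_self, zero_sub,
    mul_left_comm (F _) (-Complex.I * k), intervalIntegral.integral_const_mul] at hparts
  rw [fhat, fhat]
  linear_combination (Complex.ofReal (2 * Real.pi))⁻¹ * hparts

theorem fourier_two_pi_coe_apply (k : ℤ) (x : ℝ) :
    fourier k (x : AddCircle (2 * Real.pi)) = Complex.exp (Complex.I * k * x) := by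
  have hpi : (Real.pi : ℂ) ≠ 0 := by exact_mod_cast Real.pi_ne_zero
  rw [fourier_coe_apply]
  congr 1
  push_cast
  field_simp

theorem fourierCoeff_lift_eq_fhat [Fact (0 < 2 * Real.pi)]
    (hper : Function.Periodic F (2 * Real.pi)) (k : ℤ) :
    fourierCoeff (hper.lift : AddCircle (2 * Real.pi) → ℂ) k = fhat F k := by
  rw [fourierCoeff_eq_intervalIntegral _ _ 0, fhat, zero_add, Complex.real_smul, one_div,
    Complex.ofReal_inv]
  congr 1
  refine intervalIntegral.integral_congr fun x _ => ?_
  simp only [fourier_two_pi_coe_apply, Function.Periodic.lift_coe, smul_eq_mul, Int.cast_neg,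
    mul_neg, neg_mul]
  exact mul_comm _ _

theorem hasSum_fourierSeries (hF : Continuous F) (hper : Function.Periodic F (2 * Real.pi))
    (hs : Summable fun k => ‖fhat F k‖) (x : ℝ) :
    HasSum (fun k : ℤ => fhat F k * Complex.exp (Complex.I * k * x)) (F x) := by
  have : Fact (0 < 2 * Real.pi) := ⟨Real.two_pi_pos⟩
  let G : C(AddCircle (2 * Real.pi), ℂ) := ⟨hper.lift, hF.quotient_liftOn' _⟩
  have hcoeff : ∀ k, fourierCoeff G k = fhat F k := fourierCoeff_lift_eq_fhat hper
  have hG := has_pointwise_sum_fourier_series_of_summable (f := G)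
    (hs.of_norm.congr fun k => (hcoeff k).symm) (x : AddCircle (2 * Real.pi))
  simp only [hcoeff, fourier_two_pi_coe_apply, smul_eq_mul] at hG
  exact hG

theorem hasSum_integral_prod {n : ℕ} {F : Fin n → ℝ → ℂ} {v : ℝ → ℂ}
    (hs : ∀ i, Summable fun k => ‖fhat (F i) k‖) (hF : ∀ i, Continuous (F i))
    (hper : ∀ i, Function.Periodic (F i) (2 * Real.pi)) (hv : Continuous v) :
    HasSum (fun k : Fin n → ℤ => (∏ i, fhat (F i) (k i)) * fhat v (-∑ i, k i))
      ((Complex.ofReal (2 * Real.pi))⁻¹ *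
        ∫ x in (0 : ℝ)..(2 * Real.pi), (∏ i, F i x) * v x) := by
  have hbound : Summable fun k : Fin n → ℤ => ∏ i, ‖fhat (F i) (k i)‖ :=
    (hasSum_pi_prod fun i => (hs i).norm).summable
  have hpointwise : ∀ x : ℝ, HasSum
      (fun k : Fin n → ℤ => ∏ i, fhat (F i) (k i) * Complex.exp (Complex.I * k i * x))
      (∏ i, F i x) := fun x => by
    simpa only [fun i => (hasSum_fourierSeries (hF i) (hper i) (hs i) x).tsum_eq] using
      hasSum_pi_prod (F := fun i (k : ℤ) => fhat (F i) k * Complex.exp (Complex.I * k * x))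
        fun i => by simpa only [norm_mul, norm_exp_I_mul_intCast_mul, mul_one] using hs i
  have hint := intervalIntegral.hasSum_integral_of_dominated_convergence
    (μ := MeasureTheory.volume) (a := 0) (b := 2 * Real.pi)
    (F := fun (k : Fin n → ℤ) x =>
      (∏ i, fhat (F i) (k i) * Complex.exp (Complex.I * k i * x)) * v x)
    (fun k x => (∏ i, ‖fhat (F i) (k i)‖) * ‖v x‖)
    (fun k => Continuous.aestronglyMeasurable (by fun_prop))
    (fun k => Filter.Eventually.of_forall fun x _ => by
      simp only [norm_mul, norm_prod, norm_exp_I_mul_intCast_mul, mul_one, le_refl])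
    (Filter.Eventually.of_forall fun x _ => hbound.mul_right _)
    (Continuous.intervalIntegrable (by simp only [tsum_mul_right]; fun_prop) _ _)
    (Filter.Eventually.of_forall fun x _ => (hpointwise x).mul_right _)
  refine (hint.mul_left (Complex.ofReal (2 * Real.pi))⁻¹).congr_fun fun k => ?_
  have hexp : ∀ x : ℝ, ∏ i, Complex.exp (Complex.I * k i * x) =
      Complex.exp (Complex.I * ((∑ i, k i : ℤ) : ℂ) * x) := fun x => by
    rw [← Complex.exp_sum, Int.cast_sum, Finset.mul_sum, Finset.sum_mul]
  simp only [fhat_neg_eq, Finset.prod_mul_distrib, hexp, mul_assoc (∏ i, fhat (F i) (k i)),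
    intervalIntegral.integral_const_mul]
  exact mul_left_comm _ _ _

end FourierSeries

theorem summable_inv_jap_sq : Summable fun k : ℤ => (jap k ^ 2)⁻¹ := by
  have hnat : Summable fun n : ℕ => (((n : ℝ) + 1) ^ 2)⁻¹ := by
    simpa using (summable_nat_add_iff 1).mpr (Real.summable_nat_pow_inv.mpr one_lt_two)
  refine Summable.of_nat_of_neg ?_ ?_ <;>
  · refine hnat.congr fun n => ?_
    simp [jap, add_comm]

theorem fhat_cF_sub {f g : ℝ → ℝ} (hf : Continuous f) (hg : Continuous g) :
    fhat (cF fun x => f x - g x) = fhat (cF f) - fhat (cF g) := by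
  have hint : ∀ (k : ℤ) {h : ℝ → ℝ}, Continuous h → IntervalIntegrable
      (fun x => cF h x * Complex.exp (-Complex.I * k * x)) MeasureTheory.volume 0 (2 * Real.pi) :=
    fun k _ hh =>
      ((Complex.continuous_ofReal.comp hh).mul (by fun_prop)).intervalIntegrable _ _
  have hsub : ∀ x, cF (fun x => f x - g x) x = cF f x - cF g x := fun x => Complex.ofReal_sub _ _
  funext k
  simp only [Pi.sub_apply, fhat, ← mul_sub, hsub, sub_mul]
  rw [intervalIntegral.integral_sub (hint k hf) (hint k hg)]

theorem fhat_cF_neg (f : ℝ → ℝ) (k : ℤ) :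
    fhat (cF f) (-k) = (starRingEnd ℂ) (fhat (cF f) k) := by
  rw [fhat, fhat, map_mul, map_inv₀, Complex.conj_ofReal, intervalIntegral, intervalIntegral,
    map_sub, ← integral_conj, ← integral_conj]
  congr 3 <;>
  · funext x
    simp [cF, ← Complex.exp_conj]

theorem fhat_cF_one (k : ℤ) : fhat (cF fun _ => 1) k = if k = 0 then 1 else 0 := by
  have hzero : fhat (fun _ => 0) k = 0 := by simp [fhat]
  have hderiv := fhat_of_hasDerivAt (F := cF fun _ => 1) (F' := fun _ => 0)
    (fun x => hasDerivAt_const _ _) continuous_const (fun x => rfl) k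
  rw [hzero, eq_comm, mul_eq_zero] at hderiv
  split_ifs with hk
  · have htwo_pi : (Complex.ofReal (2 * Real.pi)) ≠ 0 :=
      Complex.ofReal_ne_zero.mpr Real.two_pi_pos.ne'
    simpa [fhat, cF, hk] using inv_mul_cancel₀ htwo_pi
  · exact hderiv.resolve_left (mul_ne_zero Complex.I_ne_zero (Int.cast_ne_zero.mpr hk))

theorem periodic_iteratedDeriv {f : ℝ → ℝ} {T : ℝ} (hf : Function.Periodic f T) (n : ℕ) :
    Function.Periodic (iteratedDeriv n f) T := by
  induction n with
  | zero => simpa using hf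
  | succ n ih =>
    intro x
    rw [iteratedDeriv_succ, ← deriv_comp_add_const]
    exact congrArg (deriv · x) (funext ih)

section SmoothPeriodic

variable {f : ℝ → ℝ} (hf : ContDiff ℝ (⊤ : ℕ∞) f) (hper : Function.Periodic f (2 * Real.pi))
include hf

theorem contDiff_iteratedDeriv (n : ℕ) : ContDiff ℝ (⊤ : ℕ∞) (iteratedDeriv n f) := by
  rw [iteratedDeriv_eq_iterate]
  exact hf.iterate_deriv n

theorem continuous_cF_iteratedDeriv (n : ℕ) : Continuous (cF (iteratedDeriv n f)) :=
  Complex.continuous_ofReal.comp (contDiff_iteratedDeriv hf n).continuous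

theorem hasDerivAt_cF_iteratedDeriv (n : ℕ) (x : ℝ) :
    HasDerivAt (cF (iteratedDeriv n f)) (cF (iteratedDeriv (n + 1) f) x) x := by
  have hderiv := ((contDiff_iteratedDeriv hf n).differentiable (by simp) x).hasDerivAt
  rw [← iteratedDeriv_succ] at hderiv
  exact hderiv.ofReal_comp

include hper

theorem fhat_iteratedDeriv (n : ℕ) (k : ℤ) :
    fhat (cF (iteratedDeriv n f)) k = (Complex.I * k) ^ n * fhat (cF f) k := by
  induction n with
  | zero => simp
  | succ n ih =>
    rw [fhat_of_hasDerivAt (hasDerivAt_cF_iteratedDeriv hf n)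
      (continuous_cF_iteratedDeriv hf (n + 1))
      (fun x => congrArg Complex.ofReal (periodic_iteratedDeriv hper n x)), ih, pow_succ',
      mul_assoc (Complex.I * (k : ℂ))]

theorem rapidDecay_fhat : RapidDecay (fhat (cF f)) := by
  obtain ⟨B, hB⟩ : ∃ B : ℕ → ℝ, ∀ m (k : ℤ), |(k : ℝ)| ^ m * ‖fhat (cF f) k‖ ≤ B m := by
    refine ⟨fun m => _, fun m k => le_of_eq_of_le ?_
      (norm_fhat_le (F := cF (iteratedDeriv m f)) k)⟩
    rw [fhat_iteratedDeriv hf hper, norm_mul, norm_pow, norm_I_mul_intCast]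
  refine fun n => (summable_inv_jap_sq.mul_left (2 ^ (n + 1) * (B 0 + B (n + 2)))).of_nonneg_of_le
    (jap_pow_mul_norm_nonneg n _) fun k => ?_
  have hjap : jap k ^ (n + 2) ≤ 2 ^ (n + 1) * (1 + |(k : ℝ)| ^ (n + 2)) := by
    simpa [jap] using add_pow_le zero_le_one (abs_nonneg (k : ℝ)) (n + 2)
  rw [← div_eq_mul_inv, le_div_iff₀ (pow_pos (jap_pos k) 2)]
  calc jap k ^ n * ‖fhat (cF f) k‖ * jap k ^ 2 = jap k ^ (n + 2) * ‖fhat (cF f) k‖ := by ring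
    _ ≤ 2 ^ (n + 1) * (1 + |(k : ℝ)| ^ (n + 2)) * ‖fhat (cF f) k‖ := by gcongr
    _ = 2 ^ (n + 1) * (|(k : ℝ)| ^ 0 * ‖fhat (cF f) k‖ +
          |(k : ℝ)| ^ (n + 2) * ‖fhat (cF f) k‖) := by ring
    _ ≤ _ := by gcongr <;> exact hB _ _

theorem hasSum_integral_prod_iteratedDeriv {n : ℕ} (μ : Fin n → ℕ) {v : ℝ → ℝ}
    (hv : Continuous v) :
    HasSum (fun k : Fin n → ℤ => lowSym μ k * (∏ i, fhat (cF f) (k i)) *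
        fhat (cF v) (-∑ i, k i))
      (((2 * Real.pi)⁻¹ * ∫ x in (0 : ℝ)..(2 * Real.pi),
        (∏ i, iteratedDeriv (μ i) f x) * v x : ℝ) : ℂ) := by
  have hsummable : ∀ m, Summable fun k => ‖fhat (cF (iteratedDeriv m f)) k‖ := fun m => by
    simpa using rapidDecay_fhat (contDiff_iteratedDeriv hf m) (periodic_iteratedDeriv hper m) 0
  convert! hasSum_integral_prod (F := fun i => cF (iteratedDeriv (μ i) f)) (v := cF v)
    (fun i => hsummable (μ i)) (fun i => continuous_cF_iteratedDeriv hf (μ i))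
    (fun i x => congrArg Complex.ofReal (periodic_iteratedDeriv hper (μ i) x))
    (Complex.continuous_ofReal.comp hv) using 1
  · funext k
    simp only [fhat_iteratedDeriv hf hper, Finset.prod_mul_distrib, lowSym]
  · rw [Complex.ofReal_mul, Complex.ofReal_inv, ← intervalIntegral.integral_ofReal]
    simp only [cF, Complex.ofReal_mul, Complex.ofReal_prod]

theorem resonantSum_fhat_eq_integral {q : ℕ} (μ : Fin q → ℕ) :
    resonantSum μ (fhat (cF f)) = (((2 * Real.pi)⁻¹ *
      ∫ x in (0 : ℝ)..(2 * Real.pi), ∏ i, iteratedDeriv (μ i) f x : ℝ) : ℂ) := by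
  have hsum := hasSum_integral_prod_iteratedDeriv hf hper μ (v := fun _ => 1) continuous_const
  simp only [mul_one, fhat_cF_one, neg_eq_zero] at hsum
  rw [resonantSum, ← hsum.tsum_eq]
  exact tsum_congr fun k => mul_comm _ _

end SmoothPeriodic

theorem prod_derivOrder {M : Type*} [CommMonoid M] (G : ℕ → M) {a b c d n : ℕ}
    (hn : n = a + b + c + d) :
    ∏ i : Fin n, G (derivOrder a b c i) = G 3 ^ a * G 2 ^ b * G 1 ^ c * G 0 ^ d := by
  subst hn
  simp [Fin.prod_univ_add, derivOrder, add_assoc]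

theorem NjF_eq_prod (lam : ℝ) {a b c d n : ℕ} (hn : n = a + b + c + d) (f : ℝ → ℝ) (x : ℝ) :
    NjF lam a b c d f x = lam * ∏ i : Fin n, iteratedDeriv (derivOrder a b c i) f x := by
  rw [prod_derivOrder (fun m => iteratedDeriv m f x) hn, NjF, iteratedDeriv_one,
    iteratedDeriv_zero]
  ring

theorem PNj_eq_resonantSum (lam : ℝ) {a b c d q : ℕ} (hq : q + 1 = a + b + c + d) {f : ℝ → ℝ}
    (hf : ContDiff ℝ (⊤ : ℕ∞) f) (hper : Function.Periodic f (2 * Real.pi)) :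
    (PNj lam a b c d f : ℂ) =
      lam * b * resonantSum (derivOrder a (b - 1) c : Fin q → ℕ) (fhat (cF f)) := by
  obtain rfl | hb := Nat.eq_zero_or_pos b
  · simp [PNj]
  have hprod : ∀ x, ∏ i : Fin q, iteratedDeriv (derivOrder a (b - 1) c i) f x =
      iteratedDeriv 3 f x ^ a * iteratedDeriv 2 f x ^ (b - 1) * deriv f x ^ c * f x ^ d := by
    intro x
    rw [prod_derivOrder (fun m => iteratedDeriv m f x) (d := d) (by omega), iteratedDeriv_one,
      iteratedDeriv_zero]
  rw [resonantSum_fhat_eq_integral hf hper, PNj]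
  simp only [hprod]
  push_cast
  ring

theorem neg_one_pow_mul_I_mul_neg_pow (s : ℕ) (y : ℂ) :
    (-1) ^ s * (Complex.I * -y) ^ (2 * s) = y ^ (2 * s) := by
  have hsq : -1 * (Complex.I * -y) ^ 2 = y ^ 2 := by
    rw [mul_pow, Complex.I_sq, neg_sq, neg_one_mul, neg_one_mul, neg_neg]
  rw [pow_mul, pow_mul, ← mul_pow, hsq]

theorem pairing_eq_tsum_diffSummand (s : ℕ) (lam : ℝ) {a b c d q : ℕ}
    (hq : q + 1 = a + b + c + d) {f g : ℝ → ℝ} (hf : ContDiff ℝ (⊤ : ℕ∞) f)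
    (hfp : Function.Periodic f (2 * Real.pi)) (hg : ContDiff ℝ (⊤ : ℕ∞) g)
    (hgp : Function.Periodic g (2 * Real.pi)) :
    (((-1 : ℝ) ^ s * ((2 * Real.pi)⁻¹ * ∫ x in (0 : ℝ)..(2 * Real.pi),
        (NjF lam a b c d f x - NjF lam a b c d g x) *
          iteratedDeriv (2 * s) (fun y => f y - g y) x) : ℝ) : ℂ) =
      lam * ∑' k : Fin (q + 1) → ℤ, diffSummand s (derivOrder a b c) (fhat (cF f))
        (fhat (cF g)) k := by
  have hh : ContDiff ℝ (⊤ : ℕ∞) fun y => f y - g y := hf.sub hg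
  have hv := (contDiff_iteratedDeriv hh (2 * s)).continuous
  have hfhat := fhat_iteratedDeriv hh (hfp.sub hgp) (2 * s)
  set v := iteratedDeriv (2 * s) fun y => f y - g y
  have hint : ∀ {F : ℝ → ℝ}, ContDiff ℝ (⊤ : ℕ∞) F → IntervalIntegrable
      (fun x => (∏ i : Fin (q + 1), iteratedDeriv (derivOrder a b c i) F x) * v x)
      MeasureTheory.volume 0 (2 * Real.pi) := fun hF =>
    ((continuous_finsetProd _ fun i _ => (contDiff_iteratedDeriv hF _).continuous).mul
      hv).intervalIntegrable _ _
  have hsum := ((hasSum_integral_prod_iteratedDeriv hf hfp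
    (derivOrder a b c : Fin (q + 1) → ℕ) hv).sub
      (hasSum_integral_prod_iteratedDeriv hg hgp (derivOrder a b c) hv)).mul_left ((-1 : ℂ) ^ s)
  have htsum : ∑' k, diffSummand s (derivOrder a b c : Fin (q + 1) → ℕ) (fhat (cF f))
      (fhat (cF g)) k = _ := (tsum_congr fun k => ?_).trans hsum.tsum_eq
  · rw [htsum]
    simp only [NjF_eq_prod lam hq, ← mul_sub, sub_mul, mul_assoc,
      intervalIntegral.integral_const_mul]
    rw [intervalIntegral.integral_sub (hint hf) (hint hg)]
    push_cast
    ring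
  · rw [diffSummand, ← fhat_cF_sub hf.continuous hg.continuous, hfhat,
      ← neg_one_pow_mul_I_mul_neg_pow, Int.cast_neg]
    ring

/-! ### Sobolev norms -/

section Sobolev

theorem jap_sq_le (k : ℤ) : jap k ^ 2 ≤ 2 * (1 + (k : ℝ) ^ 2) := by
  simpa [jap, one_add_one_eq_two] using add_pow_le zero_le_one (abs_nonneg (k : ℝ)) 2

theorem one_add_sq_le_jap_sq (k : ℤ) : 1 + (k : ℝ) ^ 2 ≤ jap k ^ 2 := by
  rw [jap, ← sq_abs (k : ℝ)]
  linarith [abs_nonneg (k : ℝ)]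

theorem hsNormC_nonneg (n : ℕ) (F : ℝ → ℂ) : 0 ≤ hsNormC n F := Real.sqrt_nonneg _

variable {F : ℝ → ℂ} (hF : RapidDecay (fhat F))
include hF

theorem summable_hsNormC (n : ℕ) :
    Summable fun k : ℤ => (1 + (k : ℝ) ^ 2) ^ n * ‖fhat F k‖ ^ 2 := by
  refine (hF.summable_sq n).of_nonneg_of_le (fun k => by positivity) fun k => ?_
  rw [mul_pow, pow_right_comm]
  gcongr
  exact one_add_sq_le_jap_sq k

theorem hsNormC_mono {m n : ℕ} (h : m ≤ n) : hsNormC m F ≤ hsNormC n F := by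
  refine Real.sqrt_le_sqrt ((summable_hsNormC hF m).tsum_le_tsum (fun k => ?_)
    (summable_hsNormC hF n))
  gcongr
  exact le_add_of_nonneg_right (sq_nonneg _)

theorem ellTwo_fhat_le (n : ℕ) : ellTwo n (fhat F) ≤ √(2 ^ n) * hsNormC n F := by
  rw [hsNormC, ← Real.sqrt_mul (by positivity), ← tsum_mul_left]
  refine Real.sqrt_le_sqrt ((hF.summable_sq n).tsum_le_tsum (fun k => ?_)
    ((summable_hsNormC hF n).mul_left _))
  rw [mul_pow, pow_right_comm, ← mul_assoc, ← mul_pow]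
  gcongr
  exact jap_sq_le k

/-- The constant in the embedding of `H^(n+1)` into the space of functions whose Fourier
coefficients are summable with weight `jap ^ n`. -/
noncomputable def embeddingConst (n : ℕ) : ℝ := √(∑' k : ℤ, (jap k ^ 2)⁻¹) * √(2 ^ (n + 1))

omit hF in
theorem embeddingConst_nonneg (n : ℕ) : 0 ≤ embeddingConst n :=
  mul_nonneg (Real.sqrt_nonneg _) (Real.sqrt_nonneg _)

theorem ellOne_fhat_le (n : ℕ) : ellOne n (fhat F) ≤ embeddingConst n * hsNormC (n + 1) F := by
  have hcs := (summable_mul_and_tsum_mul_le_sqrt (A := fun k => (jap k)⁻¹)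
    (B := fun k => jap k ^ (n + 1) * ‖fhat F k‖) (fun k => inv_nonneg.mpr (jap_pos k).le)
    (jap_pow_mul_norm_nonneg (n + 1) _) (by simpa only [inv_pow] using summable_inv_jap_sq)
    (hF.summable_sq (n + 1))).2
  have hcancel : ∀ k, (jap k)⁻¹ * (jap k ^ (n + 1) * ‖fhat F k‖) = jap k ^ n * ‖fhat F k‖ :=
    fun k => by rw [pow_succ' (jap k), mul_assoc, inv_mul_cancel_left₀ (jap_pos k).ne']
  simp only [hcancel, inv_pow] at hcs
  rw [embeddingConst, mul_assoc]
  exact hcs.trans (mul_le_mul_of_nonneg_left (ellTwo_fhat_le hF (n + 1)) (Real.sqrt_nonneg _))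

end Sobolev

section ErrorBound

variable {f g h : ℝ → ℂ}

/-- The constant in the estimate of `errorBound` by Sobolev norms. -/
noncomputable def errorConst (s q : ℕ) : ℝ :=
  √(2 ^ s) ^ 2 * embeddingConst 7 ^ q +
    √(2 ^ (s + 3)) * √(2 ^ s) * (embeddingConst 3 * embeddingConst 3 ^ (q - 1))

theorem errorConst_nonneg (s q : ℕ) : 0 ≤ errorConst s q := by
  have h3 := embeddingConst_nonneg 3
  have h7 := embeddingConst_nonneg 7
  unfold errorConst
  positivity

theorem errorBound_fhat_le (s q : ℕ) (hf : RapidDecay (fhat f)) (hg : RapidDecay (fhat g))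
    (hh : fhat h = fhat f - fhat g) :
    errorBound s q (fhat f) (fhat g) ≤ errorConst s q *
      (hsNormC s h ^ 2 * hsNormC 8 f ^ q +
        hsNormC s h * hsNormC 4 h * hsNormC (s + 3) g * (hsNormC 4 f + hsNormC 4 g) ^ (q - 1)) := by
  have hR : RapidDecay (fhat h) := hh ▸ hf.sub hg
  have hlow : ellOne 3 (fhat f) + ellOne 3 (fhat g) ≤
      embeddingConst 3 * (hsNormC 4 f + hsNormC 4 g) := by
    rw [mul_add]
    exact add_le_add (ellOne_fhat_le hf 3) (ellOne_fhat_le hg 3)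
  have hlow_nonneg := add_nonneg (ellOne_nonneg 3 (fhat f)) (ellOne_nonneg 3 (fhat g))
  have hone_f := ellOne_nonneg 7 (fhat f)
  have hone_h := ellOne_nonneg 3 (fhat h)
  have htwo_h := ellTwo_nonneg s (fhat h)
  have hN_g := hsNormC_nonneg (s + 3) g
  have hN_h := hsNormC_nonneg s h
  have hN_h4 := hsNormC_nonneg 4 h
  have hN_f := hsNormC_nonneg 8 f
  have hN_fg := add_nonneg (hsNormC_nonneg 4 f) (hsNormC_nonneg 4 g)
  have h3 := embeddingConst_nonneg 3
  have h7 := embeddingConst_nonneg 7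
  rw [errorBound, ← hh]
  calc _ ≤ (√(2 ^ s) * hsNormC s h) ^ 2 * (embeddingConst 7 * hsNormC 8 f) ^ q +
        √(2 ^ (s + 3)) * hsNormC (s + 3) g * (√(2 ^ s) * hsNormC s h) *
          (embeddingConst 3 * hsNormC 4 h *
            (embeddingConst 3 * (hsNormC 4 f + hsNormC 4 g)) ^ (q - 1)) := by
        gcongr
        · exact ellTwo_fhat_le hR s
        · exact ellOne_fhat_le hf 7
        · exact ellTwo_fhat_le hg (s + 3)
        · exact ellTwo_fhat_le hR s
        · exact ellOne_fhat_le hR 3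
    _ = √(2 ^ s) ^ 2 * embeddingConst 7 ^ q * (hsNormC s h ^ 2 * hsNormC 8 f ^ q) +
        √(2 ^ (s + 3)) * √(2 ^ s) * (embeddingConst 3 * embeddingConst 3 ^ (q - 1)) *
          (hsNormC s h * hsNormC 4 h * hsNormC (s + 3) g *
            (hsNormC 4 f + hsNormC 4 g) ^ (q - 1)) := by
        rw [mul_pow, mul_pow, mul_pow]
        ring
    _ ≤ _ := by
        rw [errorConst, add_mul]
        gcongr
        · exact le_add_of_nonneg_right (by positivity)
        · exact le_add_of_nonneg_left (by positivity)

theorem mul_pow_le_add_sq {X Y Q R : ℝ} (hQ : 0 ≤ Q) (hQR : Q ≤ R) {q : ℕ} (hq : 2 ≤ q) :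
    X * Y * Q ^ (q - 1) ≤ X ^ 2 * R ^ q + Y ^ 2 * Q ^ (q - 2) := by
  obtain ⟨r, rfl⟩ := Nat.exists_eq_add_of_le' hq
  have hyoung : X * Q * Y ≤ (X * Q) ^ 2 + Y ^ 2 := by
    linarith [two_mul_le_add_sq (X * Q) Y, sq_nonneg (X * Q - Y), sq_nonneg (X * Q + Y)]
  calc X * Y * Q ^ (r + 1) = X * Q * Y * Q ^ r := by ring
    _ ≤ ((X * Q) ^ 2 + Y ^ 2) * Q ^ r := by gcongr
    _ = X ^ 2 * Q ^ (r + 2) + Y ^ 2 * Q ^ r := by ring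
    _ ≤ X ^ 2 * R ^ (r + 2) + Y ^ 2 * Q ^ r := by gcongr

theorem hsNormC_mixed_product_le (s : ℕ) {p : ℕ} (hp : 3 ≤ p) (hf : RapidDecay (fhat f))
    (hg : RapidDecay (fhat g)) (hh : RapidDecay (fhat h)) :
    hsNormC s h * hsNormC 4 h * hsNormC (s + 3) g *
        (hsNormC 4 f + hsNormC 4 g) ^ (p - 2) ≤
      hsNormC s h ^ 2 * (hsNormC 8 f + hsNormC 8 g) ^ (p - 1) +
        hsNormC 7 h ^ 2 * hsNormC (s + 3) g ^ 2 * (hsNormC 7 f + hsNormC 7 g) ^ (p - 3) := by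
  have hN_h := hsNormC_nonneg s h
  have hN_g := hsNormC_nonneg (s + 3) g
  have hN_h7 := hsNormC_nonneg 7 h
  have hN_low := add_nonneg (hsNormC_nonneg 4 f) (hsNormC_nonneg 4 g)
  have hlow : hsNormC 4 f + hsNormC 4 g ≤ hsNormC 7 f + hsNormC 7 g :=
    add_le_add (hsNormC_mono hf (by norm_num)) (hsNormC_mono hg (by norm_num))
  have hhigh : hsNormC 7 f + hsNormC 7 g ≤ hsNormC 8 f + hsNormC 8 g :=
    add_le_add (hsNormC_mono hf (by norm_num)) (hsNormC_mono hg (by norm_num))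
  calc
    _ ≤ hsNormC s h * hsNormC 7 h * hsNormC (s + 3) g *
          (hsNormC 7 f + hsNormC 7 g) ^ (p - 2) := by
        gcongr
        exact hsNormC_mono hh (by norm_num)
    _ = hsNormC s h * (hsNormC 7 h * hsNormC (s + 3) g) *
          (hsNormC 7 f + hsNormC 7 g) ^ (p - 1 - 1) := by rw [mul_assoc (hsNormC s h)]; rfl
    _ ≤ hsNormC s h ^ 2 * (hsNormC 8 f + hsNormC 8 g) ^ (p - 1) +
          (hsNormC 7 h * hsNormC (s + 3) g) ^ 2 * (hsNormC 7 f + hsNormC 7 g) ^ (p - 1 - 2) :=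
        mul_pow_le_add_sq (hN_low.trans hlow) hhigh (by omega)
    _ = _ := by
        rw [mul_pow]
        rfl

theorem sobolev_product_le (s : ℕ) {p : ℕ} (hp : 3 ≤ p) (hf : RapidDecay (fhat f))
    (hg : RapidDecay (fhat g)) (hh : RapidDecay (fhat h)) :
    hsNormC s h ^ 2 * hsNormC 8 f ^ (p - 1) +
        hsNormC s h * hsNormC 4 h * hsNormC (s + 3) g *
          (hsNormC 4 f + hsNormC 4 g) ^ (p - 2) ≤
      2 * (hsNormC s h ^ 2 * (hsNormC 8 f + hsNormC 8 g) ^ (p - 1) +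
        hsNormC 7 h ^ 2 * (hsNormC s f + hsNormC s g) ^ 2 *
          (hsNormC 7 f + hsNormC 7 g) ^ (p - 3) +
        hsNormC 7 h ^ 2 * hsNormC (s + 3) g ^ 2 * (hsNormC 7 f + hsNormC 7 g) ^ (p - 3)) := by
  have hN_f8 := hsNormC_nonneg 8 f
  have hN_g8 := hsNormC_nonneg 8 g
  have hN_mid := add_nonneg (hsNormC_nonneg 7 f) (hsNormC_nonneg 7 g)
  have hfirst : hsNormC s h ^ 2 * hsNormC 8 f ^ (p - 1) ≤
      hsNormC s h ^ 2 * (hsNormC 8 f + hsNormC 8 g) ^ (p - 1) := by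
    gcongr
    exact le_add_of_nonneg_right hN_g8
  have hsecond := hsNormC_mixed_product_le s hp hf hg hh
  have hthird : 0 ≤ hsNormC 7 h ^ 2 * (hsNormC s f + hsNormC s g) ^ 2 *
      (hsNormC 7 f + hsNormC 7 g) ^ (p - 3) := by positivity
  have hfourth : 0 ≤ hsNormC 7 h ^ 2 * hsNormC (s + 3) g ^ 2 *
      (hsNormC 7 f + hsNormC 7 g) ^ (p - 3) := by positivity
  linarith

end ErrorBound

/-! ### The modified energy estimate -/

/-- The pairing of `N(f) - N(g)` with `(-1)^s ∂^{2s}(f - g)`, corrected by the resonant and the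
non-resonant part of the modified energy. -/
noncomputable def modifiedPairing (C₀ : ℝ) (s p : ℕ) (lam : ℝ) (a b c d : ℕ) (f g : ℝ → ℝ) : ℂ :=
  (((-1 : ℝ) ^ s * ((2 * Real.pi)⁻¹ * ∫ x in (0 : ℝ)..(2 * Real.pi),
      (NjF lam a b c d f x - NjF lam a b c d g x) *
        iteratedDeriv (2 * s) (fun y => f y - g y) x) : ℝ) : ℂ) +
    ((PNj lam a b c d f * dxNormSq (s + 1) (cF fun x => f x - g x) : ℝ) : ℂ) +
    Gam p (fun k =>
        (Complex.I * (k (⟨p - 1, by omega⟩ : Fin (p + 1)) : ℂ)) ^ (s + 1) *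
          (Complex.I * (k (Fin.last p) : ℂ)) ^ (s + 1) * MNR C₀ s p lam a b c k)
      (tup p (cF f) (cF fun x => f x - g x))

section ModifiedEnergy

variable {f g : ℝ → ℝ} (hf : ContDiff ℝ (⊤ : ℕ∞) f) (hfp : Function.Periodic f (2 * Real.pi))
  (hg : ContDiff ℝ (⊤ : ℕ∞) g) (hgp : Function.Periodic g (2 * Real.pi))
include hf hfp hg hgp

theorem modifiedPairing_eq (C₀ : ℝ) (s : ℕ) (lam : ℝ) {a b c d q : ℕ}
    (hq : q + 1 = a + b + c + d) :
    modifiedPairing C₀ s (q + 1) lam a b c d f g =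
      lam * (∑' k : Fin (q + 1) → ℤ,
          diffSummand s (derivOrder a b c) (fhat (cF f)) (fhat (cF g)) k +
        (a * energySum C₀ s 3 (derivOrder (a - 1) b c : Fin q → ℕ) (fhat (cF f))
            (fhat (cF f) - fhat (cF g)) +
          b * energySum C₀ s 2 (derivOrder a (b - 1) c : Fin q → ℕ) (fhat (cF f))
            (fhat (cF f) - fhat (cF g)))) := by
  have hh := rapidDecay_fhat (hf.sub hg) (hfp.sub hgp)
  rw [← fhat_cF_sub hf.continuous hg.continuous, mul_add,
    ← Gam_add_resonantSum C₀ lam s hq (rapidDecay_fhat hf hfp) hh (fhat_cF_neg _),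
    ← pairing_eq_tsum_diffSummand s lam hq hf hfp hg hgp, modifiedPairing, Complex.ofReal_mul,
    Complex.ofReal_mul (PNj _ _ _ _ _ _), PNj_eq_resonantSum lam hq hf hfp,
    mul_assoc (_ * _) (resonantSum _ _), ← add_assoc]

theorem norm_modifiedPairing_le (C₀ : ℝ) (s : ℕ) (lam : ℝ) {a b c d q : ℕ}
    (hq : q + 1 = a + b + c + d) :
    ‖modifiedPairing C₀ s (q + 1) lam a b c d f g‖ ≤
      |lam| * (diffConst C₀ s q * errorBound s q (fhat (cF f)) (fhat (cF g))) := by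
  rw [modifiedPairing_eq hf hfp hg hgp C₀ s lam hq, norm_mul, Complex.norm_real, Real.norm_eq_abs]
  exact mul_le_mul_of_nonneg_left (norm_tsum_diffSummand_derivOrder_add_le hq C₀ s
    (rapidDecay_fhat hf hfp) (rapidDecay_fhat hg hgp)) (abs_nonneg lam)

end ModifiedEnergy

theorem multi_est_general (s : ℕ) (lam : ℝ) (a b c d p : ℕ) (hpdef : p = a + b + c + d)
    (hp : 2 ≤ p) (C₀ : ℝ) :
    ∃ C : ℝ, 0 < C ∧ ∀ f g : ℝ → ℝ,
      ContDiff ℝ (⊤ : ℕ∞) f → Function.Periodic f (2 * Real.pi) →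
      ContDiff ℝ (⊤ : ℕ∞) g → Function.Periodic g (2 * Real.pi) →
      ‖modifiedPairing C₀ s p lam a b c d f g‖ ≤
        C * (hsNormC s (cF fun x => f x - g x) ^ 2 * hsNormC 8 (cF f) ^ (p - 1) +
          hsNormC s (cF fun x => f x - g x) * hsNormC 4 (cF fun x => f x - g x) *
            hsNormC (s + 3) (cF g) * (hsNormC 4 (cF f) + hsNormC 4 (cF g)) ^ (p - 2)) := by
  obtain ⟨q, rfl⟩ : ∃ q, p = q + 1 := ⟨p - 1, by omega⟩
  have hdiff := diffConst_nonneg C₀ s q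
  have herror := errorConst_nonneg s q
  refine ⟨|lam| * (diffConst C₀ s q * errorConst s q) + 1, by positivity,
    fun f g hf hfp hg hgp => ?_⟩
  have hbound := errorBound_fhat_le s q (rapidDecay_fhat hf hfp) (rapidDecay_fhat hg hgp)
    (fhat_cF_sub hf.continuous hg.continuous)
  set S := hsNormC s (cF fun x => f x - g x) ^ 2 * hsNormC 8 (cF f) ^ q + _
  have hS : 0 ≤ S := add_nonneg
    (mul_nonneg (sq_nonneg _) (pow_nonneg (hsNormC_nonneg 8 _) _))
    (mul_nonneg (mul_nonneg (mul_nonneg (hsNormC_nonneg s _) (hsNormC_nonneg 4 _))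
      (hsNormC_nonneg (s + 3) _))
      (pow_nonneg (add_nonneg (hsNormC_nonneg 4 _) (hsNormC_nonneg 4 _)) _))
  calc ‖modifiedPairing C₀ s (q + 1) lam a b c d f g‖
      ≤ |lam| * (diffConst C₀ s q * (errorConst s q * S)) :=
        (norm_modifiedPairing_le hf hfp hg hgp C₀ s lam hpdef).trans (by gcongr)
    _ = |lam| * (diffConst C₀ s q * errorConst s q) * S := by ring
    _ ≤ (|lam| * (diffConst C₀ s q * errorConst s q) + 1) * S :=
        mul_le_mul_of_nonneg_right (le_add_of_nonneg_right zero_le_one) hS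

/-- **Key modified-energy estimate (Proposition multi_est).** For `s ≥ 7`, `p_j ≥ 3`:
`|(−1)^s(N_j(f)−N_j(g), ∂_x^{2s}(f−g))_{L²} + P_{N_j}(f)‖∂_x^{s+1}(f−g)‖_{L²}²
  + Γ^{(p_j)}((ik_{p_j})^{s+1}(ik_{p_j+1})^{s+1}M_{NR,j}; f,…,f,f−g,f−g)|
≲ ‖f−g‖_{H^s}²(‖f‖_{H⁸}+‖g‖_{H⁸})^{p_j−1}
  + ‖f−g‖_{H⁷}²(‖f‖_{H^s}+‖g‖_{H^s})²(‖f‖_{H⁷}+‖g‖_{H⁷})^{p_j−3}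
  + ‖f−g‖_{H⁷}²‖g‖_{H^{s+3}}²(‖f‖_{H⁷}+‖g‖_{H⁷})^{p_j−3}`. -/
theorem multi_est (s : ℕ) (hs : 7 ≤ s) (lam : ℝ) (a b c d : ℕ) (p : ℕ)
    (hpdef : p = a + b + c + d) (hp3 : 3 ≤ p) (C₀ : ℝ) (hC₀ : 0 < C₀) :
    ∃ C : ℝ, 0 < C ∧ ∀ f g : ℝ → ℝ,
      ContDiff ℝ (⊤ : ℕ∞) f → Function.Periodic f (2 * Real.pi) →
      ContDiff ℝ (⊤ : ℕ∞) g → Function.Periodic g (2 * Real.pi) →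
      ‖((((-1 : ℝ)) ^ s * ((2 * Real.pi)⁻¹ *
            ∫ x in (0:ℝ)..(2 * Real.pi),
              (NjF lam a b c d f x - NjF lam a b c d g x) *
                iteratedDeriv (2 * s) (fun y => f y - g y) x) : ℝ) : ℂ)
        + ((PNj lam a b c d f * dxNormSq (s + 1) (cF (fun x => f x - g x)) : ℝ) : ℂ)
        + Gam p (fun k =>
            (Complex.I * (k (⟨p - 1, by omega⟩ : Fin (p + 1)) : ℂ)) ^ (s + 1)
            * (Complex.I * (k (Fin.last p) : ℂ)) ^ (s + 1)
            * MNR C₀ s p lam a b c k)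
          (tup p (cF f) (cF (fun x => f x - g x)))‖
      ≤ C * (hsNormC s (cF (fun x => f x - g x)) ^ 2
              * (hsNormC 8 (cF f) + hsNormC 8 (cF g)) ^ (p - 1)
          + hsNormC 7 (cF (fun x => f x - g x)) ^ 2
              * (hsNormC s (cF f) + hsNormC s (cF g)) ^ 2
              * (hsNormC 7 (cF f) + hsNormC 7 (cF g)) ^ (p - 3)
          + hsNormC 7 (cF (fun x => f x - g x)) ^ 2
              * hsNormC (s + 3) (cF g) ^ 2
              * (hsNormC 7 (cF f) + hsNormC 7 (cF g)) ^ (p - 3)) := by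
  obtain ⟨C, hC, hle⟩ := multi_est_general s lam a b c d p hpdef (by omega) C₀
  refine ⟨C * 2, by positivity, fun f g hf hfp hg hgp => (hle f g hf hfp hg hgp).trans ?_⟩
  rw [mul_assoc C]
  exact mul_le_mul_of_nonneg_left (sobolev_product_le s hp3 (rapidDecay_fhat hf hfp)
    (rapidDecay_fhat hg hgp) (rapidDecay_fhat (hf.sub hg) (hfp.sub hgp))) hC.le

end FifthOrderStmt18
end

section
/- (Comparison lemma for the modified energy.) Fix the nonlinearity data (λ_j, a_j, b_j, c_j, d_j), j = 1,…,j₀, with p_j ≥ 2, and γ₀ ≠ 0, γ₁, γ₂ ∈ ℝ. For every integer s ≥ 1 one can choose the constant C₀ in the definition of M_H sufficiently large and a constant C_s > 0 sufficiently large so that, defining for real-valued f, g ∈ C^∞(𝕋) F_s(f,g) := (1/2)‖∂_x^s(f−g)‖_{L²}² + (1/2)‖f−g‖_{L²}² (1 + C_s Σ_{j=1}^{j₀} ‖f‖_{H⁴}^{s(p_j−1)}) + Σ_{j=1}^{j₀} Γ^{(p_j)}( (ik_{p_j})^{s+1}(ik_{p_j+1})^{s+1} M_{NR,j} / Φ^{(p_j)}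 ; f,…,f,f−g,f−g ) (the division by Φ^{(p_j)} is well defined since Φ^{(p_j)} ≠ 0 on the support of M_{NR,j}), the quantity F_s(f,g) is real and satisfies F_s(f,g) ≤ ‖∂_x^s(f−g)‖_{L²}² + ‖f−g‖_{L²}² (1 + C_s Σ_{j=1}^{j₀} ‖f‖_{H⁴}^{s(p_j−1)}) ≤ 4 F_s(f,g) for all real-valued f, g ∈ C^∞(𝕋). -/
/- Comparison lemma: the modified energy F_s(f,g) is real and comparable to
   ‖∂_x^s(f−g)‖² + ‖f−g‖²(1 + C_s Σ_j ‖f‖_{H⁴}^{s(p_j−1)}). -/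

namespace FifthOrderStmt19

open scoped NNReal Classical

/-- Maximum of a nonnegative real-valued family over a finset (`0` if the finset is empty). -/
noncomputable def fmax {α : Type*} (s : Finset α) (f : α → ℝ) : ℝ :=
  ((s.sup fun i => Real.toNNReal (f i) : ℝ≥0) : ℝ)

/-- Fourier coefficient of a `2π`-periodic function `f : ℝ → ℂ`:
`f̂(k) = (1/2π) ∫_0^{2π} f(x) e^{-ikx} dx`. -/
noncomputable def fhat (f : ℝ → ℂ) (k : ℤ) : ℂ :=
  (Complex.ofReal (2 * Real.pi))⁻¹ *
    ∫ x in (0:ℝ)..(2 * Real.pi), f x * Complex.exp (-Complex.I * (k : ℂ) * (x : ℂ))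

/-- The multilinear form
`Γ^(p)(M; f₁,…,f_{p+1}) = Σ_{k ∈ Z₀^(p)} M(k) ∏_{l=1}^{p+1} f̂_l(k_l)`,
where `Z₀^(p) = {k ∈ ℤ^{p+1} : k₁ + ⋯ + k_{p+1} = 0}` (indices shifted to start at `0`). -/
noncomputable def Gam (p : ℕ) (M : (Fin (p + 1) → ℤ) → ℂ) (F : Fin (p + 1) → ℝ → ℂ) : ℂ :=
  ∑' k : {k : Fin (p + 1) → ℤ // (∑ i, k i) = 0}, M k.1 * ∏ i, fhat (F i) (k.1 i)

/-- The argument tuple `(f, …, f, g, g)`: `p − 1` copies of `f` followed by two copies of `g`. -/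
def tup (p : ℕ) (f g : ℝ → ℂ) : Fin (p + 1) → ℝ → ℂ :=
  fun i => if (i : ℕ) < p - 1 then f else g

/-- Sobolev norm `‖f‖_{H^s} = (Σ_k (1+k²)^s |f̂(k)|²)^{1/2}`. -/
noncomputable def hsNormC (s : ℕ) (f : ℝ → ℂ) : ℝ :=
  Real.sqrt (∑' k : ℤ, (1 + (k : ℝ) ^ 2) ^ s * ‖fhat f k‖ ^ 2)

/-- `‖∂_x^m f‖_{L²}² = Σ_k k^{2m} |f̂(k)|²`. -/
noncomputable def dxNormSq (m : ℕ) (f : ℝ → ℂ) : ℝ :=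
  ∑' k : ℤ, (k : ℝ) ^ (2 * m) * ‖fhat f k‖ ^ 2

/-- Complexification of a real-valued function. -/
def cF (f : ℝ → ℝ) : ℝ → ℂ := fun x => (f x : ℂ)

/-- `k_{(1,p-1)} = k₁ + ⋯ + k_{p-1}` (with indices shifted to start at `0`). -/
def ksum1 (p : ℕ) (k : Fin (p + 1) → ℤ) : ℤ :=
  ∑ i ∈ Finset.univ.filter (fun i : Fin (p + 1) => (i : ℕ) < p - 1), k i

/-- The high-frequency cut-off `M_H^(p)` with constant `C₀`:
`1` when `min{|k_p|^{4/5}, |k_{p+1}|^{4/5}} ≥ C₀ max{|k₁|,…,|k_{p-1}|}`, else `0`. -/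
noncomputable def MH (C₀ : ℝ) (p : ℕ) (k : Fin (p + 1) → ℤ) : ℂ :=
  if C₀ * fmax (Finset.univ.filter (fun i : Fin (p + 1) => (i : ℕ) < p - 1))
        (fun i => |(k i : ℝ)|)
      ≤ min (|(k (⟨p - 1, by omega⟩ : Fin (p + 1)) : ℝ)| ^ ((4:ℝ)/5))
            (|(k (Fin.last p) : ℝ)| ^ ((4:ℝ)/5))
  then 1 else 0

/-- The non-zero-sum cut-off `M_NZ^(p)`: `1` when `k_{(1,p-1)} ≠ 0`, else `0`. -/
def MNZ (p : ℕ) (k : Fin (p + 1) → ℤ) : ℂ :=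
  if ksum1 p k ≠ 0 then 1 else 0

/-- `D_{a,b,c}(k) = ∏_{l=1}^{a}(ik_l)³ ∏_{l=a+1}^{a+b}(ik_l)² ∏_{l=a+b+1}^{a+b+c}(ik_l)`. -/
noncomputable def Dabc (p a b c : ℕ) (k : Fin (p + 1) → ℤ) : ℂ :=
  (∏ i ∈ Finset.univ.filter (fun i : Fin (p + 1) => (i : ℕ) < a),
      (Complex.I * (k i : ℂ)) ^ 3)
    * (∏ i ∈ Finset.univ.filter (fun i : Fin (p + 1) => a ≤ (i : ℕ) ∧ (i : ℕ) < a + b),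
        (Complex.I * (k i : ℂ)) ^ 2)
    * (∏ i ∈ Finset.univ.filter
          (fun i : Fin (p + 1) => a + b ≤ (i : ℕ) ∧ (i : ℕ) < a + b + c),
        (Complex.I * (k i : ℂ)))

/-- The multiplier
`M_{NR} = M_H M_NZ λ ((s−3/2) a (ik_{(1,p-1)}) D_{a-1,b,c} + b D_{a,b-1,c})`
(the conventions for `a = 0` resp. `b = 0` are automatic since the corresponding
terms carry the factors `a` resp. `b`). -/
noncomputable def MNR (C₀ : ℝ) (s p : ℕ) (lam : ℝ) (a b c : ℕ)
    (k : Fin (p + 1) → ℤ) : ℂ :=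
  MH C₀ p k * MNZ p k * (lam : ℂ) *
    (((s : ℂ) - 3/2) * (a : ℂ) * (Complex.I * (ksum1 p k : ℂ)) * Dabc p (a - 1) b c k
      + (b : ℂ) * Dabc p a (b - 1) c k)

/-- `P_{N_j}(f) = (λ_j b_j/2π) ∫_𝕋 (∂_x³f)^{a_j}(∂_x²f)^{b_j-1}(∂_xf)^{c_j}f^{d_j} dx`. -/
noncomputable def PNj (lam : ℝ) (a b c d : ℕ) (f : ℝ → ℝ) : ℝ :=
  (lam * (b : ℝ) / (2 * Real.pi)) *
    ∫ x in (0:ℝ)..(2 * Real.pi),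
      (iteratedDeriv 3 f x) ^ a * (iteratedDeriv 2 f x) ^ (b - 1) *
        (deriv f x) ^ c * (f x) ^ d

/-- The linear phase `φ(k) = i(γ₀k⁵ − γ₁k³ + γ₂k)`. -/
noncomputable def philin (γ0 γ1 γ2 : ℝ) (k : ℤ) : ℂ :=
  Complex.I * ((γ0 : ℂ) * (k : ℂ)^5 - (γ1 : ℂ) * (k : ℂ)^3 + (γ2 : ℂ) * (k : ℂ))

/-- The resonance function `Φ^(p)(k) = φ(k_{(1,p)}) − Σ_{l=1}^p φ(k_l)`
(indices shifted to start at `0`). -/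
noncomputable def PhiF (γ0 γ1 γ2 : ℝ) (p : ℕ) (k : Fin (p + 1) → ℤ) : ℂ :=
  philin γ0 γ1 γ2 (∑ i ∈ Finset.univ.filter (fun i : Fin (p + 1) => (i : ℕ) < p), k i)
    - ∑ i ∈ Finset.univ.filter (fun i : Fin (p + 1) => (i : ℕ) < p), philin γ0 γ1 γ2 (k i)

/-!
On the support of `M_NR` the resonance function is dominated by its leading term
`5γ₀ k_p⁴ k_{(1,p-1)}`: the other terms are smaller because `|kₗ| ≲ |k_p|^{4/5} / C₀` for `l < p`.
Since moreover `|k_{p+1}| ≤ 2|k_p|`, dividing by `Φ` gains four derivatives and absorbs the factor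
`k_{(1,p-1)}` of `M_NR`, so that the correction terms are bounded by `‖f‖_{H⁴}^{p-1} ‖∂_x^{s-1}h‖²`
with `h = f - g` (Young's inequality, and `∑ ⟨k⟩³|f̂(k)| ≲ ‖f‖_{H⁴}`). Interpolation splits this
bound into a small multiple of `‖∂_x^s h‖²` and a large multiple of `‖f‖_{H⁴}^{s(p-1)} ‖h‖²`, which
`C_s` absorbs. The corrections are real because every multiplier satisfies `M(-k) = conj (M(k))`.
-/

/-! ### Fourier coefficients of periodic functions -/

lemma fhat_eq_fourierCoeffOn (f : ℝ → ℂ) (k : ℤ) :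
    fhat f k = fourierCoeffOn Real.two_pi_pos f k := by
  rw [fourierCoeffOn_eq_integral, fhat, one_div, sub_zero, Complex.real_smul, Complex.ofReal_inv]
  congr 2 with x
  rw [fourier_coe_apply, smul_eq_mul, mul_comm]
  congr 2
  have hpi : (Real.pi : ℂ) ≠ 0 := Complex.ofReal_ne_zero.2 Real.pi_ne_zero
  push_cast
  field_simp

lemma fhat_deriv {f : ℝ → ℂ} (hf : ContDiff ℝ 1 f) (hper : Function.Periodic f (2 * Real.pi))
    (k : ℤ) : fhat (deriv f) k = Complex.I * k * fhat f k := by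
  have hderiv : ∀ x ∈ Set.uIcc 0 (2 * Real.pi), HasDerivAt f (deriv f x) x :=
    fun x _ => (hf.differentiable one_ne_zero x).hasDerivAt
  have hint : IntervalIntegrable (deriv f) MeasureTheory.volume 0 (2 * Real.pi) :=
    (hf.continuous_deriv le_rfl).intervalIntegrable _ _
  have hends : f (2 * Real.pi) - f 0 = 0 := sub_eq_zero.2 (by simpa using hper 0)
  rcases eq_or_ne k 0 with rfl | hk
  · simp [fhat, intervalIntegral.integral_eq_sub_of_hasDerivAt hderiv hint, hends]
  · have hk' : (k : ℂ) ≠ 0 := Int.cast_ne_zero.2 hk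
    have hpi : (Real.pi : ℂ) ≠ 0 := Complex.ofReal_ne_zero.2 Real.pi_ne_zero
    rw [fhat_eq_fourierCoeffOn f, fourierCoeffOn_of_hasDerivAt _ hk hderiv hint, hends,
      ← fhat_eq_fourierCoeffOn]
    push_cast
    field_simp
    simp [mul_assoc]

lemma periodic_iteratedDeriv {f : ℝ → ℂ} {T : ℝ} (hper : Function.Periodic f T) (m : ℕ) :
    Function.Periodic (iteratedDeriv m f) T := fun x => by
  rw [← congrFun (iteratedDeriv_comp_add_const m f T) x, funext hper]

lemma fhat_iteratedDeriv {f : ℝ → ℂ} {m : ℕ} (hf : ContDiff ℝ m f)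
    (hper : Function.Periodic f (2 * Real.pi)) (k : ℤ) :
    fhat (iteratedDeriv m f) k = (Complex.I * k) ^ m * fhat f k := by
  induction m with
  | zero => simp
  | succ m ih =>
    have hm : ContDiff ℝ 1 (iteratedDeriv m f) := by
      rw [iteratedDeriv_eq_iterate]
      exact ContDiff.iterate_deriv' 1 m (by rwa [add_comm] at hf)
    rw [iteratedDeriv_succ, fhat_deriv hm (periodic_iteratedDeriv hper m),
      ih (hf.of_le (by exact_mod_cast m.le_succ)), pow_succ']
    ring

lemma summable_norm_fhat_sq {f : ℝ → ℂ}
    (hf : MeasureTheory.MemLp f 2 (MeasureTheory.volume.restrict (Set.Ioc 0 (2 * Real.pi)))) :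
    Summable fun k : ℤ => ‖fhat f k‖ ^ 2 := by
  simpa only [fhat_eq_fourierCoeffOn] using (hasSum_sq_fourierCoeffOn Real.two_pi_pos hf).summable

lemma fhat_cF_neg (f : ℝ → ℝ) (k : ℤ) :
    fhat (cF f) (-k) = starRingEnd ℂ (fhat (cF f) k) := by
  rw [fhat, fhat, map_mul, map_inv₀, Complex.conj_ofReal, ← intervalIntegral.intervalIntegral_conj]
  congr 2 with x
  simp [cF, ← Complex.exp_conj]

/-! ### Periodic Sobolev spaces -/

/-- Membership of the `2π`-periodic extension of `f|_{(0, 2π]}` in the Sobolev space `H^s(𝕋)`: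
`f` is square integrable over a period, so that its Fourier coefficients are genuine, and the
series defining `‖f‖_{H^s}` converges. -/
def MemHs (s : ℕ) (f : ℝ → ℂ) : Prop :=
  MeasureTheory.MemLp f 2 (MeasureTheory.volume.restrict (Set.Ioc 0 (2 * Real.pi))) ∧
    Summable fun k : ℤ => (1 + (k : ℝ) ^ 2) ^ s * ‖fhat f k‖ ^ 2

lemma memLp_two_Ioc_of_continuous {f : ℝ → ℂ} (hf : Continuous f) (a b : ℝ) :
    MeasureTheory.MemLp f 2 (MeasureTheory.volume.restrict (Set.Ioc a b)) := by
  obtain ⟨C, hC⟩ := isCompact_Icc.exists_bound_of_continuousOn (hf.continuousOn (s := Set.Icc a b))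
  refine .of_bound hf.aestronglyMeasurable C ?_
  filter_upwards [MeasureTheory.ae_restrict_mem measurableSet_Ioc] with x hx
  exact hC x (Set.Ioc_subset_Icc_self hx)

lemma memHs_of_contDiff {f : ℝ → ℂ} {s : ℕ} (hf : ContDiff ℝ s f)
    (hper : Function.Periodic f (2 * Real.pi)) : MemHs s f := by
  have hL2 := memLp_two_Ioc_of_continuous hf.continuous 0 (2 * Real.pi)
  have hL2' := memLp_two_Ioc_of_continuous (hf.continuous_iteratedDeriv' s) 0 (2 * Real.pi)
  refine ⟨hL2, .of_nonneg_of_le (fun k => by positivity) (fun k => ?_)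
    (((summable_norm_fhat_sq hL2).add (summable_norm_fhat_sq hL2')).mul_left (2 ^ (s - 1)))⟩
  have hconv := add_pow_le zero_le_one (sq_nonneg (k : ℝ)) s
  rw [fhat_iteratedDeriv hf hper, norm_mul, norm_pow, norm_mul, Complex.norm_I, one_mul,
    Complex.norm_intCast]
  calc (1 + (k : ℝ) ^ 2) ^ s * ‖fhat f k‖ ^ 2
      ≤ 2 ^ (s - 1) * (1 ^ s + ((k : ℝ) ^ 2) ^ s) * ‖fhat f k‖ ^ 2 := by gcongr
    _ = 2 ^ (s - 1) * (‖fhat f k‖ ^ 2 + (|(k : ℝ)| ^ s * ‖fhat f k‖) ^ 2) := by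
      rw [← sq_abs (k : ℝ)]; ring

lemma memHs_cF_of_contDiff {f : ℝ → ℝ} (s : ℕ) (hf : ContDiff ℝ (⊤ : ℕ∞) f)
    (hper : Function.Periodic f (2 * Real.pi)) : MemHs s (cF f) :=
  memHs_of_contDiff ((Complex.ofRealCLM.contDiff.comp hf).of_le (by exact_mod_cast le_top))
    fun x => by simp [cF, hper x]

lemma pow_two_mul_nonneg (x : ℝ) (m : ℕ) : 0 ≤ x ^ (2 * m) :=
  (even_two_mul m).pow_nonneg x

lemma MemHs.summable_pow_mul {f : ℝ → ℂ} {m s : ℕ} (hf : MemHs s f) (hm : m ≤ s) :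
    Summable fun k : ℤ => (k : ℝ) ^ (2 * m) * ‖fhat f k‖ ^ 2 := by
  refine .of_nonneg_of_le (fun k => by have := pow_two_mul_nonneg k m; positivity)
    (fun k => ?_) hf.2
  gcongr
  calc (k : ℝ) ^ (2 * m) = ((k : ℝ) ^ 2) ^ m := pow_mul _ _ _
    _ ≤ (1 + (k : ℝ) ^ 2) ^ m := by gcongr; linarith
    _ ≤ (1 + (k : ℝ) ^ 2) ^ s := by gcongr; nlinarith

lemma MemHs.of_le {f : ℝ → ℂ} {r s : ℕ} (hf : MemHs s f) (hr : r ≤ s) : MemHs r f := by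
  refine ⟨hf.1, .of_nonneg_of_le (fun k => by positivity) (fun k => ?_) hf.2⟩
  gcongr
  linarith [sq_nonneg (k : ℝ)]

lemma dxNormSq_nonneg (m : ℕ) (f : ℝ → ℂ) : 0 ≤ dxNormSq m f :=
  tsum_nonneg fun _ => mul_nonneg (pow_two_mul_nonneg _ _) (sq_nonneg _)

lemma hsNormC_nonneg (s : ℕ) (f : ℝ → ℂ) : 0 ≤ hsNormC s f := Real.sqrt_nonneg _

/-- The Japanese bracket `⟨k⟩ = (1 + k²)^{1/2}`, the weight counting derivatives. -/
noncomputable def japaneseBracket (k : ℤ) : ℝ := Real.sqrt (1 + (k : ℝ) ^ 2)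

lemma japaneseBracket_sq (k : ℤ) : japaneseBracket k ^ 2 = 1 + (k : ℝ) ^ 2 :=
  Real.sq_sqrt (by positivity)

lemma one_le_japaneseBracket (k : ℤ) : 1 ≤ japaneseBracket k :=
  Real.one_le_sqrt.2 (by nlinarith [sq_nonneg (k : ℝ)])

lemma japaneseBracket_pos (k : ℤ) : 0 < japaneseBracket k :=
  zero_lt_one.trans_le (one_le_japaneseBracket k)

lemma abs_le_japaneseBracket (k : ℤ) : |(k : ℝ)| ≤ japaneseBracket k :=
  Real.abs_le_sqrt (by linarith)

lemma summable_japaneseBracket_inv_sq : Summable fun k : ℤ => (japaneseBracket k)⁻¹ ^ 2 := by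
  refine .of_norm_bounded_eventually (Real.summable_one_div_int_pow (p := 2) |>.2 one_lt_two) ?_
  have hne : ∀ᶠ k : ℤ in Filter.cofinite, k ≠ 0 := by rw [Filter.eventually_cofinite]; simp
  filter_upwards [hne] with k hk
  rw [inv_pow, japaneseBracket_sq, Real.norm_of_nonneg (by positivity), one_div]
  gcongr
  linarith

lemma tsum_ofReal_mul_le_sqrt_mul_sqrt {α : Type*} {u v : α → ℝ} (hu : ∀ i, 0 ≤ u i)
    (hv : ∀ i, 0 ≤ v i) (hu2 : Summable fun i => u i ^ 2) (hv2 : Summable fun i => v i ^ 2) :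
    ∑' i, ENNReal.ofReal (u i * v i) ≤
      ENNReal.ofReal (Real.sqrt (∑' i, u i ^ 2) * Real.sqrt (∑' i, v i ^ 2)) := by
  refine ENNReal.summable.tsum_le_of_sum_le fun S => ?_
  rw [← ENNReal.ofReal_sum_of_nonneg fun i _ => mul_nonneg (hu i) (hv i)]
  refine ENNReal.ofReal_le_ofReal ((Real.sum_mul_le_sqrt_mul_sqrt S u v).trans ?_)
  gcongr
  · exact hu2.sum_le_tsum S fun i _ => sq_nonneg _
  · exact hv2.sum_le_tsum S fun i _ => sq_nonneg _

/-- The norm of the embedding of `H^{s+1}` into the Wiener-type space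
`{f | ∑ ⟨k⟩^s |f̂(k)| < ∞}`. -/
noncomputable def wienerConst : ℝ := Real.sqrt (∑' k : ℤ, (japaneseBracket k)⁻¹ ^ 2)

lemma wienerConst_nonneg : 0 ≤ wienerConst := Real.sqrt_nonneg _

lemma MemHs.tsum_japaneseBracket_pow_mul_le {f : ℝ → ℂ} {s : ℕ} (hf : MemHs (s + 1) f) :
    ∑' k : ℤ, ENNReal.ofReal (japaneseBracket k ^ s * ‖fhat f k‖) ≤
      ENNReal.ofReal (wienerConst * hsNormC (s + 1) f) := by
  have hsq : ∀ k, (japaneseBracket k ^ (s + 1) * ‖fhat f k‖) ^ 2 =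
      (1 + (k : ℝ) ^ 2) ^ (s + 1) * ‖fhat f k‖ ^ 2 := fun k => by
    rw [← japaneseBracket_sq]; ring
  have hsplit : ∀ k, japaneseBracket k ^ s * ‖fhat f k‖ =
      (japaneseBracket k)⁻¹ * (japaneseBracket k ^ (s + 1) * ‖fhat f k‖) := fun k => by
    rw [pow_succ']; field_simp [(japaneseBracket_pos k).ne']
  simp only [hsplit, wienerConst, hsNormC, ← hsq]
  exact tsum_ofReal_mul_le_sqrt_mul_sqrt (fun k => (inv_pos.2 (japaneseBracket_pos k)).le)
    (fun k => mul_nonneg (pow_pos (japaneseBracket_pos k) _).le (norm_nonneg _))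
    summable_japaneseBracket_inv_sq (hf.2.congr fun k => (hsq k).symm)

lemma mul_pow_le_mul_pow_succ_add {X t ε : ℝ} (hX : 0 ≤ X) (ht : 0 ≤ t) (hε : 0 < ε) (r : ℕ) :
    X * t ^ r ≤ ε * t ^ (r + 1) + ε⁻¹ ^ r * X ^ (r + 1) := by
  rcases le_total X (ε * t) with h | h
  · calc X * t ^ r ≤ ε * t * t ^ r := by gcongr
      _ = ε * t ^ (r + 1) := by ring
      _ ≤ _ := le_add_of_nonneg_right (by positivity)
  · have ht' : t ≤ ε⁻¹ * X := by rwa [inv_mul_eq_div, le_div_iff₀' hε]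
    calc X * t ^ r ≤ X * (ε⁻¹ * X) ^ r := by gcongr
      _ = ε⁻¹ ^ r * X ^ (r + 1) := by ring
      _ ≤ _ := le_add_of_nonneg_left (by positivity)

lemma MemHs.mul_dxNormSq_le {h : ℝ → ℂ} {r : ℕ} (hh : MemHs (r + 1) h) {ε X : ℝ} (hε : 0 < ε)
    (hX : 0 ≤ X) :
    X * dxNormSq r h ≤ ε * dxNormSq (r + 1) h + ε⁻¹ ^ r * X ^ (r + 1) * dxNormSq 0 h := by
  have hsum0 := (hh.summable_pow_mul (Nat.zero_le _)).mul_left (ε⁻¹ ^ r * X ^ (r + 1))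
  have hsum1 := (hh.summable_pow_mul le_rfl).mul_left ε
  simp only [dxNormSq, ← tsum_mul_left]
  rw [← hsum1.tsum_add hsum0]
  refine ((hh.summable_pow_mul r.le_succ).mul_left X).tsum_le_tsum (fun k => ?_) (hsum1.add hsum0)
  calc X * ((k : ℝ) ^ (2 * r) * ‖fhat h k‖ ^ 2)
      = X * ((k : ℝ) ^ 2) ^ r * ‖fhat h k‖ ^ 2 := by ring
    _ ≤ (ε * ((k : ℝ) ^ 2) ^ (r + 1) + ε⁻¹ ^ r * X ^ (r + 1)) * ‖fhat h k‖ ^ 2 := by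
      gcongr
      exact mul_pow_le_mul_pow_succ_add hX (sq_nonneg _) hε r
    _ = _ := by ring

lemma MemHs.exists_sum_mul_dxNormSq_le {ι : Type*} [Fintype ι] {D : ι → ℝ} (hD : ∀ j, 0 ≤ D j)
    (r : ℕ) {ε : ℝ} (hε : 0 < ε) :
    ∃ K : ℝ, 0 < K ∧ ∀ h, MemHs (r + 1) h → ∀ X : ι → ℝ, (∀ j, 0 ≤ X j) →
      ∑ j, D j * (X j * dxNormSq r h) ≤
        ε * dxNormSq (r + 1) h + K * (∑ j, X j ^ (r + 1)) * dxNormSq 0 h := by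
  set T : ℝ := 1 + ∑ j, D j
  have hTpos : 0 < T := by have := Finset.sum_nonneg fun j (_ : j ∈ Finset.univ) => hD j; linarith
  have hDT : ∀ j, D j ≤ T := fun j =>
    (Finset.single_le_sum (fun i _ => hD i) (Finset.mem_univ j)).trans (by linarith)
  refine ⟨T * (ε / T)⁻¹ ^ r, by positivity, fun h hh X hX => ?_⟩
  have h0 := dxNormSq_nonneg 0 h
  have h1 := dxNormSq_nonneg (r + 1) h
  calc ∑ j, D j * (X j * dxNormSq r h)
      ≤ ∑ j, (D j * (ε / T) * dxNormSq (r + 1) h +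
          T * (ε / T)⁻¹ ^ r * X j ^ (r + 1) * dxNormSq 0 h) := by
        refine Finset.sum_le_sum fun j _ => ?_
        refine (mul_le_mul_of_nonneg_left (hh.mul_dxNormSq_le (div_pos hε hTpos) (hX j))
          (hD j)).trans ?_
        rw [mul_add, ← mul_assoc, mul_assoc T, mul_assoc T]
        have := hX j
        gcongr
        exact hDT j
    _ = (∑ j, D j) * (ε / T) * dxNormSq (r + 1) h +
          T * (ε / T)⁻¹ ^ r * (∑ j, X j ^ (r + 1)) * dxNormSq 0 h := by
        simp only [Finset.sum_add_distrib, Finset.sum_mul, Finset.mul_sum]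
    _ ≤ _ := by
        gcongr
        calc (∑ j, D j) * (ε / T) ≤ T * (ε / T) := by gcongr; linarith
          _ = ε := mul_div_cancel₀ _ hTpos.ne'

/-! ### Multilinear forms on the hyperplane `k₁ + ⋯ + k_{p+1} = 0` -/

lemma tsum_pi_prod_eq_prod_tsum {α : Type*} {n : ℕ} (w : Fin n → α → ENNReal) :
    ∑' q : Fin n → α, ∏ i, w i (q i) = ∏ i, ∑' x, w i x := by
  induction n with
  | zero => simp
  | succ n ih =>
    rw [← (Fin.consEquiv fun _ => α).tsum_eq,
      ENNReal.summable.tsum_prod' fun _ => ENNReal.summable]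
    simp only [Fin.consEquiv_apply, Fin.prod_univ_succ, Fin.cons_zero, Fin.cons_succ,
      ENNReal.tsum_mul_left, ENNReal.tsum_mul_right, ih]

lemma zeroSum_succAbove_injective {G : Type*} [AddCommGroup G] {n : ℕ} (j : Fin (n + 1)) :
    Function.Injective fun (k : {k : Fin (n + 1) → G // ∑ i, k i = 0}) (i : Fin n) =>
      k.1 (j.succAbove i) := by
  rintro ⟨k, hk⟩ ⟨l, hl⟩ h
  have hoff : ∀ i, k (j.succAbove i) = l (j.succAbove i) := congrFun h
  have hj : k j = l j := by
    rw [Fin.sum_univ_succAbove _ j, add_eq_zero_iff_eq_neg] at hk hl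
    rw [hk, hl, Finset.sum_congr rfl fun i _ => hoff i]
  ext i
  induction i using Fin.succAboveCases j with
  | x => exact hj
  | p i => exact hoff i

lemma tsum_zeroSum_prod_succAbove_le {G : Type*} [AddCommGroup G] {n : ℕ} (j : Fin (n + 1))
    (w : Fin n → G → ENNReal) :
    ∑' k : {k : Fin (n + 1) → G // ∑ i, k i = 0}, ∏ i, w i (k.1 (j.succAbove i)) ≤
      ∏ i, ∑' x, w i x :=
  (ENNReal.tsum_comp_le_tsum_of_injective (zeroSum_succAbove_injective j)
    fun q : Fin n → G => ∏ i, w i (q i)).trans_eq (tsum_pi_prod_eq_prod_tsum w)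

/- Once either of the last two variables is dropped, the remaining ones range freely. -/
lemma tsum_zeroSum_prod_mul_add_le {n : ℕ} (U W : ℤ → ENNReal) :
    ∑' k : {k : Fin (n + 2) → ℤ // ∑ i, k i = 0}, (∏ i : Fin n, U (k.1 i.castSucc.castSucc)) *
        (W (k.1 (Fin.last n).castSucc) + W (k.1 (Fin.last (n + 1)))) ≤
      2 * ((∑' x, U x) ^ n * ∑' x, W x) := by
  set w : Fin (n + 1) → ℤ → ENNReal := Fin.lastCases W fun _ => U
  have hlast := tsum_zeroSum_prod_succAbove_le (Fin.last (n + 1)) w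
  have hpenult := tsum_zeroSum_prod_succAbove_le (Fin.last n).castSucc w
  simp only [w, Fin.prod_univ_castSucc, Fin.lastCases_castSucc, Fin.lastCases_last,
    Fin.succAbove_last, Fin.succAbove_castSucc_self, Fin.succ_last,
    Fin.succAbove_castSucc_of_lt _ _ (Fin.castSucc_lt_last _), Finset.prod_const,
    Finset.card_univ, Fintype.card_fin] at hlast hpenult
  simp only [mul_add, ENNReal.tsum_add, two_mul]
  exact add_le_add hlast hpenult

lemma two_mul_le_add_sq_of_canonicallyOrderedAdd {R : Type*} [CommSemiring R] [LinearOrder R]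
    [CanonicallyOrderedAdd R] (a b : R) : 2 * (a * b) ≤ a ^ 2 + b ^ 2 := by
  wlog hab : a ≤ b generalizing a b
  · rw [mul_comm a, add_comm]
    exact this b a (le_of_not_ge hab)
  obtain ⟨c, rfl⟩ := exists_add_of_le hab
  exact le_iff_exists_add.2 ⟨c ^ 2, by ring⟩

lemma prod_fhat_tup {n : ℕ} (f h : ℝ → ℂ) (k : Fin (n + 2) → ℤ) :
    ∏ i, fhat (tup (n + 1) f h i) (k i) = (∏ i : Fin n, fhat f (k i.castSucc.castSucc)) *
      (fhat h (k (Fin.last n).castSucc) * fhat h (k (Fin.last (n + 1)))) := by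
  simp [Fin.prod_univ_castSucc, tup, mul_assoc]

lemma enorm_Gam_le {n : ℕ} {M : (Fin (n + 2) → ℤ) → ℂ} (f h : ℝ → ℂ) {B : ENNReal}
    {u v : ℤ → ENNReal}
    (hM : ∀ k : Fin (n + 2) → ℤ, ∑ i, k i = 0 →
      ‖M k‖ₑ ≤ B * ((∏ i : Fin n, u (k i.castSucc.castSucc)) *
        (v (k (Fin.last n).castSucc) * v (k (Fin.last (n + 1)))))) :
    ‖Gam (n + 1) M (tup (n + 1) f h)‖ₑ ≤
      B * ((∑' k, u k * ‖fhat f k‖ₑ) ^ n * ∑' k, (v k * ‖fhat h k‖ₑ) ^ 2) := by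
  set U : ℤ → ENNReal := fun k => u k * ‖fhat f k‖ₑ
  set V : ℤ → ENNReal := fun k => v k * ‖fhat h k‖ₑ
  have hterm : ∀ k : {k : Fin (n + 2) → ℤ // ∑ i, k i = 0},
      ‖M k.1 * ∏ i, fhat (tup (n + 1) f h i) (k.1 i)‖ₑ ≤
        B * 2⁻¹ * ((∏ i : Fin n, U (k.1 i.castSucc.castSucc)) *
          (V (k.1 (Fin.last n).castSucc) ^ 2 + V (k.1 (Fin.last (n + 1))) ^ 2)) := by
    rintro ⟨k, hk⟩
    rw [prod_fhat_tup, enorm_mul, enorm_mul, enorm_mul, enorm_eq_nnnorm (∏ i, _),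
      nnnorm_prod, ENNReal.ofNNReal_finsetProd]
    calc _ ≤ B * ((∏ i : Fin n, u (k i.castSucc.castSucc)) *
            (v (k (Fin.last n).castSucc) * v (k (Fin.last (n + 1))))) *
          ((∏ i : Fin n, ‖fhat f (k i.castSucc.castSucc)‖ₑ) *
            (‖fhat h (k (Fin.last n).castSucc)‖ₑ * ‖fhat h (k (Fin.last (n + 1)))‖ₑ)) := by
          gcongr
          · exact hM k hk
          · exact le_rfl
      _ = B * ((2⁻¹ * 2) * ((∏ i : Fin n, U (k i.castSucc.castSucc)) *
            (V (k (Fin.last n).castSucc) * V (k (Fin.last (n + 1)))))) := by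
          rw [ENNReal.inv_mul_cancel two_ne_zero ENNReal.ofNat_ne_top, one_mul]
          simp only [U, V, Finset.prod_mul_distrib]
          ring
      _ = B * 2⁻¹ * ((∏ i : Fin n, U (k i.castSucc.castSucc)) *
            (2 * (V (k (Fin.last n).castSucc) * V (k (Fin.last (n + 1)))))) := by ring
      _ ≤ _ := by
          gcongr
          exact two_mul_le_add_sq_of_canonicallyOrderedAdd _ _
  calc ‖Gam (n + 1) M (tup (n + 1) f h)‖ₑ
      ≤ ∑' k : {k : Fin (n + 2) → ℤ // ∑ i, k i = 0},
          ‖M k.1 * ∏ i, fhat (tup (n + 1) f h i) (k.1 i)‖ₑ := enorm_tsum_le_tsum_enorm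
    _ ≤ B * 2⁻¹ * (2 * ((∑' k, U k) ^ n * ∑' k, V k ^ 2)) := by
        refine (ENNReal.tsum_le_tsum hterm).trans ?_
        rw [ENNReal.tsum_mul_left]
        gcongr
        exact tsum_zeroSum_prod_mul_add_le U fun k => V k ^ 2
    _ = B * ((∑' k, U k) ^ n * ∑' k, V k ^ 2) := by
        rw [mul_assoc, ← mul_assoc 2⁻¹, ENNReal.inv_mul_cancel two_ne_zero ENNReal.ofNat_ne_top,
          one_mul]

lemma norm_Gam_le {n r : ℕ} {M : (Fin (n + 2) → ℤ) → ℂ} {f h : ℝ → ℂ} (hf : MemHs 4 f)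
    (hh : MemHs r h) {B : ℝ} (hB : 0 ≤ B)
    (hM : ∀ k : Fin (n + 2) → ℤ, ∑ i, k i = 0 →
      ‖M k‖ ≤ B * ((∏ i : Fin n, japaneseBracket (k i.castSucc.castSucc) ^ 3) *
        (|(k (Fin.last n).castSucc : ℝ)| ^ r * |(k (Fin.last (n + 1)) : ℝ)| ^ r))) :
    ‖Gam (n + 1) M (tup (n + 1) f h)‖ ≤
      B * ((wienerConst * hsNormC 4 f) ^ n * dxNormSq r h) := by
  have hu : ∀ k, 0 ≤ japaneseBracket k ^ 3 := fun k => pow_nonneg (japaneseBracket_pos k).le _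
  have hv : ∀ k : ℤ, 0 ≤ |(k : ℝ)| ^ r := fun k => by positivity
  have hH : 0 ≤ wienerConst * hsNormC 4 f := mul_nonneg wienerConst_nonneg (hsNormC_nonneg _ _)
  have hN : 0 ≤ dxNormSq r h := dxNormSq_nonneg r h
  have key := enorm_Gam_le f h (B := ENNReal.ofReal B)
    (u := fun k => ENNReal.ofReal (japaneseBracket k ^ 3))
    (v := fun k => ENNReal.ofReal (|(k : ℝ)| ^ r)) (M := M) fun k hk => by
      rw [← ofReal_norm, ← ENNReal.ofReal_prod_of_nonneg fun i _ => hu _,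
        ← ENNReal.ofReal_mul (hv _), ← ENNReal.ofReal_mul (Finset.prod_nonneg fun i _ => hu _),
        ← ENNReal.ofReal_mul hB]
      exact ENNReal.ofReal_le_ofReal (hM k hk)
  have hV : ∑' k : ℤ, (ENNReal.ofReal (|(k : ℝ)| ^ r) * ‖fhat h k‖ₑ) ^ 2 =
      ENNReal.ofReal (dxNormSq r h) := by
    rw [dxNormSq, ENNReal.ofReal_tsum_of_nonneg
      (fun k => mul_nonneg (pow_two_mul_nonneg _ _) (sq_nonneg _)) (hh.summable_pow_mul le_rfl)]
    refine tsum_congr fun k => ?_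
    rw [← ofReal_norm, ← ENNReal.ofReal_mul (hv k), ← ENNReal.ofReal_pow (by positivity),
      mul_pow, ← pow_mul, mul_comm r, pow_mul, sq_abs, ← pow_mul]
  have hU : ∑' k : ℤ, ENNReal.ofReal (japaneseBracket k ^ 3) * ‖fhat f k‖ₑ ≤
      ENNReal.ofReal (wienerConst * hsNormC 4 f) := by
    simpa only [ENNReal.ofReal_mul (hu _), ofReal_norm] using hf.tsum_japaneseBracket_pow_mul_le
  rw [← ENNReal.ofReal_le_ofReal_iff (by positivity), ofReal_norm, ENNReal.ofReal_mul hB,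
    ENNReal.ofReal_mul (by positivity), ENNReal.ofReal_pow hH, ← hV]
  refine key.trans ?_
  gcongr

/-! ### Reality of the correction terms -/

lemma Gam_im_eq_zero {p : ℕ} {M : (Fin (p + 1) → ℤ) → ℂ} {F : Fin (p + 1) → ℝ → ℂ}
    (hM : ∀ k, M (-k) = starRingEnd ℂ (M k))
    (hF : ∀ i k, fhat (F i) (-k) = starRingEnd ℂ (fhat (F i) k)) : (Gam p M F).im = 0 := by
  let e : {k : Fin (p + 1) → ℤ // ∑ i, k i = 0} ≃ {k : Fin (p + 1) → ℤ // ∑ i, k i = 0} :=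
    (Equiv.neg _).subtypeEquiv fun k => by simp
  rw [← Complex.conj_eq_iff_im, Gam, Complex.conj_tsum, ← e.tsum_eq]
  refine tsum_congr fun k => ?_
  have he : (e k).1 = -k.1 := rfl
  simp only [he, hM, Pi.neg_apply, hF, map_mul, map_prod, Complex.conj_conj]

lemma Dabc_neg (p a b c : ℕ) (k : Fin (p + 1) → ℤ) :
    Dabc p a b c (-k) = starRingEnd ℂ (Dabc p a b c k) := by
  simp [Dabc, map_prod]

lemma ksum1_neg (p : ℕ) (k : Fin (p + 1) → ℤ) : ksum1 p (-k) = -ksum1 p k := by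
  simp [ksum1]

lemma MNR_neg (C₀ : ℝ) (s p : ℕ) (lam : ℝ) (a b c : ℕ) (k : Fin (p + 1) → ℤ) :
    MNR C₀ s p lam a b c (-k) = starRingEnd ℂ (MNR C₀ s p lam a b c k) := by
  have hMH : MH C₀ p (-k) = starRingEnd ℂ (MH C₀ p k) := by
    simp [MH, apply_ite (starRingEnd ℂ)]
  have hMNZ : MNZ p (-k) = starRingEnd ℂ (MNZ p k) := by
    simp [MNZ, ksum1_neg, apply_ite (starRingEnd ℂ)]
  simp only [MNR, hMH, hMNZ, Dabc_neg, ksum1_neg, map_mul, map_add, map_sub, map_natCast,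
    map_div₀, map_ofNat, Complex.conj_I, Complex.conj_ofReal, map_intCast, Int.cast_neg]
  ring

lemma philin_neg (γ0 γ1 γ2 : ℝ) (k : ℤ) :
    philin γ0 γ1 γ2 (-k) = starRingEnd ℂ (philin γ0 γ1 γ2 k) := by
  simp only [philin, map_mul, map_add, map_sub, map_pow, Complex.conj_I, Complex.conj_ofReal,
    map_intCast, Int.cast_neg]
  ring

lemma PhiF_neg (γ0 γ1 γ2 : ℝ) (p : ℕ) (k : Fin (p + 1) → ℤ) :
    PhiF γ0 γ1 γ2 p (-k) = starRingEnd ℂ (PhiF γ0 γ1 γ2 p k) := by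
  simp only [PhiF, Pi.neg_apply, Finset.sum_neg_distrib, philin_neg, map_sub, map_sum]

/-! ### The multipliers in coordinates -/

lemma filter_val_lt_eq_map {n : ℕ} :
    Finset.univ.filter (fun i : Fin (n + 1) => (i : ℕ) < n) =
      Finset.univ.map (Fin.castSuccEmb : Fin n ↪ Fin (n + 1)) := by
  ext i
  induction i using Fin.lastCases <;> simp

lemma filter_val_lt_eq_map_castSucc_castSucc {n : ℕ} :
    Finset.univ.filter (fun i : Fin (n + 2) => (i : ℕ) < n) =
      Finset.univ.map (Fin.castSuccEmb.trans Fin.castSuccEmb : Fin n ↪ Fin (n + 2)) := by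
  ext i
  induction i using Fin.lastCases with
  | last => simp
  | cast i => induction i using Fin.lastCases <;> simp

lemma ksum1_succ {n : ℕ} (k : Fin (n + 2) → ℤ) :
    ksum1 (n + 1) k = ∑ i : Fin n, k i.castSucc.castSucc := by
  simp [ksum1, filter_val_lt_eq_map_castSucc_castSucc]

lemma mul_abs_le_of_MH_ne_zero {C₀ : ℝ} (hC : 0 ≤ C₀) {n : ℕ} {k : Fin (n + 2) → ℤ}
    (h : MH C₀ (n + 1) k ≠ 0) (i : Fin n) :
    C₀ * |(k i.castSucc.castSucc : ℝ)| ≤ |(k (Fin.last n).castSucc : ℝ)| ^ ((4 : ℝ) / 5) := by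
  have hcut := (ite_ne_right_iff.1 h).1.trans (min_le_left _ _)
  refine le_trans ?_ hcut
  gcongr
  rw [fmax, ← Real.toNNReal_le_iff_le_coe]
  exact Finset.le_sup (f := fun i => Real.toNNReal |(k i : ℝ)|) (b := i.castSucc.castSucc)
    (by simp)

/-- The number of derivatives `D_{a,b,c}` puts on the factor with index `i` (counted from `0`). -/
def derivOrder (a b c i : ℕ) : ℕ :=
  if i < a then 3 else if i < a + b then 2 else if i < a + b + c then 1 else 0

lemma derivOrder_le_three (a b c i : ℕ) : derivOrder a b c i ≤ 3 := by
  unfold derivOrder; split_ifs <;> simp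

lemma derivOrder_eq_zero {a b c i : ℕ} (h : a + b + c ≤ i) : derivOrder a b c i = 0 := by
  unfold derivOrder; split_ifs <;> omega

lemma Dabc_eq_prod_pow (p a b c : ℕ) (k : Fin (p + 1) → ℤ) :
    Dabc p a b c k = ∏ i, (Complex.I * (k i : ℂ)) ^ derivOrder a b c i := by
  simp only [Dabc, Finset.prod_filter, ← Finset.prod_mul_distrib, derivOrder]
  refine Finset.prod_congr rfl fun i _ => ?_
  split_ifs <;> first | omega | simp

lemma norm_Dabc_le {n a b c : ℕ} (h : a + b + c ≤ n) (k : Fin (n + 2) → ℤ) :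
    ‖Dabc (n + 1) a b c k‖ ≤ ∏ i : Fin n, japaneseBracket (k i.castSucc.castSucc) ^ 3 := by
  rw [Dabc_eq_prod_pow, Fin.prod_univ_castSucc, Fin.prod_univ_castSucc,
    derivOrder_eq_zero (i := (Fin.last n).castSucc) (by simpa),
    derivOrder_eq_zero (i := Fin.last (n + 1)) (by simpa using h.trans n.le_succ),
    pow_zero, mul_one, pow_zero, mul_one, norm_prod]
  refine Finset.prod_le_prod (fun i _ => norm_nonneg _) fun i _ => ?_
  rw [norm_pow, norm_mul, Complex.norm_I, one_mul, Complex.norm_intCast]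
  exact (pow_le_pow_left₀ (abs_nonneg _) (abs_le_japaneseBracket _) _).trans
    (pow_le_pow_right₀ (one_le_japaneseBracket _) (derivOrder_le_three _ _ _ _))

/-! ### Lower bound for the resonance function -/

/-- The real dispersion relation `q(x) = γ₀x⁵ − γ₁x³ + γ₂x`, for which `φ = i q`. -/
def dispersion (γ0 γ1 γ2 x : ℝ) : ℝ := γ0 * x ^ 5 - γ1 * x ^ 3 + γ2 * x

lemma abs_sub_add_le_mul_of_abs_le {u v w E : ℝ} (α β γ : ℝ) (hu : |u| ≤ E) (hv : |v| ≤ E)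
    (hw : |w| ≤ E) : |α * u - β * v + γ * w| ≤ (|α| + |β| + |γ|) * E :=
  calc |α * u - β * v + γ * w| ≤ |α * u| + |β * v| + |γ * w| :=
        (abs_add_le _ _).trans (by gcongr; exact abs_sub _ _)
    _ = |α| * |u| + |β| * |v| + |γ| * |w| := by simp only [abs_mul]
    _ ≤ |α| * E + |β| * E + |γ| * E := by gcongr
    _ = (|α| + |β| + |γ|) * E := by ring

lemma abs_dispersion_le (γ0 γ1 γ2 : ℝ) {t Q : ℝ} (hQ : 1 ≤ Q) (ht : |t| ≤ Q) :
    |dispersion γ0 γ1 γ2 t| ≤ (|γ0| + |γ1| + |γ2|) * Q ^ 5 := by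
  have hpow : ∀ m ≤ 5, |t ^ m| ≤ Q ^ 5 := fun m hm => by
    rw [abs_pow]
    exact (pow_le_pow_left₀ (abs_nonneg t) ht m).trans (pow_le_pow_right₀ hQ hm)
  exact abs_sub_add_le_mul_of_abs_le _ _ _ (hpow 5 le_rfl) (hpow 3 (by norm_num))
    (by simpa using hpow 1 (by norm_num))

lemma abs_pow_mul_pow_succ_le {x y δ : ℝ} {i j : ℕ} (hi : i ≤ 3) (hij : i + j ≤ 4) (hδ : δ ≤ 1)
    (hy : 1 ≤ |y|) (hyx : |y| ≤ δ * |x|) : |x ^ i * y ^ (j + 1)| ≤ δ * (|x| ^ 4 * |y|) := by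
  have hyx' : |y| ≤ |x| := hyx.trans (mul_le_of_le_one_left (abs_nonneg x) hδ)
  rw [abs_mul, abs_pow, abs_pow]
  calc |x| ^ i * |y| ^ (j + 1) ≤ |x| ^ i * |y| ^ (3 - i + 1 + 1) := by
        gcongr
        omega
    _ = |x| ^ i * (|y| ^ (3 - i) * |y|) * |y| := by ring
    _ ≤ |x| ^ i * (|x| ^ (3 - i) * (δ * |x|)) * |y| := by gcongr
    _ = |x| ^ (i + (3 - i)) * (δ * |x|) * |y| := by ring
    _ = δ * (|x| ^ 4 * |y|) := by rw [Nat.add_sub_cancel' hi]; ring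

lemma abs_dispersion_add_sub_le (γ0 γ1 γ2 : ℝ) {x y δ : ℝ} (hδ : δ ≤ 1) (hy : 1 ≤ |y|)
    (hyx : |y| ≤ δ * |x|) :
    |dispersion γ0 γ1 γ2 (y + x) - dispersion γ0 γ1 γ2 x - 5 * γ0 * (x ^ 4 * y)| ≤
      (|γ0| + |γ1| + |γ2|) * (26 * (δ * (|x| ^ 4 * |y|))) := by
  have hmono : ∀ i ≤ 3, ∀ j, i + j ≤ 4 → |x ^ i * y ^ (j + 1)| ≤ δ * (|x| ^ 4 * |y|) :=
    fun i hi j hij => abs_pow_mul_pow_succ_le hi hij hδ hy hyx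
  have h31 := abs_le.1 (hmono 3 (by norm_num) 1 (by norm_num))
  have h22 := abs_le.1 (hmono 2 (by norm_num) 2 (by norm_num))
  have h13 := abs_le.1 (hmono 1 (by norm_num) 3 (by norm_num))
  have h04 := abs_le.1 (hmono 0 (by norm_num) 4 (by norm_num))
  have h20 := abs_le.1 (hmono 2 (by norm_num) 0 (by norm_num))
  have h11 := abs_le.1 (hmono 1 (by norm_num) 1 (by norm_num))
  have h02 := abs_le.1 (hmono 0 (by norm_num) 2 (by norm_num))
  have h00 := abs_le.1 (hmono 0 (by norm_num) 0 (by norm_num))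
  have hexpand : dispersion γ0 γ1 γ2 (y + x) - dispersion γ0 γ1 γ2 x - 5 * γ0 * (x ^ 4 * y) =
      γ0 * (10 * (x ^ 3 * y ^ 2) + 10 * (x ^ 2 * y ^ 3) + 5 * (x * y ^ 4) + y ^ 5)
        - γ1 * (3 * (x ^ 2 * y) + 3 * (x * y ^ 2) + y ^ 3) + γ2 * y := by
    unfold dispersion; ring
  rw [hexpand]
  norm_num only [pow_zero, pow_one, one_mul] at h31 h22 h13 h04 h20 h11 h02 h00
  refine abs_sub_add_le_mul_of_abs_le _ _ _ ?_ ?_ ?_ <;> rw [abs_le] <;> constructor <;> linarith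

lemma le_mul_of_le_mul_rpow {a δ t : ℝ} (ha : 1 ≤ a) (hδ0 : 0 ≤ δ) (hδ : δ ≤ 1) (ht : 0 ≤ t)
    (h : a ≤ δ * t ^ ((4 : ℝ) / 5)) : a ≤ δ * t := by
  have ht1 : 1 ≤ t := by
    by_contra! hlt
    have hpow : t ^ ((4 : ℝ) / 5) < 1 := Real.rpow_lt_one ht hlt (by norm_num)
    exact (mul_lt_one_of_nonneg_of_lt_one_right hδ (by positivity) hpow).not_ge (ha.trans h)
  exact h.trans (mul_le_mul_of_nonneg_left
    (Real.rpow_le_self_of_one_le ht1 (by norm_num)) hδ0)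

/- The main term `5γ₀x⁴y` comes from the fifth-order part. The exponent `4/5` in the cut-off is
what makes `q(κᵢ) = O(|x|⁴)`. -/
lemma le_abs_dispersion_sub_sub_sum {γ0 γ1 γ2 x y δ : ℝ} {ι : Type*} [Fintype ι] {κ : ι → ℝ}
    (hδ : δ ≤ 1) (hsmall : δ * ((26 + Fintype.card ι) * (|γ0| + |γ1| + |γ2|)) ≤ |γ0|)
    (hy : 1 ≤ |y|) (hyx : |y| ≤ δ * |x| ^ ((4 : ℝ) / 5))
    (hκ : ∀ i, |κ i| ≤ δ * |x| ^ ((4 : ℝ) / 5)) :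
    4 * |γ0| * (|x| ^ 4 * |y|) ≤ |dispersion γ0 γ1 γ2 (y + x) - dispersion γ0 γ1 γ2 x
      - ∑ i, dispersion γ0 γ1 γ2 (κ i)| := by
  have hδ0 : 0 ≤ δ :=
    (pos_of_mul_pos_left (zero_lt_one.trans_le (hy.trans hyx)) (by positivity)).le
  set B := |γ0| + |γ1| + |γ2|
  set T := |x| ^ 4 * |y| with hT
  set R := dispersion γ0 γ1 γ2 (y + x) - dispersion γ0 γ1 γ2 x
  set S := ∑ i, dispersion γ0 γ1 γ2 (κ i)
  have hrem : |R - 5 * γ0 * (x ^ 4 * y)| ≤ B * (26 * (δ * T)) :=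
    abs_dispersion_add_sub_le γ0 γ1 γ2 hδ hy (le_mul_of_le_mul_rpow hy hδ0 hδ (abs_nonneg x) hyx)
  have hpow : (δ * |x| ^ ((4 : ℝ) / 5)) ^ 5 ≤ δ * T := by
    rw [mul_pow, ← Real.rpow_mul_natCast (abs_nonneg x)]
    norm_num only [Real.rpow_ofNat]
    exact mul_le_mul (pow_le_of_le_one hδ0 hδ (by norm_num))
      (le_mul_of_one_le_right (by positivity) hy) (by positivity) hδ0
  have hsum : |S| ≤ Fintype.card ι * (B * (δ * T)) := by
    have hi : ∀ i, |dispersion γ0 γ1 γ2 (κ i)| ≤ B * (δ * T) := fun i =>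
      (abs_dispersion_le γ0 γ1 γ2 (hy.trans hyx) (hκ i)).trans (by gcongr)
    refine (Finset.abs_sum_le_sum_abs _ _).trans ?_
    simpa using Finset.sum_le_card_nsmul Finset.univ _ _ fun i _ => hi i
  have htri : |5 * γ0 * (x ^ 4 * y)| ≤ |R - S| + |R - 5 * γ0 * (x ^ 4 * y)| + |S| :=
    calc |5 * γ0 * (x ^ 4 * y)| = |(R - S) - (R - 5 * γ0 * (x ^ 4 * y)) + S| := by ring_nf
      _ ≤ |(R - S) - (R - 5 * γ0 * (x ^ 4 * y))| + |S| := abs_add_le _ _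
      _ ≤ _ := by gcongr; exact abs_sub _ _
  have hmain : |5 * γ0 * (x ^ 4 * y)| = 5 * |γ0| * T := by
    simp only [abs_mul, abs_pow, Nat.abs_ofNat, hT]
  have hsmallT : δ * ((26 + Fintype.card ι) * B) * T ≤ |γ0| * T := by gcongr
  linarith

/-- The size of the cut-off constant `C₀` beyond which the resonance function with `n` low
frequencies is dominated by its leading term `5γ₀k_p⁴k_{(1,p-1)}`. -/
noncomputable def cutoffThreshold (γ0 γ1 γ2 : ℝ) (n : ℕ) : ℝ :=
  n * ((26 + n) * (|γ0| + |γ1| + |γ2|)) / |γ0|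

lemma cutoffThreshold_nonneg (γ0 γ1 γ2 : ℝ) (n : ℕ) : 0 ≤ cutoffThreshold γ0 γ1 γ2 n := by
  unfold cutoffThreshold
  positivity

lemma natCast_le_cutoffThreshold {γ0 : ℝ} (hγ0 : γ0 ≠ 0) (γ1 γ2 : ℝ) (n : ℕ) :
    (n : ℝ) ≤ cutoffThreshold γ0 γ1 γ2 n := by
  rw [cutoffThreshold, le_div_iff₀ (abs_pos.2 hγ0)]
  gcongr
  nlinarith [abs_nonneg γ0, abs_nonneg γ1, abs_nonneg γ2, (Nat.cast_nonneg n : (0 : ℝ) ≤ n)]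

lemma philin_eq (γ0 γ1 γ2 : ℝ) (k : ℤ) :
    philin γ0 γ1 γ2 k = Complex.I * (dispersion γ0 γ1 γ2 k : ℂ) := by
  simp [philin, dispersion]

lemma norm_PhiF_succ (γ0 γ1 γ2 : ℝ) {n : ℕ} (k : Fin (n + 2) → ℤ) :
    ‖PhiF γ0 γ1 γ2 (n + 1) k‖ = |dispersion γ0 γ1 γ2
        ((ksum1 (n + 1) k : ℝ) + (k (Fin.last n).castSucc : ℝ))
      - dispersion γ0 γ1 γ2 (k (Fin.last n).castSucc)
      - ∑ i : Fin n, dispersion γ0 γ1 γ2 (k i.castSucc.castSucc)| := by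
  rw [PhiF, filter_val_lt_eq_map, Finset.sum_map, Finset.sum_map, Fin.sum_univ_castSucc,
    Fin.sum_univ_castSucc, ksum1_succ]
  simp only [Fin.coe_castSuccEmb, philin_eq]
  rw [← Finset.mul_sum, ← mul_add, ← mul_sub, norm_mul, Complex.norm_I, one_mul,
    ← Real.norm_eq_abs, ← Complex.norm_real]
  congr 1
  push_cast
  ring

lemma abs_ksum1_le_of_MH_ne_zero {C₀ : ℝ} (hC : 0 < C₀) {n : ℕ} {k : Fin (n + 2) → ℤ}
    (hH : MH C₀ (n + 1) k ≠ 0) : |(ksum1 (n + 1) k : ℝ)| ≤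
      n / C₀ * |(k (Fin.last n).castSucc : ℝ)| ^ ((4 : ℝ) / 5) := by
  rw [ksum1_succ, Int.cast_sum, div_mul_eq_mul_div, le_div_iff₀ hC, mul_comm]
  calc C₀ * |∑ i : Fin n, (k i.castSucc.castSucc : ℝ)|
      ≤ ∑ i : Fin n, C₀ * |(k i.castSucc.castSucc : ℝ)| := by
        rw [← Finset.mul_sum]
        gcongr
        exact Finset.abs_sum_le_sum_abs _ _
    _ ≤ _ := by
        simpa using Finset.sum_le_card_nsmul Finset.univ _ _
          fun i _ => mul_abs_le_of_MH_ne_zero hC.le hH i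

lemma one_le_abs_ksum1 {p : ℕ} {k : Fin (p + 1) → ℤ} (h : ksum1 p k ≠ 0) :
    1 ≤ |(ksum1 p k : ℝ)| := by
  exact_mod_cast Int.one_le_abs h

lemma abs_ksum1_le_abs {C₀ : ℝ} (hC : 0 < C₀) {n : ℕ} (hn : n ≤ C₀) {k : Fin (n + 2) → ℤ}
    (hH : MH C₀ (n + 1) k ≠ 0) (hNZ : ksum1 (n + 1) k ≠ 0) :
    |(ksum1 (n + 1) k : ℝ)| ≤ |(k (Fin.last n).castSucc : ℝ)| := by
  have hδ : n / C₀ ≤ 1 := (div_le_one hC).2 hn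
  exact (le_mul_of_le_mul_rpow (one_le_abs_ksum1 hNZ) (by positivity) hδ (abs_nonneg _)
    (abs_ksum1_le_of_MH_ne_zero hC hH)).trans (mul_le_of_le_one_left (abs_nonneg _) hδ)

lemma le_norm_PhiF {γ0 γ1 γ2 C₀ : ℝ} (hγ0 : γ0 ≠ 0) (hC : 0 < C₀) {n : ℕ}
    (hthr : cutoffThreshold γ0 γ1 γ2 n ≤ C₀) {k : Fin (n + 2) → ℤ}
    (hH : MH C₀ (n + 1) k ≠ 0) (hNZ : ksum1 (n + 1) k ≠ 0) :
    4 * |γ0| * (|(k (Fin.last n).castSucc : ℝ)| ^ 4 * |(ksum1 (n + 1) k : ℝ)|) ≤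
      ‖PhiF γ0 γ1 γ2 (n + 1) k‖ := by
  rw [norm_PhiF_succ]
  refine le_abs_dispersion_sub_sub_sum (δ := n / C₀)
    ((div_le_one hC).2 ((natCast_le_cutoffThreshold hγ0 γ1 γ2 n).trans hthr)) ?_
    (one_le_abs_ksum1 hNZ) (abs_ksum1_le_of_MH_ne_zero hC hH) fun i => ?_
  · rw [cutoffThreshold, div_le_comm₀ (abs_pos.2 hγ0) hC] at hthr
    rwa [Fintype.card_fin, div_mul_eq_mul_div]
  · have hn : (1 : ℝ) ≤ n := by exact_mod_cast i.pos
    have hi := mul_abs_le_of_MH_ne_zero hC.le hH i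
    rw [div_mul_eq_mul_div, le_div_iff₀ hC, mul_comm]
    exact hi.trans (le_mul_of_one_le_left (by positivity) hn)

/-! ### The modified energy -/

/-- The multiplier `(ik_p)^{s+1}(ik_{p+1})^{s+1} M_NR / Φ` of a correction term of the modified
energy. -/
noncomputable def energyMultiplier (γ0 γ1 γ2 C₀ : ℝ) (s p : ℕ) (lam : ℝ) (a b c : ℕ)
    (k : Fin (p + 1) → ℤ) : ℂ :=
  (Complex.I * (k (⟨p - 1, by omega⟩ : Fin (p + 1)) : ℂ)) ^ (s + 1)
    * (Complex.I * (k (Fin.last p) : ℂ)) ^ (s + 1)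
    * MNR C₀ s p lam a b c k / PhiF γ0 γ1 γ2 p k

lemma MH_ne_zero_and_ksum1_ne_zero {C₀ : ℝ} {s p : ℕ} {lam : ℝ} {a b c : ℕ}
    {k : Fin (p + 1) → ℤ} (h : MNR C₀ s p lam a b c k ≠ 0) : MH C₀ p k ≠ 0 ∧ ksum1 p k ≠ 0 :=
  ⟨fun hH => h (by simp [MNR, hH]), fun hNZ => h (by simp [MNR, MNZ, hNZ])⟩

lemma norm_MNR_le {C₀ : ℝ} {s n : ℕ} {lam : ℝ} {a b c : ℕ} (habc : a + b + c ≤ n + 1)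
    {k : Fin (n + 2) → ℤ} (hNZ : ksum1 (n + 1) k ≠ 0) :
    ‖MNR C₀ s (n + 1) lam a b c k‖ ≤ |lam| * (|(s : ℝ) - 3 / 2| * a + b) *
      (|(ksum1 (n + 1) k : ℝ)| * ∏ i : Fin n, japaneseBracket (k i.castSucc.castSucc) ^ 3) := by
  set P := ∏ i : Fin n, japaneseBracket (k i.castSucc.castSucc) ^ 3
  set y := ksum1 (n + 1) k
  have hy : 1 ≤ |(y : ℝ)| := one_le_abs_ksum1 hNZ
  have ha : a * ‖Dabc (n + 1) (a - 1) b c k‖ ≤ a * P := by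
    rcases a.eq_zero_or_pos with rfl | ha
    · simp
    · gcongr
      exact norm_Dabc_le (by omega) k
  have hb : b * ‖Dabc (n + 1) a (b - 1) c k‖ ≤ b * P := by
    rcases b.eq_zero_or_pos with rfl | hb
    · simp
    · gcongr
      exact norm_Dabc_le (by omega) k
  have hMH : ‖MH C₀ (n + 1) k‖ ≤ 1 := by unfold MH; split_ifs <;> simp
  have hs : ‖(s : ℂ) - 3 / 2‖ = |(s : ℝ) - 3 / 2| := by
    rw [← Real.norm_eq_abs, ← Complex.norm_real]; push_cast; rfl
  rw [MNR, MNZ, if_pos hNZ, mul_one, norm_mul, norm_mul, Complex.norm_real, Real.norm_eq_abs]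
  calc ‖MH C₀ (n + 1) k‖ * |lam| * ‖_‖
      ≤ 1 * |lam| * (|(s : ℝ) - 3 / 2| * |(y : ℝ)| * (a * ‖Dabc (n + 1) (a - 1) b c k‖)
          + 1 * (b * ‖Dabc (n + 1) a (b - 1) c k‖)) := by
        gcongr
        refine (norm_add_le _ _).trans_eq ?_
        simp only [norm_mul, hs, Complex.norm_natCast, Complex.norm_I, Complex.norm_intCast]
        ring
    _ ≤ 1 * |lam| * (|(s : ℝ) - 3 / 2| * |(y : ℝ)| * (a * P) + |(y : ℝ)| * (b * P)) := by
        gcongr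
    _ = _ := by ring

lemma zeroSum_split {n : ℕ} {k : Fin (n + 2) → ℤ} (hk : ∑ i, k i = 0) :
    ksum1 (n + 1) k + k (Fin.last n).castSucc + k (Fin.last (n + 1)) = 0 := by
  rw [← hk, Fin.sum_univ_castSucc, Fin.sum_univ_castSucc, ksum1_succ]

lemma abs_last_le_two_mul {C₀ : ℝ} (hC : 0 < C₀) {n : ℕ} (hn : n ≤ C₀) {k : Fin (n + 2) → ℤ}
    (hk : ∑ i, k i = 0) (hH : MH C₀ (n + 1) k ≠ 0) (hNZ : ksum1 (n + 1) k ≠ 0) :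
    |(k (Fin.last (n + 1)) : ℝ)| ≤ 2 * |(k (Fin.last n).castSucc : ℝ)| := by
  rw [eq_neg_of_add_eq_zero_right (zeroSum_split hk), Int.cast_neg, abs_neg, Int.cast_add]
  linarith [abs_add_le (ksum1 (n + 1) k : ℝ) (k (Fin.last n).castSucc : ℝ),
    abs_ksum1_le_abs hC hn hH hNZ]

/- The resonance function gains the four powers of `k_p ~ k_{p+1}` and the power of `k_{(1,p-1)}`
that the numerator has in excess of `|k_p|^r |k_{p+1}|^r`. -/
lemma norm_energyMultiplier_le {γ0 γ1 γ2 C₀ : ℝ} (hγ0 : γ0 ≠ 0) (hC : 0 < C₀) {n : ℕ}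
    (hthr : cutoffThreshold γ0 γ1 γ2 n ≤ C₀) (r : ℕ) (lam : ℝ) {a b c : ℕ}
    (habc : a + b + c ≤ n + 1) {k : Fin (n + 2) → ℤ} (hk : ∑ i, k i = 0) :
    ‖energyMultiplier γ0 γ1 γ2 C₀ (r + 1) (n + 1) lam a b c k‖ ≤
      |lam| * (|((r + 1 : ℕ) : ℝ) - 3 / 2| * a + b) / |γ0| *
        ((∏ i : Fin n, japaneseBracket (k i.castSucc.castSucc) ^ 3) *
          (|(k (Fin.last n).castSucc : ℝ)| ^ r * |(k (Fin.last (n + 1)) : ℝ)| ^ r)) := by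
  set P := ∏ i : Fin n, japaneseBracket (k i.castSucc.castSucc) ^ 3
  have hP : 0 ≤ P := Finset.prod_nonneg fun i _ => pow_nonneg (japaneseBracket_pos _).le _
  set L := |lam| * (|((r + 1 : ℕ) : ℝ) - 3 / 2| * a + b)
  by_cases hsupp : MNR C₀ (r + 1) (n + 1) lam a b c k = 0
  · rw [energyMultiplier, hsupp, mul_zero, zero_div, norm_zero]
    positivity
  obtain ⟨hH, hNZ⟩ := MH_ne_zero_and_ksum1_ne_zero hsupp
  have hn : n ≤ C₀ := (natCast_le_cutoffThreshold hγ0 γ1 γ2 n).trans hthr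
  have hx : |(k (Fin.last (n + 1)) : ℝ)| ≤ 2 * |(k (Fin.last n).castSucc : ℝ)| :=
    abs_last_le_two_mul hC hn hk hH hNZ
  have hPhi := le_norm_PhiF hγ0 hC hthr hH hNZ
  have hMNR := norm_MNR_le (C₀ := C₀) (s := r + 1) (lam := lam) habc hNZ
  have hypos : 0 < |(ksum1 (n + 1) k : ℝ)| := zero_lt_one.trans_le (one_le_abs_ksum1 hNZ)
  have hxpos : 0 < |(k (Fin.last n).castSucc : ℝ)| :=
    hypos.trans_le (abs_ksum1_le_abs hC hn hH hNZ)
  change ‖(Complex.I * (k (Fin.last n).castSucc : ℂ)) ^ (r + 1 + 1) * _ * _ / _‖ ≤ _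
  simp only [norm_div, norm_mul, norm_pow, Complex.norm_I, Complex.norm_intCast, one_mul]
  set x := |(k (Fin.last n).castSucc : ℝ)|
  set z := |(k (Fin.last (n + 1)) : ℝ)|
  set y := |(ksum1 (n + 1) k : ℝ)|
  rw [div_le_iff₀ (lt_of_lt_of_le (by positivity) hPhi)]
  calc x ^ (r + 1 + 1) * z ^ (r + 1 + 1) * ‖MNR C₀ (r + 1) (n + 1) lam a b c k‖
      = x ^ (r + 2) * (z ^ r * z ^ 2) * ‖MNR C₀ (r + 1) (n + 1) lam a b c k‖ := by ring
    _ ≤ x ^ (r + 2) * (z ^ r * (2 * x) ^ 2) * (L * (y * P)) := by gcongr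
    _ = L / |γ0| * (P * (x ^ r * z ^ r)) * (4 * |γ0| * (x ^ 4 * y)) := by
        field_simp
        ring
    _ ≤ _ := by gcongr

/-- The correction term `Γ^(p)(M; f, …, f, h, h)` that a single monomial of the nonlinearity
contributes to the modified energy. -/
noncomputable def correction (γ0 γ1 γ2 C₀ : ℝ) (s p : ℕ) (lam : ℝ) (a b c : ℕ) (f h : ℝ → ℂ) :
    ℂ :=
  Gam p (energyMultiplier γ0 γ1 γ2 C₀ s p lam a b c) (tup p f h)

lemma correction_cF_im (γ0 γ1 γ2 C₀ : ℝ) (s p : ℕ) (lam : ℝ) (a b c : ℕ) (f h : ℝ → ℝ) :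
    (correction γ0 γ1 γ2 C₀ s p lam a b c (cF f) (cF h)).im = 0 := by
  refine Gam_im_eq_zero (fun k => ?_) fun i k => ?_
  · simp only [energyMultiplier, MNR_neg, PhiF_neg, Pi.neg_apply, map_mul, map_div₀, map_pow,
      Complex.conj_I, map_intCast, Int.cast_neg, mul_neg, neg_mul]
  · unfold tup
    split_ifs <;> exact fhat_cF_neg _ _

lemma exists_norm_correction_le {γ0 : ℝ} (hγ0 : γ0 ≠ 0) (γ1 γ2 : ℝ) (r : ℕ) (lam : ℝ)
    {p a b c : ℕ} (habc : a + b + c ≤ p) :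
    ∃ D : ℝ, 0 ≤ D ∧ ∀ C₀, 0 < C₀ → cutoffThreshold γ0 γ1 γ2 (p - 1) ≤ C₀ →
      ∀ f h, MemHs 4 f → MemHs r h →
        ‖correction γ0 γ1 γ2 C₀ (r + 1) p lam a b c f h‖ ≤
          D * (hsNormC 4 f ^ (p - 1) * dxNormSq r h) := by
  obtain _ | n := p
  · refine ⟨0, le_rfl, fun C₀ _ _ f h _ _ => ?_⟩
    simp [correction, Gam, energyMultiplier, MNR, MNZ, ksum1]
  · refine ⟨|lam| * (|((r + 1 : ℕ) : ℝ) - 3 / 2| * a + b) / |γ0| * wienerConst ^ n,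
      mul_nonneg (by positivity) (pow_nonneg wienerConst_nonneg n),
      fun C₀ hC hthr f h hf hh => ?_⟩
    refine (norm_Gam_le hf hh (by positivity) fun k hk =>
      norm_energyMultiplier_le hγ0 hC hthr r lam habc hk).trans_eq ?_
    rw [mul_pow, mul_assoc, mul_assoc]
    rfl

section Energy

variable {ι : Type*} [Fintype ι] {γ0 γ1 γ2 : ℝ}

lemma exists_norm_sum_correction_le (hγ0 : γ0 ≠ 0) (lam : ι → ℝ) {a b c p : ι → ℕ}
    (habc : ∀ j, a j + b j + c j ≤ p j) (r : ℕ) {ε : ℝ} (hε : 0 < ε) :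
    ∃ K : ℝ, 0 < K ∧ ∀ C₀, 0 < C₀ → (∀ j, cutoffThreshold γ0 γ1 γ2 (p j - 1) ≤ C₀) →
      ∀ f h, MemHs 4 f → MemHs (r + 1) h →
        ‖∑ j, correction γ0 γ1 γ2 C₀ (r + 1) (p j) (lam j) (a j) (b j) (c j) f h‖ ≤
          ε * dxNormSq (r + 1) h +
            K * (∑ j, hsNormC 4 f ^ ((r + 1) * (p j - 1))) * dxNormSq 0 h := by
  choose D hD hcorr using fun j => exists_norm_correction_le hγ0 γ1 γ2 r (lam j) (habc j)
  obtain ⟨K, hK, hsum⟩ := MemHs.exists_sum_mul_dxNormSq_le hD r hε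
  refine ⟨K, hK, fun C₀ hC hthr f h hf hh => ?_⟩
  calc _ ≤ ∑ j, D j * (hsNormC 4 f ^ (p j - 1) * dxNormSq r h) :=
        (norm_sum_le _ _).trans <| Finset.sum_le_sum fun j _ =>
          hcorr j C₀ hC (hthr j) f h hf (hh.of_le r.le_succ)
    _ ≤ _ := hsum h hh _ fun j => pow_nonneg (hsNormC_nonneg 4 f) _
    _ = _ := by simp only [← pow_mul, mul_comm (r + 1)]

/-- The reference energy `‖∂_x^s h‖² + ‖h‖²(1 + C_s Σ_j ‖f‖_{H⁴}^{s(p_j−1)})`. -/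
noncomputable def referenceEnergy (Cs : ℝ) (s : ℕ) (p : ι → ℕ) (f h : ℝ → ℂ) : ℝ :=
  dxNormSq s h + dxNormSq 0 h * (1 + Cs * ∑ j, hsNormC 4 f ^ (s * (p j - 1)))

variable (γ0 γ1 γ2) in
/-- The modified energy `F_s(f, g)` as a function of `f` and `h = f − g`. -/
noncomputable def modifiedEnergy (C₀ Cs : ℝ) (s : ℕ) (p : ι → ℕ) (lam : ι → ℝ) (a b c : ι → ℕ)
    (f h : ℝ → ℂ) : ℂ :=
  ((1 / 2 * dxNormSq s h : ℝ) : ℂ)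
    + ((1 / 2 * dxNormSq 0 h * (1 + Cs * ∑ j, hsNormC 4 f ^ (s * (p j - 1))) : ℝ) : ℂ)
    + ∑ j, correction γ0 γ1 γ2 C₀ s (p j) (lam j) (a j) (b j) (c j) f h

lemma modifiedEnergy_eq (C₀ Cs : ℝ) (s : ℕ) (p : ι → ℕ) (lam : ι → ℝ) (a b c : ι → ℕ)
    (f h : ℝ → ℂ) :
    modifiedEnergy γ0 γ1 γ2 C₀ Cs s p lam a b c f h =
      ((referenceEnergy Cs s p f h / 2 : ℝ) : ℂ) +
        ∑ j, correction γ0 γ1 γ2 C₀ s (p j) (lam j) (a j) (b j) (c j) f h := by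
  rw [modifiedEnergy, ← Complex.ofReal_add, referenceEnergy]
  ring_nf

lemma add_le_referenceEnergy_div_four {K Cs : ℝ} (hCs : 4 * K ≤ Cs) (s : ℕ) (p : ι → ℕ)
    (f h : ℝ → ℂ) :
    1 / 4 * dxNormSq s h + K * (∑ j, hsNormC 4 f ^ (s * (p j - 1))) * dxNormSq 0 h ≤
      referenceEnergy Cs s p f h / 4 := by
  have h0 := dxNormSq_nonneg 0 h
  set S := ∑ j, hsNormC 4 f ^ (s * (p j - 1))
  have hS : 0 ≤ S := Finset.sum_nonneg fun j _ => pow_nonneg (hsNormC_nonneg 4 f) _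
  have hKS : 4 * K * S * dxNormSq 0 h ≤ Cs * S * dxNormSq 0 h := by gcongr
  rw [referenceEnergy]
  linarith

theorem comparison_lemma_general (hγ0 : γ0 ≠ 0) (γ1 γ2 : ℝ) (lam : ι → ℝ) {a b c p : ι → ℕ}
    (habc : ∀ j, a j + b j + c j ≤ p j) {s : ℕ} (hs : 1 ≤ s) :
    ∃ K₀ : ℝ, 0 < K₀ ∧ ∃ K₁ : ℝ, 0 < K₁ ∧ ∀ C₀, K₀ ≤ C₀ → ∀ Cs, K₁ ≤ Cs →
      ∀ f h : ℝ → ℝ, MemHs 4 (cF f) → MemHs s (cF h) →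
        (modifiedEnergy γ0 γ1 γ2 C₀ Cs s p lam a b c (cF f) (cF h)).im = 0 ∧
        (modifiedEnergy γ0 γ1 γ2 C₀ Cs s p lam a b c (cF f) (cF h)).re ≤
          referenceEnergy Cs s p (cF f) (cF h) ∧
        referenceEnergy Cs s p (cF f) (cF h) ≤
          4 * (modifiedEnergy γ0 γ1 γ2 C₀ Cs s p lam a b c (cF f) (cF h)).re := by
  obtain ⟨r, rfl⟩ := Nat.exists_eq_add_of_le' hs
  obtain ⟨K, hK, hcorr⟩ :=
    exists_norm_sum_correction_le (γ1 := γ1) (γ2 := γ2) hγ0 lam habc r (ε := 1 / 4) (by norm_num)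
  have hthr : ∀ j, 0 ≤ cutoffThreshold γ0 γ1 γ2 (p j - 1) := fun j => cutoffThreshold_nonneg ..
  have hsum := Finset.sum_nonneg fun j (_ : j ∈ Finset.univ) => hthr j
  refine ⟨1 + ∑ j, cutoffThreshold γ0 γ1 γ2 (p j - 1), by linarith, 4 * K, by linarith,
    fun C₀ hC₀ Cs hCs f h hf hh => ?_⟩
  have hbound := (hcorr C₀ (by linarith) (fun j => (Finset.single_le_sum (fun i _ => hthr i)
    (Finset.mem_univ j)).trans (by linarith)) _ _ hf hh).trans
    (add_le_referenceEnergy_div_four hCs _ p _ _)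
  have hre := abs_le.1 ((Complex.abs_re_le_norm _).trans hbound)
  rw [modifiedEnergy_eq, Complex.add_im, Complex.add_re, Complex.ofReal_im, Complex.ofReal_re]
  refine ⟨?_, by linarith [(norm_nonneg _).trans hbound], by linarith⟩
  simp only [Complex.im_sum, correction_cF_im, Finset.sum_const_zero, add_zero]

end Energy

/-- **Comparison lemma for the modified energy.** For every `s ≥ 1` one can choose the
cut-off constant `C₀` in `M_H` and a constant `C_s` so large that the modified energy
`F_s(f,g) = (1/2)‖∂_x^s(f−g)‖_{L²}² + (1/2)‖f−g‖_{L²}²(1 + C_s Σ_j ‖f‖_{H⁴}^{s(p_j−1)})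
  + Σ_j Γ^{(p_j)}((ik_{p_j})^{s+1}(ik_{p_j+1})^{s+1}M_{NR,j}/Φ^{(p_j)}; f,…,f,f−g,f−g)`
is real and satisfies
`F_s(f,g) ≤ ‖∂_x^s(f−g)‖² + ‖f−g‖²(1 + C_s Σ_j ‖f‖_{H⁴}^{s(p_j−1)}) ≤ 4 F_s(f,g)`
for all real-valued smooth `2π`-periodic `f, g`. -/
theorem comparison_lemma
    (γ0 γ1 γ2 : ℝ) (hγ0 : γ0 ≠ 0)
    (j0 : ℕ) (lam : Fin j0 → ℝ) (a b c d : Fin j0 → ℕ)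
    (hp : ∀ j : Fin j0, 2 ≤ a j + b j + c j + d j)
    (s : ℕ) (hs : 1 ≤ s) :
    ∃ C₀ : ℝ, 0 < C₀ ∧ ∃ Cs : ℝ, 0 < Cs ∧
      ∀ f g : ℝ → ℝ,
        ContDiff ℝ (⊤ : ℕ∞) f → Function.Periodic f (2 * Real.pi) →
        ContDiff ℝ (⊤ : ℕ∞) g → Function.Periodic g (2 * Real.pi) →
        ∀ Fs : ℂ,
          Fs = (((1/2 : ℝ) * dxNormSq s (cF (fun x => f x - g x)) : ℝ) : ℂ)
            + (((1/2 : ℝ) * dxNormSq 0 (cF (fun x => f x - g x))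
                * (1 + Cs * ∑ j : Fin j0,
                    hsNormC 4 (cF f) ^ (s * (a j + b j + c j + d j - 1))) : ℝ) : ℂ)
            + ∑ j : Fin j0,
                Gam (a j + b j + c j + d j)
                  (fun k =>
                    (Complex.I * (k (⟨a j + b j + c j + d j - 1, by omega⟩ :
                        Fin (a j + b j + c j + d j + 1)) : ℂ)) ^ (s + 1)
                    * (Complex.I * (k (Fin.last (a j + b j + c j + d j)) : ℂ)) ^ (s + 1)
                    * MNR C₀ s (a j + b j + c j + d j) (lam j) (a j) (b j) (c j) k
                    / PhiF γ0 γ1 γ2 (a j + b j + c j + d j) k)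
                  (tup (a j + b j + c j + d j) (cF f) (cF (fun x => f x - g x))) →
          ∀ A : ℝ,
            A = dxNormSq s (cF (fun x => f x - g x))
              + dxNormSq 0 (cF (fun x => f x - g x))
                * (1 + Cs * ∑ j : Fin j0,
                    hsNormC 4 (cF f) ^ (s * (a j + b j + c j + d j - 1))) →
            Fs.im = 0 ∧ Fs.re ≤ A ∧ A ≤ 4 * Fs.re := by
  have habc : ∀ j, a j + b j + c j ≤ a j + b j + c j + d j := fun j => Nat.le_add_right _ _
  obtain ⟨C₀, hC₀, Cs, hCs, hmain⟩ := comparison_lemma_general hγ0 γ1 γ2 lam habc hs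
  refine ⟨C₀, hC₀, Cs, hCs, fun f g hf hfp hg hgp Fs hFs A hA => ?_⟩
  subst hFs hA
  exact hmain C₀ le_rfl Cs le_rfl f _ (memHs_cF_of_contDiff 4 hf hfp)
    (memHs_cF_of_contDiff s (hf.sub hg) (hfp.sub hgp))

end FifthOrderStmt19
end
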